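/- arXiv:math/0410052 — 4 statements merged into one kernel-verified Lean document; each statement's English description precedes it below -/
import Mathlib

section
/- Let S be a Polish space, c : S × S → [0,∞) satisfy condition (★), (Ω, 𝒜, P) a probability space, ℳ a sub-σ-algebra of 𝒜, and X an S-valued random variable with ∫ c(x, x₀) dP_X(x) < ∞ for some x₀ ∈ S. Assume there exists a random variable U uniformly distributed on [0,1] and independent of σ(X) ∨ ℳ. Let ω ↦ Q_ω be an ℳ-measurable map from Ω to P(S) with ∫_Ω ∫_S c(x, x₀) dQ_ω(x) dP(ω) < ∞. Then there exists a σ(U) ∨ σ(X) ∨ ℳ-measurable random variable Y : Ω → S such that ω ↦ Q_ω is a regular conditional distribution of Y given ℳ and, P-almost surely, E[c(X,Y) | ℳ] = sup_{f ∈ Lip_c} | ∫ f(x) P_{X|ℳ}(dx) − ∫ f(x) Q_·(dx) |. -/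
open MeasureTheory ProbabilityTheory ENNReal Set

noncomputable section

/-- The `μ`-completion of the σ-algebra `m`. -/
def muCompletion {α : Type*} (m : MeasurableSpace α) (μ : @Measure α m) : MeasurableSpace α :=
  letI := m
  inferInstanceAs (MeasurableSpace (MeasureTheory.NullMeasurableSpace α μ))

/-- The universal completion of a σ-algebra: the intersection of the `μ`-completions
over all finite nonnegative measures `μ`. -/
def univCompletion {α : Type*} (m : MeasurableSpace α) : MeasurableSpace α :=
  ⨅ (μ : @Measure α m) (_ : @IsFiniteMeasure α m μ), muCompletion m μ

/-- `Lip_c`: bounded continuous functions `u : S → ℝ` with `|u x - u y| ≤ c x y`. -/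
def LipC {S : Type*} [TopologicalSpace S] (c : S → S → ℝ) : Set (S → ℝ) :=
  {u | Continuous u ∧ (∃ M, ∀ x, |u x| ≤ M) ∧ ∀ x y, |u x - u y| ≤ c x y}

/-- Condition (★): `c x y = sup_{u ∈ Lip_c} |u x - u y|` for all `x, y`. -/
def StarCond {S : Type*} [TopologicalSpace S] (c : S → S → ℝ) : Prop :=
  ∀ x y, c x y = sSup {r : ℝ | ∃ u ∈ LipC c, r = |u x - u y|}

/-- `D(μ,ν)`: couplings of `μ` and `ν`, i.e. probability measures on `S × S`
with first margin `μ` and second margin `ν`. -/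
def Couplings {S : Type*} [MeasurableSpace S] (μ ν : Measure S) : Set (Measure (S × S)) :=
  {π | IsProbabilityMeasure π ∧ π.map Prod.fst = μ ∧ π.map Prod.snd = ν}

/-- The Kantorovich–Rubinštein functional `KR_c(μ,ν)`. -/
def KR {S : Type*} [MeasurableSpace S] (c : S → S → ℝ) (μ ν : Measure S) : ℝ≥0∞ :=
  ⨅ π ∈ Couplings μ ν, ∫⁻ p, ENNReal.ofReal (c p.1 p.2) ∂π

/-- The dual functional `ℓ_c(μ,ν) = sup_{f ∈ Lip_c} |∫ f dμ - ∫ f dν|`. -/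
def lipDist {S : Type*} [TopologicalSpace S] [MeasurableSpace S] (c : S → S → ℝ)
    (μ ν : Measure S) : ℝ≥0∞ :=
  ⨆ u ∈ LipC c, ENNReal.ofReal |∫ x, u x ∂μ - ∫ x, u x ∂ν|

/-- Regular conditional distribution of `Z` given the sub-σ-algebra `M`:
an `M`-measurable family of probability measures `ω ↦ κ ω` such that
`P(A ∩ {Z ∈ B}) = ∫_A κ_ω(B) dP(ω)` for all `A ∈ M` and Borel `B`. -/
def IsRCD {Ω S : Type*} {mΩ : MeasurableSpace Ω} [MeasurableSpace S]
    (P : @Measure Ω mΩ) (M : MeasurableSpace Ω) (Z : Ω → S) (κ : Ω → Measure S) : Prop :=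
  letI := mΩ
  (∀ ω, IsProbabilityMeasure (κ ω)) ∧
  (∀ B : Set S, MeasurableSet B → Measurable[M] (fun ω => κ ω B)) ∧
  (∀ A : Set Ω, MeasurableSet[M] A → ∀ B : Set S, MeasurableSet B →
    P (A ∩ Z ⁻¹' B) = ∫⁻ ω in A, κ ω B ∂P)


lemma cont_of_lip {K : Type*} [TopologicalSpace K] (d : K → K → ℝ)
    (hcont : Continuous (fun p : K × K => d p.1 p.2)) (hdiag : ∀ x, d x x = 0)
    (φ : K → ℝ) (h : ∀ x y, |φ x - φ y| ≤ d x y) : Continuous φ := by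
  rw [continuous_iff_continuousAt]
  intro x
  rw [ContinuousAt, tendsto_iff_dist_tendsto_zero]
  have h1 : Filter.Tendsto (fun y => d y x) (nhds x) (nhds 0) := by
    have : Continuous (fun y => d y x) := hcont.comp (by fun_prop : Continuous fun y => (y, x))
    simpa [hdiag] using this.tendsto x
  refine squeeze_zero (fun _ => dist_nonneg) (fun y => ?_) h1
  rw [Real.dist_eq]; exact h y x

section compact
variable {K : Type*} [TopologicalSpace K] [CompactSpace K] [MeasurableSpace K] [BorelSpace K]
  (α β : Measure K) [IsProbabilityMeasure α] [IsProbabilityMeasure β]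
  {I : Type*} (d : I → K → K → ℝ)

lemma integrable_cont (f : C(K, ℝ)) (μ : Measure K) [IsFiniteMeasure μ] : Integrable f μ :=
  Integrable.of_bound (f.continuous.measurable.aestronglyMeasurable) ‖f‖
    (Filter.Eventually.of_forall fun x => f.norm_coe_le_norm x)

lemma core_ineq
    (hcont : ∀ i, Continuous (fun p : K × K => d i p.1 p.2))
    (hdiag : ∀ i x, d i x x = 0) (hsymm : ∀ i x y, d i x y = d i y x)
    (htri : ∀ i x y z, d i x z ≤ d i x y + d i y z)
    (L : ℝ) (hL : ∀ i (φ : C(K, ℝ)), (∀ x y, |φ x - φ y| ≤ d i x y) →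
      ∫ x, φ x ∂α - ∫ x, φ x ∂β ≤ L)
    (f g : C(K, ℝ)) (s : ℝ) (hs : 0 ≤ s) (i : I)
    (h : ∀ x y, 0 ≤ f x + g y + s * d i x y) :
    0 ≤ ∫ x, f x ∂α + ∫ x, g x ∂β + s * L := by
  have hne : Nonempty K := nonempty_of_isProbabilityMeasure α
  set φ : K → ℝ := fun y => ⨅ x, (f x + s * d i x y) with hφ
  have hbdd : ∀ y, BddBelow (range fun x => f x + s * d i x y) := by
    intro y
    refine ⟨-g y, ?_⟩
    rintro _ ⟨x, rfl⟩
    have := h x y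
    simp only
    linarith
  have hφ1 : ∀ y y', φ y ≤ φ y' + s * d i y' y := by
    intro y y'
    rw [← sub_le_iff_le_add]
    refine le_ciInf fun x => ?_
    rw [sub_le_iff_le_add]
    refine (ciInf_le (hbdd y) x).trans ?_
    have := mul_le_mul_of_nonneg_left (htri i x y' y) hs
    linarith
  have hlip : ∀ x y, |φ x - φ y| ≤ s * d i x y := by
    intro x y
    rw [abs_le]
    have h1 := hφ1 x y
    have h2 := hφ1 y x
    rw [hsymm i y x] at h1
    constructor <;> linarith
  have hφc : Continuous φ := cont_of_lip (fun x y => s * d i x y)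
    (continuous_const.mul (hcont i)) (by simp [hdiag]) φ hlip
  let Φ : C(K, ℝ) := ⟨φ, hφc⟩
  have hf : ∫ x, Φ x ∂α ≤ ∫ x, f x ∂α := by
    refine integral_mono (integrable_cont _ _) (integrable_cont _ _) fun x => ?_
    refine (ciInf_le (hbdd x) x).trans ?_
    simp [hdiag]
  have hg : - ∫ x, g x ∂β ≤ ∫ x, Φ x ∂β := by
    rw [← integral_neg]
    refine integral_mono (integrable_cont g _).neg (integrable_cont _ _) fun y => ?_
    refine le_ciInf fun x => ?_
    have := h x y
    simp only
    linarith
  have key : ∫ x, Φ x ∂β - ∫ x, Φ x ∂α ≤ s * L := by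
    rcases hs.eq_or_lt with h0 | h0
    · obtain ⟨x0⟩ := hne
      have : ∀ x, Φ x = Φ x0 := by
        intro x
        have := hlip x x0
        rw [← h0, zero_mul] at this
        have := abs_nonpos_iff.1 this
        change φ x = φ x0
        linarith
      simp [this, ← h0]
    · have := hL i (-(s⁻¹ • Φ)) (by
        intro x y
        have h1 := hlip x y
        have h2 : (-(s⁻¹ • Φ)) x - (-(s⁻¹ • Φ)) y = - (s⁻¹ * (φ x - φ y)) := by
          simp [Φ]; ring
        rw [h2, abs_neg, abs_mul, abs_of_pos (inv_pos.2 h0), inv_mul_le_iff₀ h0]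
        exact h1)
      have e : ∀ μ : Measure K, ∫ x, (-(s⁻¹ • Φ)) x ∂μ = - (s⁻¹ * ∫ x, Φ x ∂μ) := by
        intro μ
        simp [integral_neg, integral_const_mul]
      rw [e, e] at this
      have h3 : s⁻¹ * (∫ x, Φ x ∂β - ∫ x, Φ x ∂α) ≤ L := by linarith
      rwa [inv_mul_le_iff₀ h0] at h3
  linarith

lemma compact_coupling [T2Space K] [SecondCountableTopology K] [Nonempty I]
    (hcont : ∀ i, Continuous (fun p : K × K => d i p.1 p.2))
    (hdiag : ∀ i x, d i x x = 0) (hsymm : ∀ i x y, d i x y = d i y x)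
    (htri : ∀ i x y z, d i x z ≤ d i x y + d i y z)
    (hdir : ∀ i j, ∃ k, ∀ x y, d i x y ≤ d k x y ∧ d j x y ≤ d k x y)
    (L : ℝ) (hL : ∀ i (φ : C(K, ℝ)), (∀ x y, |φ x - φ y| ≤ d i x y) →
      ∫ x, φ x ∂α - ∫ x, φ x ∂β ≤ L) :
    ∃ π : Measure (K × K), IsProbabilityMeasure π ∧ π.map Prod.fst = α ∧ π.map Prod.snd = β ∧
      ∀ i, ∫ p, d i p.1 p.2 ∂π ≤ L := by
  have core := core_ineq α β d hcont hdiag hsymm htri L hL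
  let A : C(K × K, ℝ) → Set ℝ := fun h => {r | ∃ f g : C(K, ℝ), ∃ s : ℝ, ∃ i : I, 0 ≤ s ∧
    (∀ x y, h (x, y) ≤ f x + g y + s * d i x y) ∧
    r = ∫ x, f x ∂α + ∫ x, g x ∂β + s * L}
  have hAne : ∀ h, (A h).Nonempty := by
    intro h
    obtain ⟨i⟩ := ‹Nonempty I›
    refine ⟨_, ContinuousMap.const K ‖h‖, 0, 0, i, le_rfl, ?_, rfl⟩
    intro x y
    simpa using (le_abs_self _).trans (h.norm_coe_le_norm (x, y))
  have hAb : ∀ h, BddBelow (A h) := by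
    intro h
    refine ⟨-‖h‖, ?_⟩
    rintro r ⟨f, g, s, i, hs, hh, rfl⟩
    have := core (f + ContinuousMap.const K ‖h‖) g s hs i (by
      intro x y
      have h1 := hh x y
      have h2 := (neg_abs_le _).trans h1
      have h3 := h.norm_coe_le_norm (x, y)
      rw [Real.norm_eq_abs] at h3
      simp
      linarith)
    have e : ∫ x, (f + ContinuousMap.const K ‖h‖) x ∂α = ∫ x, f x ∂α + ‖h‖ := by
      simp only [ContinuousMap.add_apply, ContinuousMap.const_apply]
      rw [integral_add (integrable_cont _ _) (integrable_const _)]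
      simp
    rw [e] at this
    linarith
  let N : C(K × K, ℝ) → ℝ := fun h => sInf (A h)
  have hAsmul : ∀ c : ℝ, 0 < c → ∀ h r, r ∈ A h → c * r ∈ A (c • h) := by
    rintro c hc h r ⟨f, g, s, i, hs, hh, rfl⟩
    refine ⟨c • f, c • g, c * s, i, by positivity, ?_, ?_⟩
    · intro x y
      have := mul_le_mul_of_nonneg_left (hh x y) hc.le
      simp
      linarith
    · simp [integral_const_mul]; ring
  have hNle : ∀ c : ℝ, 0 < c → ∀ h, N (c • h) ≤ c * N h := by
    intro c hc h
    rw [← inv_mul_le_iff₀ hc]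
    refine le_csInf (hAne h) fun r hr => ?_
    rw [inv_mul_le_iff₀ hc]
    exact csInf_le (hAb _) (hAsmul c hc h r hr)
  have hNhom : ∀ c : ℝ, 0 < c → ∀ h, N (c • h) = c * N h := by
    intro c hc h
    refine le_antisymm (hNle c hc h) ?_
    have := hNle c⁻¹ (inv_pos.2 hc) (c • h)
    rw [inv_smul_smul₀ hc.ne'] at this
    rwa [← div_eq_inv_mul, le_div_iff₀' hc] at this
  have hNadd : ∀ h k, N (h + k) ≤ N h + N k := by
    intro h k
    rw [← sub_le_iff_le_add]
    refine le_csInf (hAne h) fun r hr => ?_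
    rw [sub_le_comm]
    refine le_csInf (hAne k) fun r' hr' => ?_
    rw [sub_le_iff_le_add']
    refine csInf_le (hAb _) ?_
    obtain ⟨f, g, s, i, hs, hh, rfl⟩ := hr
    obtain ⟨f', g', s', i', hs', hh', rfl⟩ := hr'
    obtain ⟨j, hj⟩ := hdir i i'
    refine ⟨f + f', g + g', s + s', j, by positivity, ?_, ?_⟩
    · intro x y
      have h1 := hh x y
      have h2 := hh' x y
      have h3 := mul_le_mul_of_nonneg_left (hj x y).1 hs
      have h4 := mul_le_mul_of_nonneg_left (hj x y).2 hs'
      simp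
      linarith
    · simp only [ContinuousMap.add_apply]
      rw [integral_add (integrable_cont _ _) (integrable_cont _ _),
        integral_add (integrable_cont _ _) (integrable_cont _ _)]
      ring
  obtain ⟨Λ, -, hΛ⟩ := exists_extension_of_le_sublinear
    (⟨⊥, 0⟩ : C(K × K, ℝ) →ₗ.[ℝ] ℝ) N hNhom hNadd (by
      rintro ⟨x, hx⟩
      have : x = 0 := by simpa using hx
      subst this
      have h2 : N 0 = 0 := by
        have := hNhom 2 (by norm_num) 0
        rw [smul_zero] at this
        linarith
      exact h2.ge)
  have i0 : I := Classical.arbitrary I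
  have hΛ1 : ∀ h r, r ∈ A h → Λ h ≤ r := fun h r hr => (hΛ h).trans (csInf_le (hAb h) hr)
  have hΛpos : ∀ h : C(K × K, ℝ), 0 ≤ h → 0 ≤ Λ h := by
    intro h hh
    have := hΛ1 (-h) 0 ⟨0, 0, 0, i0, le_rfl, by
      intro x y; simpa using hh (x, y), by simp⟩
    rw [map_neg] at this
    linarith
  have hΛf : ∀ f : C(K, ℝ), Λ (f.comp ContinuousMap.fst) = ∫ x, f x ∂α := by
    intro f
    refine le_antisymm (hΛ1 _ _ ⟨f, 0, 0, i0, le_rfl, by intro x y; simp, by simp⟩) ?_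
    have := hΛ1 (-(f.comp ContinuousMap.fst)) (-∫ x, f x ∂α)
      ⟨-f, 0, 0, i0, le_rfl, by intro x y; simp, by simp [integral_neg]⟩
    rw [map_neg] at this
    linarith
  have hΛg : ∀ f : C(K, ℝ), Λ (f.comp ContinuousMap.snd) = ∫ x, f x ∂β := by
    intro f
    refine le_antisymm (hΛ1 _ _ ⟨0, f, 0, i0, le_rfl, by intro x y; simp, by simp⟩) ?_
    have := hΛ1 (-(f.comp ContinuousMap.snd)) (-∫ x, f x ∂β)
      ⟨0, -f, 0, i0, le_rfl, by intro x y; simp, by simp [integral_neg]⟩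
    rw [map_neg] at this
    linarith
  have hΛd : ∀ i, Λ ⟨fun p => d i p.1 p.2, hcont i⟩ ≤ L := by
    intro i
    exact hΛ1 _ _ ⟨0, 0, 1, i, zero_le_one, by intro x y; simp, by simp⟩
  let Λ' : CompactlySupportedContinuousMap (K × K) ℝ →ₚ[ℝ] ℝ :=
    PositiveLinearMap.mk₀
      { toFun := fun f => Λ (f : C(K × K, ℝ))
        map_add' := by intro f g; rw [← map_add]; rfl
        map_smul' := by intro c f; simp only [RingHom.id_apply]; rw [← map_smul]; rfl }
      (by intro f hf; exact hΛpos _ hf)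
  let π := RealRMK.rieszMeasure Λ'
  have hintg : ∀ h : C(K × K, ℝ), ∫ p, h p ∂π = Λ h := by
    intro h
    have := RealRMK.integral_rieszMeasure Λ'
      ⟨h, HasCompactSupport.of_compactSpace _⟩
    exact this
  have hfin : IsFiniteMeasure π := by infer_instance
  have hfst : π.map Prod.fst = α := by
    refine ext_of_forall_integral_eq_of_IsFiniteMeasure fun f => ?_
    rw [integral_map (by fun_prop) (f.continuous.measurable.aestronglyMeasurable)]
    have h1 := hintg (f.toContinuousMap.comp ContinuousMap.fst)
    rw [hΛf] at h1
    exact h1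
  have hsnd : π.map Prod.snd = β := by
    refine ext_of_forall_integral_eq_of_IsFiniteMeasure fun f => ?_
    rw [integral_map (by fun_prop) (f.continuous.measurable.aestronglyMeasurable)]
    have h1 := hintg (f.toContinuousMap.comp ContinuousMap.snd)
    rw [hΛg] at h1
    exact h1
  refine ⟨π, ?_, hfst, hsnd, ?_⟩
  · constructor
    have : (π.map Prod.fst) univ = 1 := by rw [hfst]; simp
    rwa [Measure.map_apply measurable_fst MeasurableSet.univ, preimage_univ] at this
  · intro i
    have := hintg ⟨fun p => d i p.1 p.2, hcont i⟩
    exact this.trans_le (hΛd i)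
end compact

/-- Finite maximum of the absolute increments of the functions `v i`. -/
noncomputable def dMax {ι Z : Type*} (v : ι → Z → ℝ) (F : Finset ι) (z z' : Z) : ℝ :=
  ((F.sup fun i => nndist (v i z) (v i z') : NNReal) : ℝ)

lemma dMax_nonneg {ι Z : Type*} (v : ι → Z → ℝ) (F : Finset ι) (z z' : Z) :
    0 ≤ dMax v F z z' := NNReal.coe_nonneg _

lemma dMax_self {ι Z : Type*} (v : ι → Z → ℝ) (F : Finset ι) (z : Z) :
    dMax v F z z = 0 := by
  simp [dMax]

lemma dMax_symm {ι Z : Type*} (v : ι → Z → ℝ) (F : Finset ι) (z z' : Z) :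
    dMax v F z z' = dMax v F z' z := by
  simp [dMax, nndist_comm]

lemma dMax_le_iff {ι Z : Type*} (v : ι → Z → ℝ) (F : Finset ι) (z z' : Z) {a : ℝ} (ha : 0 ≤ a) :
    dMax v F z z' ≤ a ↔ ∀ i ∈ F, |v i z - v i z'| ≤ a := by
  lift a to NNReal using ha
  simp only [dMax, NNReal.coe_le_coe, Finset.sup_le_iff]
  refine forall₂_congr fun i hi => ?_
  rw [← NNReal.coe_le_coe, coe_nndist, Real.dist_eq]

lemma le_dMax {ι Z : Type*} (v : ι → Z → ℝ) (F : Finset ι) (z z' : Z) {i : ι} (hi : i ∈ F) :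
    |v i z - v i z'| ≤ dMax v F z z' :=
  (dMax_le_iff v F z z' (dMax_nonneg _ _ _ _)).1 le_rfl i hi

lemma dMax_tri {ι Z : Type*} (v : ι → Z → ℝ) (F : Finset ι) (x y z : Z) :
    dMax v F x z ≤ dMax v F x y + dMax v F y z := by
  rw [dMax_le_iff _ _ _ _ (add_nonneg (dMax_nonneg _ _ _ _) (dMax_nonneg _ _ _ _))]
  intro i hi
  exact (abs_sub_le _ (v i y) _).trans (add_le_add (le_dMax v F x y hi) (le_dMax v F y z hi))

lemma dMax_mono {ι Z : Type*} (v : ι → Z → ℝ) {F G : Finset ι} (h : F ⊆ G) (z z' : Z) :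
    dMax v F z z' ≤ dMax v G z z' :=
  (dMax_le_iff _ _ _ _ (dMax_nonneg _ _ _ _)).2 fun _ hi => le_dMax v G z z' (h hi)

lemma dMax_continuous {ι Z : Type*} [TopologicalSpace Z] (v : ι → Z → ℝ) (F : Finset ι)
    (hv : ∀ i ∈ F, Continuous (v i)) : Continuous (fun p : Z × Z => dMax v F p.1 p.2) := by
  refine NNReal.continuous_coe.comp ?_
  refine Continuous.finset_sup_apply fun i hi => ?_
  have := hv i hi
  fun_prop

lemma dMax_measurable {ι Z : Type*} [MeasurableSpace Z] (v : ι → Z → ℝ) (F : Finset ι)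
    (hv : ∀ i, Measurable (v i)) : Measurable (fun p : Z × Z => dMax v F p.1 p.2) := by
  refine NNReal.continuous_coe.measurable.comp ?_
  classical
  induction F using Finset.induction_on with
  | empty => simp
  | insert i F hi ih =>
    simp only [Finset.sup_insert]
    have := hv i
    exact Measurable.sup (by fun_prop) ih

/-- The compact space used to encode a standard Borel space. -/
abbrev KSp (ι : Type*) (b : ι → ℝ) := (∀ i : ι, Icc (-b i) (b i)) × (ℕ → Bool)

lemma borel_coupling {Z : Type*} [MeasurableSpace Z] [StandardBorelSpace Z]
    {ι : Type*} [Countable ι] (v : ι → Z → ℝ) (hv : ∀ i, Measurable (v i))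
    (b : ι → ℝ) (hb : ∀ i z, |v i z| ≤ b i)
    (α β : Measure Z) [IsProbabilityMeasure α] [IsProbabilityMeasure β]
    (L : ℝ) (hL : ∀ (F : Finset ι) (f : Z → ℝ), Measurable f → (∃ C, ∀ z, |f z| ≤ C) →
      (∀ z z', |f z - f z'| ≤ dMax v F z z') → ∫ z, f z ∂α - ∫ z, f z ∂β ≤ L) :
    ∃ π : Measure (Z × Z), IsProbabilityMeasure π ∧ π.map Prod.fst = α ∧ π.map Prod.snd = β ∧
      ∀ F : Finset ι, ∫⁻ p, ENNReal.ofReal (dMax v F p.1 p.2) ∂π ≤ ENNReal.ofReal L := by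
  let K := KSp ι b
  let Φ : Z → K := fun z => (fun i => ⟨v i z, abs_le.1 (hb i z)⟩, MeasurableSpace.mapNatBool Z z)
  have hΦm : Measurable Φ := by
    refine Measurable.prodMk ?_ (MeasurableSpace.measurable_mapNatBool Z)
    exact measurable_pi_lambda _ fun i => (hv i).subtype_mk
  have hΦi : Function.Injective Φ := fun z z' h =>
    MeasurableSpace.injective_mapNatBool Z (congrArg Prod.snd h)
  have hΦ : MeasurableEmbedding Φ := hΦm.measurableEmbedding hΦi
  let w : ι → KSp ι b → ℝ := fun i k => (k.1 i : ℝ)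
  have hw : ∀ i, Continuous (w i) := fun i => by fun_prop
  have hdw : ∀ F z z', dMax w F (Φ z) (Φ z') = dMax v F z z' := fun _ _ _ => rfl
  have : IsProbabilityMeasure (α.map Φ) := Measure.isProbabilityMeasure_map hΦm.aemeasurable
  have : IsProbabilityMeasure (β.map Φ) := Measure.isProbabilityMeasure_map hΦm.aemeasurable
  classical
  obtain ⟨π, hπ, h1, h2, h3⟩ := compact_coupling (α.map Φ) (β.map Φ) (fun F => dMax w F)
    (fun F => dMax_continuous w F fun i _ => hw i)
    (fun F => dMax_self w F) (fun F => dMax_symm w F) (fun F => dMax_tri w F)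
    (fun F G => ⟨F ∪ G, fun x y => ⟨dMax_mono w Finset.subset_union_left x y,
      dMax_mono w Finset.subset_union_right x y⟩⟩) L (by
      intro F φ hφ
      rw [integral_map hΦm.aemeasurable φ.continuous.measurable.aestronglyMeasurable,
        integral_map hΦm.aemeasurable φ.continuous.measurable.aestronglyMeasurable]
      exact hL F (fun z => φ (Φ z)) (φ.continuous.measurable.comp hΦm)
        ⟨‖φ‖, fun z => φ.norm_coe_le_norm (Φ z)⟩ (fun z z' => hφ _ _))
  have hE : MeasurableEmbedding (Prod.map Φ Φ) := hΦ.prodMap hΦ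
  have hr : ∀ᵐ p ∂π, p ∈ range (Prod.map Φ Φ) := by
    have e1 : ∀ᵐ k ∂(π.map Prod.fst), k ∈ range Φ := by
      rw [h1]
      exact (ae_map_iff hΦm.aemeasurable hΦ.measurableSet_range).2
        (Filter.Eventually.of_forall fun z => mem_range_self z)
    have e2 : ∀ᵐ k ∂(π.map Prod.snd), k ∈ range Φ := by
      rw [h2]
      exact (ae_map_iff hΦm.aemeasurable hΦ.measurableSet_range).2
        (Filter.Eventually.of_forall fun z => mem_range_self z)
    have e1' := ae_of_ae_map measurable_fst.aemeasurable e1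
    have e2' := ae_of_ae_map measurable_snd.aemeasurable e2
    filter_upwards [e1', e2'] with p hp hq
    rw [range_prodMap]
    exact ⟨hp, hq⟩
  let π₀ := π.comap (Prod.map Φ Φ)
  have hmap : π₀.map (Prod.map Φ Φ) = π := by
    rw [hE.map_comap, Measure.restrict_eq_self_of_ae_mem hr]
  have inj : ∀ μ ν : Measure Z, μ.map Φ = ν.map Φ → μ = ν := by
    intro μ ν h
    rw [← hΦ.comap_map μ, h, hΦ.comap_map]
  have g1 : π₀.map Prod.fst = α := by
    refine inj _ _ ?_
    rw [← h1, ← hmap, Measure.map_map hΦm measurable_fst,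
      Measure.map_map measurable_fst hE.measurable]
    rfl
  have g2 : π₀.map Prod.snd = β := by
    refine inj _ _ ?_
    rw [← h2, ← hmap, Measure.map_map hΦm measurable_snd,
      Measure.map_map measurable_snd hE.measurable]
    rfl
  refine ⟨π₀, ?_, g1, g2, ?_⟩
  · constructor
    have : (π₀.map Prod.fst) univ = 1 := by rw [g1]; simp
    rwa [Measure.map_apply measurable_fst MeasurableSet.univ, preimage_univ] at this
  · intro F
    have hc : Continuous (fun p : K × K => dMax w F p.1 p.2) :=
      dMax_continuous w F fun i _ => hw i
    have : ∫⁻ p, ENNReal.ofReal (dMax v F p.1 p.2) ∂π₀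
        = ∫⁻ p, ENNReal.ofReal (dMax w F p.1 p.2) ∂π := by
      rw [← hmap, lintegral_map (hc.measurable.ennreal_ofReal) hE.measurable]
      rfl
    rw [this, ← ofReal_integral_eq_lintegral_ofReal]
    · exact ENNReal.ofReal_le_ofReal (h3 F)
    · exact integrable_cont (K := K × K) ⟨_, hc⟩ π
    · exact Filter.Eventually.of_forall fun p => dMax_nonneg _ _ _ _

lemma star_countable {S : Type*} [TopologicalSpace S] [SecondCountableTopology S]
    (c : S → S → ℝ) (hc0 : ∀ x y, 0 ≤ c x y) (hstar : StarCond c) :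
    ∃ V : Set (S → ℝ), V.Countable ∧ V ⊆ LipC c ∧
      ∀ x y q, q < c x y → ∃ u ∈ V, q < |u x - u y| := by
  have h1 : ∀ q : ℚ, ∃ V : Set (S → ℝ), V ⊆ LipC c ∧ V.Countable ∧
      ⋃ u ∈ V, {p : S × S | (q : ℝ) < |u p.1 - u p.2|}
        = ⋃ u ∈ LipC c, {p : S × S | (q : ℝ) < |u p.1 - u p.2|} := by
    intro q
    obtain ⟨V, hV⟩ := TopologicalSpace.isOpen_biUnion_countable (LipC c)
      (fun u => {p : S × S | (q : ℝ) < |u p.1 - u p.2|}) (by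
        intro u hu
        have := hu.1
        exact isOpen_lt continuous_const (by fun_prop))
    exact ⟨V, by tauto⟩
  choose V hV1 hV2 hV3 using h1
  refine ⟨⋃ q, V q, countable_iUnion hV2, iUnion_subset hV1, ?_⟩
  intro x y r hr
  obtain ⟨q, hq1, hq2⟩ := exists_rat_btwn hr
  rw [hstar x y] at hq2
  have hne : {r : ℝ | ∃ u ∈ LipC c, r = |u x - u y|}.Nonempty :=
    ⟨_, 0, ⟨continuous_const, ⟨0, by simp⟩, by simpa using hc0⟩, rfl⟩
  obtain ⟨_, ⟨u, hu, rfl⟩, hlt⟩ := exists_lt_of_lt_csSup hne hq2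
  have : (x, y) ∈ ⋃ u ∈ LipC c, {p : S × S | (q : ℝ) < |u p.1 - u p.2|} :=
    mem_biUnion hu hlt
  rw [← hV3 q] at this
  simp only [mem_iUnion, exists_prop] at this
  obtain ⟨u, hu, h⟩ := this
  exact ⟨u, mem_iUnion.2 ⟨q, hu⟩, hq1.trans h⟩

lemma LipC_le {S : Type*} [TopologicalSpace S] {c : S → S → ℝ} {V : Set (S → ℝ)}
    (hV : V ⊆ LipC c) (hc0 : ∀ x y, 0 ≤ c x y) (F : Finset V) (x y : S) :
    dMax (fun u : V => (u : S → ℝ)) F x y ≤ c x y :=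
  (dMax_le_iff _ _ _ _ (hc0 x y)).2 fun u _ => (hV u.2).2.2 x y

lemma cost_eq_iSup {S : Type*} [TopologicalSpace S]
    {c : S → S → ℝ} (hc0 : ∀ x y, 0 ≤ c x y) {V : Set (S → ℝ)} (hV : V ⊆ LipC c)
    (hV2 : ∀ x y q, q < c x y → ∃ u ∈ V, q < |u x - u y|) (x y : S) :
    ENNReal.ofReal (c x y) =
      ⨆ F : Finset V, ENNReal.ofReal (dMax (fun u : V => (u : S → ℝ)) F x y) := by
  refine le_antisymm ?_ (iSup_le fun F => ENNReal.ofReal_le_ofReal (LipC_le hV hc0 F x y))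
  refine le_of_forall_lt fun a ha => ?_
  lift a to NNReal using ha.ne_top
  have : (a : ℝ) < c x y := by
    rwa [ENNReal.lt_ofReal_iff_toReal_lt ENNReal.coe_ne_top] at ha
  obtain ⟨u, hu, hlt⟩ := hV2 x y _ this
  rw [lt_iSup_iff]
  refine ⟨{⟨u, hu⟩}, ?_⟩
  rw [ENNReal.lt_ofReal_iff_toReal_lt ENNReal.coe_ne_top]
  exact hlt.trans_le (le_dMax (fun u : V => (u : S → ℝ)) {⟨u, hu⟩} x y (i := ⟨u, hu⟩)
    (Finset.mem_singleton_self _))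

lemma cost_measurable {S : Type*} [TopologicalSpace S] [SecondCountableTopology S]
    [MeasurableSpace S] [BorelSpace S]
    (c : S → S → ℝ) (hc0 : ∀ x y, 0 ≤ c x y) (hstar : StarCond c) :
    Measurable (fun p : S × S => ENNReal.ofReal (c p.1 p.2)) := by
  obtain ⟨V, hVc, hV1, hV2⟩ := star_countable c hc0 hstar
  have : Countable V := hVc.to_subtype
  simp_rw [cost_eq_iSup hc0 hV1 hV2]
  refine Measurable.iSup fun F => ?_
  exact (dMax_measurable _ F fun u => (hV1 u.2).1.measurable).ennreal_ofReal

lemma joint_coupling {S : Type*} [TopologicalSpace S] [PolishSpace S] [MeasurableSpace S]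
    [BorelSpace S] {Ω : Type*} [MeasurableSpace Ω] (P : Measure Ω) [IsProbabilityMeasure P]
    (c : S → S → ℝ) (hc0 : ∀ x y, 0 ≤ c x y) (hstar : StarCond c)
    {T : Type*} [MeasurableSpace T] [StandardBorelSpace T] (τ : Ω → T) (hτ : Measurable τ)
    (κ ν : Kernel Ω S) [IsMarkovKernel κ] [IsMarkovKernel ν]
    (hfin : ∫⁻ ω, lipDist c (κ ω) (ν ω) ∂P ≠ ⊤) :
    ∃ π : Measure ((T × S) × S), IsProbabilityMeasure π ∧
      π.map Prod.fst = (P ⊗ₘ κ).map (Prod.map τ id) ∧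
      π.map (fun p => (p.1.1, p.2)) = (P ⊗ₘ ν).map (Prod.map τ id) ∧
      ∫⁻ p, ENNReal.ofReal (c p.1.2 p.2) ∂π ≤ ∫⁻ ω, lipDist c (κ ω) (ν ω) ∂P := by
  obtain ⟨V, hVc, hV1, hV2⟩ := star_countable c hc0 hstar
  have : Countable V := hVc.to_subtype
  let v : V ⊕ (ℕ × ℕ) → T × S → ℝ := Sum.elim (fun u z => (u : S → ℝ) z.2)
    (fun ji z => if MeasurableSpace.mapNatBool T z.1 ji.2 then (ji.1 : ℝ) else 0)
  have hv : ∀ i, Measurable (v i) := by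
    rintro (u | ⟨j, i⟩)
    · exact (hV1 u.2).1.measurable.comp measurable_snd
    · have h1 : Measurable (fun z : T × S => MeasurableSpace.mapNatBool T z.1 i) :=
        (measurable_pi_apply i).comp
          ((MeasurableSpace.measurable_mapNatBool T).comp measurable_fst)
      exact (measurable_of_countable (fun b : Bool => if b then (j : ℝ) else 0)).comp h1
  have hbex : ∀ i, ∃ b : ℝ, ∀ z, |v i z| ≤ b := by
    rintro (u | ⟨j, i⟩)
    · obtain ⟨M, hM⟩ := (hV1 u.2).2.1
      exact ⟨M, fun z => hM z.2⟩
    · refine ⟨j, fun z => ?_⟩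
      simp only [v, Sum.elim_inr]
      split_ifs <;> simp
  choose b hb using hbex
  have hpm : Measurable (Prod.map τ (id : S → S)) := by fun_prop
  have : IsProbabilityMeasure ((P ⊗ₘ κ).map (Prod.map τ id)) :=
    Measure.isProbabilityMeasure_map hpm.aemeasurable
  have : IsProbabilityMeasure ((P ⊗ₘ ν).map (Prod.map τ id)) :=
    Measure.isProbabilityMeasure_map hpm.aemeasurable
  obtain ⟨π, hπ, h1, h2, h3⟩ := borel_coupling v hv b hb ((P ⊗ₘ κ).map (Prod.map τ id))
    ((P ⊗ₘ ν).map (Prod.map τ id)) (∫⁻ ω, lipDist c (κ ω) (ν ω) ∂P).toReal (by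
      intro F f hf hfb hfl
      obtain ⟨C, hC⟩ := hfb
      have hintg : ∀ (ρ : Kernel Ω S) [IsMarkovKernel ρ],
          Integrable (fun p : Ω × S => f (τ p.1, p.2)) (P ⊗ₘ ρ) := fun ρ _ =>
        Integrable.of_bound (hf.comp (by fun_prop)).aestronglyMeasurable C
          (Filter.Eventually.of_forall fun p => hC _)
      have e : ∀ (ρ : Kernel Ω S) [IsMarkovKernel ρ],
          ∫ z, f z ∂((P ⊗ₘ ρ).map (Prod.map τ id)) = ∫ ω, ∫ x, f (τ ω, x) ∂(ρ ω) ∂P := by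
        intro ρ _
        rw [integral_map hpm.aemeasurable hf.aestronglyMeasurable]
        exact Measure.integral_compProd (hintg ρ)
      have hi2 : ∀ (ρ : Kernel Ω S) [IsMarkovKernel ρ],
          Integrable (fun ω => ∫ x, f (τ ω, x) ∂(ρ ω)) P := fun ρ _ => (hintg ρ).integral_compProd
      rw [e κ, e ν, ← integral_sub (hi2 κ) (hi2 ν)]
      refine (Real.le_norm_self _).trans ((norm_integral_le_lintegral_norm _).trans ?_)
      refine ENNReal.toReal_mono hfin (lintegral_mono fun ω => ?_)
      have hfu : (fun x => f (τ ω, x)) ∈ LipC c := by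
        have hdist : ∀ x y, dMax v F (τ ω, x) (τ ω, y) ≤ c x y := by
          intro x y
          refine (dMax_le_iff _ _ _ _ (hc0 x y)).2 ?_
          rintro (u | ji) _
          · exact (hV1 u.2).2.2 x y
          · simpa [v] using hc0 x y
        refine ⟨?_, ⟨C, fun x => hC _⟩, fun x y => (hfl _ _).trans (hdist x y)⟩
        refine cont_of_lip (fun x y : S => dMax (fun i (x : S) => v i (τ ω, x)) F x y) ?_ ?_ _
          (fun x y => hfl (τ ω, x) (τ ω, y))
        · refine dMax_continuous (fun i (x : S) => v i (τ ω, x)) F ?_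
          rintro (u | ji) _
          · exact (hV1 u.2).1
          · refine continuous_of_const (X := S) fun x y => ?_
            rfl
        · exact fun x => dMax_self _ F x
      rw [Real.norm_eq_abs]
      exact le_iSup₂ (f := fun (u : S → ℝ) (_ : u ∈ LipC c) =>
        ENNReal.ofReal |∫ x, u x ∂(κ ω) - ∫ x, u x ∂(ν ω)|) _ hfu)
  rw [ENNReal.ofReal_toReal hfin] at h3
  set L := ∫⁻ ω, lipDist c (κ ω) (ν ω) ∂P with hLdef
  have hT : ∀ᵐ p ∂π, p.1.1 = p.2.1 := by
    have hi : ∀ i, ∀ᵐ p ∂π, MeasurableSpace.mapNatBool T p.1.1 i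
        = MeasurableSpace.mapNatBool T p.2.1 i := by
      intro i
      have hmb : Measurable (fun t : T => MeasurableSpace.mapNatBool T t i) :=
        (measurable_pi_apply i).comp (MeasurableSpace.measurable_mapNatBool T)
      set E : Set ((T × S) × (T × S)) := {p | MeasurableSpace.mapNatBool T p.1.1 i
        ≠ MeasurableSpace.mapNatBool T p.2.1 i} with hE
      have hEm : MeasurableSet E :=
        (measurableSet_eq_fun (f := fun p : (T × S) × (T × S) =>
          MeasurableSpace.mapNatBool T p.1.1 i) (hmb.comp (by fun_prop))
          (hmb.comp (by fun_prop : Measurable fun p : (T × S) × (T × S) => p.2.1))).compl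
      have hj : ∀ j : ℕ, (j : ℝ≥0∞) * π E ≤ L := by
        intro j
        refine le_trans ?_ (h3 {Sum.inr (j, i)})
        rw [← lintegral_indicator_const hEm]
        refine lintegral_mono fun p => ?_
        by_cases hp : p ∈ E
        · rw [indicator_of_mem hp]
          have : (j : ℝ) ≤ dMax v {Sum.inr (j, i)} p.1 p.2 := by
            refine le_trans ?_ (le_dMax v _ _ _ (Finset.mem_singleton_self _))
            have hp' : MeasurableSpace.mapNatBool T p.1.1 i
              ≠ MeasurableSpace.mapNatBool T p.2.1 i := hp
            simp only [v, Sum.elim_inr]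
            rcases Bool.eq_false_or_eq_true (MeasurableSpace.mapNatBool T p.1.1 i) with h | h <;>
            rcases Bool.eq_false_or_eq_true (MeasurableSpace.mapNatBool T p.2.1 i) with h' | h' <;>
            simp_all
          calc (j : ℝ≥0∞) = ENNReal.ofReal (j : ℝ) := by simp
            _ ≤ _ := ENNReal.ofReal_le_ofReal this
        · rw [indicator_of_notMem hp]; exact zero_le
      rw [ae_iff]
      change π E = 0
      by_contra h0
      obtain ⟨n, hn⟩ := ENNReal.exists_nat_mul_gt h0 hfin
      exact absurd (hj n) (not_le.2 hn)
    filter_upwards [ae_all_iff.2 hi] with p hp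
    exact MeasurableSpace.injective_mapNatBool T (funext hp)
  have hm : Measurable (fun p : (T × S) × (T × S) => (p.1, p.2.2)) := by fun_prop
  have hm2 : Measurable (fun p : (T × S) × S => (p.1.1, p.2)) := by fun_prop
  refine ⟨π.map (fun p => (p.1, p.2.2)), Measure.isProbabilityMeasure_map hm.aemeasurable,
    ?_, ?_, ?_⟩
  · rw [Measure.map_map measurable_fst hm, ← h1]; rfl
  · rw [Measure.map_map hm2 hm, ← h2]
    refine Measure.map_congr ?_
    filter_upwards [hT] with p hp
    exact Prod.ext hp rfl
  · have hcm := cost_measurable c hc0 hstar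
    have hcm' : Measurable fun p : (T × S) × S => ENNReal.ofReal (c p.1.2 p.2) :=
      hcm.comp (by fun_prop : Measurable fun p : (T × S) × S => (p.1.2, p.2))
    rw [lintegral_map hcm' hm]
    simp_rw [cost_eq_iSup hc0 hV1 hV2]
    classical
    rw [lintegral_iSup_directed]
    · refine iSup_le fun F => ?_
      refine le_trans (lintegral_mono fun p => ENNReal.ofReal_le_ofReal ?_)
        (h3 (F.map ⟨Sum.inl, Sum.inl_injective⟩))
      refine (dMax_le_iff _ _ _ _ (dMax_nonneg _ _ _ _)).2 fun u hu => ?_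
      exact le_dMax v _ p.1 p.2 (i := Sum.inl u) (Finset.mem_map_of_mem _ hu)
    · intro F
      exact ((dMax_measurable (fun u : V => (u : S → ℝ)) F
        fun u => (hV1 u.2).1.measurable).comp
        (by fun_prop : Measurable fun p : (T × S) × (T × S) => (p.1.2, p.2.2))).ennreal_ofReal.aemeasurable
    · intro F G
      exact ⟨F ∪ G, fun p => ENNReal.ofReal_le_ofReal (dMax_mono _ Finset.subset_union_left _ _),
        fun p => ENNReal.ofReal_le_ofReal (dMax_mono _ Finset.subset_union_right _ _)⟩

lemma exists_pi_seq (S : Type*) [mS : MeasurableSpace S] [MeasurableSpace.CountablyGenerated S] :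
    ∃ B : ℕ → Set S, (∀ n, MeasurableSet (B n)) ∧ IsPiSystem (range B) ∧
      mS = MeasurableSpace.generateFrom (range B) := by
  set C := generateSetAlgebra (MeasurableSpace.countableGeneratingSet S) with hC
  have hCc : C.Countable := countable_generateSetAlgebra
    MeasurableSpace.countable_countableGeneratingSet
  have hCa : IsSetAlgebra C := isSetAlgebra_generateSetAlgebra
  have hg : mS = MeasurableSpace.generateFrom C := by
    rw [hC, generateFrom_generateSetAlgebra_eq,
      MeasurableSpace.generateFrom_countableGeneratingSet]
  obtain ⟨B, hB⟩ := hCc.exists_eq_range ⟨_, hCa.univ_mem⟩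
  refine ⟨B, ?_, ?_, ?_⟩
  · intro n
    rw [hg]
    exact MeasurableSpace.measurableSet_generateFrom (hB ▸ mem_range_self n)
  · rw [← hB]; exact hCa.isSetRing.isSetSemiring.isPiSystem
  · rw [← hB]; exact hg

lemma cost_symm {S : Type*} [TopologicalSpace S] {c : S → S → ℝ} (hstar : StarCond c) (x y : S) :
    c x y = c y x := by
  rw [hstar x y, hstar y x]
  simp_rw [abs_sub_comm]

lemma cost_tri {S : Type*} [TopologicalSpace S] {c : S → S → ℝ} (hc0 : ∀ x y, 0 ≤ c x y)
    (hstar : StarCond c) (x y z : S) : c x z ≤ c x y + c y z := by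
  rw [hstar x z]
  refine csSup_le ⟨_, 0, ⟨continuous_const, ⟨0, by simp⟩, by simpa using hc0⟩, rfl⟩ ?_
  rintro _ ⟨u, hu, rfl⟩
  exact (abs_sub_le _ (u y) _).trans (add_le_add (hu.2.2 x y) (hu.2.2 y z))

lemma lipDist_le {S : Type*} [TopologicalSpace S] [MeasurableSpace S] [BorelSpace S]
    (c : S → S → ℝ) (ρ : Measure (S × S)) [IsProbabilityMeasure ρ] :
    lipDist c (ρ.map Prod.fst) (ρ.map Prod.snd) ≤ ∫⁻ p, ENNReal.ofReal (c p.1 p.2) ∂ρ := by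
  refine iSup₂_le fun u hu => ?_
  obtain ⟨C, hC⟩ := hu.2.1
  have hum := hu.1.measurable
  rw [integral_map measurable_fst.aemeasurable hum.aestronglyMeasurable,
    integral_map measurable_snd.aemeasurable hum.aestronglyMeasurable]
  have i1 : Integrable (fun p : S × S => u p.1) ρ :=
    Integrable.of_bound (hum.comp measurable_fst).aestronglyMeasurable C
      (Filter.Eventually.of_forall fun p => hC _)
  have i2 : Integrable (fun p : S × S => u p.2) ρ :=
    Integrable.of_bound (hum.comp measurable_snd).aestronglyMeasurable C
      (Filter.Eventually.of_forall fun p => hC _)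
  rw [← integral_sub i1 i2, ← Real.norm_eq_abs, ofReal_norm]
  refine (enorm_integral_le_lintegral_enorm _).trans (lintegral_mono fun p => ?_)
  rw [← ofReal_norm]
  exact ENNReal.ofReal_le_ofReal (hu.2.2 _ _)

lemma measurable_lint {Ω S T : Type*} {m : MeasurableSpace Ω} [MeasurableSpace S]
    [MeasurableSpace T] (κ : Ω → Measure S) (hκ : ∀ ω, IsProbabilityMeasure (κ ω))
    (hκm : Measurable κ)
    (τ : Ω → T) (hτ : Measurable τ) (g : T × S → ℝ≥0∞) (hg : Measurable g) :
    Measurable (fun ω => ∫⁻ x, g (τ ω, x) ∂(κ ω)) := by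
  let k : Kernel Ω S := ⟨κ, hκm⟩
  have : IsMarkovKernel k := ⟨hκ⟩
  exact Measurable.lintegral_kernel_prod_right' (κ := k) (f := fun p => g (τ p.1, p.2))
    (hg.comp (by fun_prop))

lemma rcd_map {Ω S T : Type*} (M : MeasurableSpace Ω) [mΩ : MeasurableSpace Ω]
    [MeasurableSpace S] [MeasurableSpace T]
    (P : Measure Ω) [IsProbabilityMeasure P] (hM : M ≤ mΩ)
    (X : Ω → S) (hX : Measurable X) (κ : Kernel Ω S) [IsMarkovKernel κ]
    (hκ : ∀ A : Set Ω, MeasurableSet[M] A → ∀ B : Set S, MeasurableSet B →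
      P (A ∩ X ⁻¹' B) = ∫⁻ ω in A, κ ω B ∂P)
    (τ : Ω → T) (hτ : Measurable[M] τ) (A : Set Ω) (hA : MeasurableSet[M] A) :
    (P.restrict A).map (fun ω => (τ ω, X ω)) = ((P.restrict A) ⊗ₘ κ).map (Prod.map τ id) := by
  have hτ' : Measurable τ := hτ.mono hM le_rfl
  have hpm : Measurable (Prod.map τ (id : S → S)) := by fun_prop
  have hp : Measurable (fun ω => (τ ω, X ω)) := by fun_prop
  refine Measure.ext_prod ?_
  intro s t hs ht
  rw [Measure.map_apply hp (hs.prod ht), Measure.map_apply hpm (hs.prod ht),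
    Measure.restrict_apply (hp (hs.prod ht))]
  have e1 : (fun ω => (τ ω, X ω)) ⁻¹' s ×ˢ t ∩ A = (τ ⁻¹' s ∩ A) ∩ X ⁻¹' t := by
    ext ω; simp only [mem_inter_iff, mem_preimage, mem_prod]; tauto
  have e2 : Prod.map τ (id : S → S) ⁻¹' s ×ˢ t = (τ ⁻¹' s) ×ˢ t := by
    ext ω; simp
  rw [e1, e2, Measure.compProd_apply_prod (hτ' hs) ht, Measure.restrict_restrict (hτ' hs)]
  exact hκ _ (MeasurableSet.inter (hτ hs) hA) t ht

lemma rcd_lint {Ω S T : Type*} (M : MeasurableSpace Ω) [mΩ : MeasurableSpace Ω]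
    [MeasurableSpace S] [MeasurableSpace T]
    (P : Measure Ω) [IsProbabilityMeasure P] (hM : M ≤ mΩ)
    (X : Ω → S) (hX : Measurable X) (κ : Kernel Ω S) [IsMarkovKernel κ]
    (hκ : ∀ A : Set Ω, MeasurableSet[M] A → ∀ B : Set S, MeasurableSet B →
      P (A ∩ X ⁻¹' B) = ∫⁻ ω in A, κ ω B ∂P)
    (τ : Ω → T) (hτ : Measurable[M] τ) (A : Set Ω) (hA : MeasurableSet[M] A)
    (g : T × S → ℝ≥0∞) (hg : Measurable g) :
    ∫⁻ ω in A, g (τ ω, X ω) ∂P = ∫⁻ ω in A, ∫⁻ x, g (τ ω, x) ∂(κ ω) ∂P := by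
  have hτ' : Measurable τ := hτ.mono hM le_rfl
  have hpm : Measurable (Prod.map τ (id : S → S)) := by fun_prop
  have hp : Measurable (fun ω => (τ ω, X ω)) := by fun_prop
  rw [← lintegral_map hg hp, rcd_map M P hM X hX κ hκ τ hτ A hA, lintegral_map hg hpm,
    Measure.lintegral_compProd (f := fun a => g (Prod.map τ id a)) (hg.comp hpm)]
  rfl

lemma indep_lint {Ω E : Type*} (m : MeasurableSpace Ω) [mΩ : MeasurableSpace Ω]
    [MeasurableSpace E] (P : Measure Ω) [IsProbabilityMeasure P] (hm : m ≤ mΩ)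
    (W : Ω → E) (hW : Measurable[m] W) (U : Ω → ℝ) (hU : Measurable U)
    (hUunif : P.map U = volume.restrict (Set.Icc (0:ℝ) 1))
    (hind : Indep (MeasurableSpace.comap U inferInstance) m P)
    (g : E × unitInterval → ℝ≥0∞) (hg : Measurable g) :
    ∫⁻ ω, g (W ω, projIcc (0:ℝ) 1 zero_le_one (U ω)) ∂P = ∫⁻ ω, (∫⁻ s : unitInterval, g (W ω, s)) ∂P := by
  have hproj : Measurable (projIcc (0:ℝ) 1 zero_le_one) := continuous_projIcc.measurable
  have hW' : Measurable W := hW.mono hm le_rfl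
  have hUt : Measurable (fun ω => projIcc (0:ℝ) 1 zero_le_one (U ω)) := hproj.comp hU
  have hi : IndepFun W U P := by
    rw [IndepFun_iff_Indep]
    exact indep_of_indep_of_le_left hind.symm hW.comap_le
  have hi2 : IndepFun W (fun ω => projIcc (0:ℝ) 1 zero_le_one (U ω)) P :=
    hi.comp measurable_id hproj
  have hlaw : P.map (fun ω => projIcc (0:ℝ) 1 zero_le_one (U ω))
      = (volume : Measure unitInterval) := by
    have : P.map (fun ω => projIcc (0:ℝ) 1 zero_le_one (U ω))
      = (P.map U).map (projIcc (0:ℝ) 1 zero_le_one) := by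
      rw [Measure.map_map hproj hU]; rfl
    rw [this, hUunif]
    have h2 := unitInterval.measurePreserving_coe.map_eq
    change _ = volume.restrict (Icc (0:ℝ) 1) at h2
    rw [← h2, Measure.map_map hproj measurable_subtype_coe]
    have : projIcc (0:ℝ) 1 zero_le_one ∘ Subtype.val = id := by
      ext x; simp
    rw [this, Measure.map_id]
  have h3 := (indepFun_iff_map_prod_eq_prod_map_map hW'.aemeasurable hUt.aemeasurable).1 hi2
  rw [hlaw] at h3
  rw [← lintegral_map (f := g) hg (hW'.prodMk hUt), h3, lintegral_prod _ hg.aemeasurable,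
    lintegral_map hg.lintegral_prod_right' hW']

lemma dis_formula {Ω S T : Type*} (M m : MeasurableSpace Ω) [mΩ : MeasurableSpace Ω]
    [MeasurableSpace S] [MeasurableSpace T]
    (P : Measure Ω) [IsProbabilityMeasure P] (hM : M ≤ mΩ)
    (X : Ω → S) (hX : Measurable X) (κ : Kernel Ω S) [IsMarkovKernel κ]
    (hκ : ∀ A : Set Ω, MeasurableSet[M] A → ∀ B : Set S, MeasurableSet B →
      P (A ∩ X ⁻¹' B) = ∫⁻ ω in A, κ ω B ∂P)
    (τ : Ω → T) (hτ : Measurable[M] τ)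
    (U : Ω → ℝ) (hU : Measurable U)
    (hUunif : P.map U = volume.restrict (Set.Icc (0:ℝ) 1))
    (hmle : m ≤ mΩ) (hMm : M ≤ m) (h3 : Measurable[m] X)
    (hind : Indep (MeasurableSpace.comap U inferInstance) m P)
    (η : Kernel (T × S) S) [IsMarkovKernel η] (G : T × S → unitInterval → S)
    (hG : Measurable (Function.uncurry G)) (hGη : ∀ a, volume.map (G a) = η a)
    (A : Set Ω) (hA : MeasurableSet[M] A) (φ : (T × S) × S → ℝ≥0∞) (hφ : Measurable φ) :
    ∫⁻ ω in A, φ ((τ ω, X ω), G (τ ω, X ω) (projIcc (0:ℝ) 1 zero_le_one (U ω))) ∂P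
      = ∫⁻ ω in A, ∫⁻ x, ∫⁻ y, φ ((τ ω, x), y) ∂(η (τ ω, x)) ∂(κ ω) ∂P := by
  have hA' : MeasurableSet A := hM A hA
  have h1 : Measurable[m] (A.indicator (1 : Ω → ℝ≥0∞)) :=
    Measurable.mono (ma := M) (measurable_const.indicator hA) hMm le_rfl
  have h2 : Measurable[m] τ := Measurable.mono (ma := M) hτ hMm le_rfl
  have hW : Measurable[m] (fun ω => (A.indicator (1 : Ω → ℝ≥0∞) ω, (τ ω, X ω))) :=
    Measurable.prodMk h1 (Measurable.prodMk h2 h3)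
  have hg : Measurable (fun p : (ℝ≥0∞ × (T × S)) × unitInterval =>
      p.1.1 * φ (p.1.2, G p.1.2 p.2)) := by
    refine Measurable.mul (by fun_prop) (hφ.comp (Measurable.prodMk (by fun_prop) ?_))
    exact hG.comp (g := Function.uncurry G)
      (f := fun p : (ℝ≥0∞ × (T × S)) × unitInterval => (p.1.2, p.2)) (by fun_prop)
  have key := indep_lint m P hmle _ hW U hU hUunif hind _ hg
  have hin : ∀ f : Ω → ℝ≥0∞, ∫⁻ ω in A, f ω ∂P = ∫⁻ ω, A.indicator 1 ω * f ω ∂P := by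
    intro f
    rw [← lintegral_indicator hA']
    refine lintegral_congr fun ω => ?_
    by_cases h : ω ∈ A <;> simp [h]
  have hGa : ∀ a, Measurable (G a) := fun a => hG.comp measurable_prodMk_left
  rw [hin]
  refine key.trans ?_
  have hgm : Measurable (fun a : T × S => ∫⁻ y, φ (a, y) ∂(η a)) :=
    Measurable.lintegral_kernel_prod_right' hφ
  rw [← rcd_lint M P hM X hX κ hκ τ hτ A hA _ hgm, hin]
  refine lintegral_congr fun ω => ?_
  have hm1 : Measurable (fun s => φ ((τ ω, X ω), G (τ ω, X ω) s)) :=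
    hφ.comp (measurable_const.prodMk (hGa _))
  have hm2 : Measurable (fun y => φ ((τ ω, X ω), y)) := hφ.comp measurable_prodMk_left
  change ∫⁻ s, A.indicator 1 ω * φ ((τ ω, X ω), G (τ ω, X ω) s) = _
  rw [lintegral_const_mul _ hm1, ← hGη, lintegral_map hm2 (hGa _)]

lemma ae_eq_of_sub {Ω : Type*} (m : MeasurableSpace Ω) [mΩ : MeasurableSpace Ω]
    (P : Measure Ω) [IsProbabilityMeasure P] (hm : m ≤ mΩ) (f g : Ω → ℝ≥0∞)
    (hf : Measurable[m] f) (hg : Measurable[m] g)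
    (h : ∀ s, MeasurableSet[m] s → ∫⁻ ω in s, f ω ∂P = ∫⁻ ω in s, g ω ∂P) : f =ᵐ[P] g := by
  refine ae_eq_of_ae_eq_trim (hm := hm) ?_
  refine @ae_eq_of_forall_setLIntegral_eq_of_sigmaFinite Ω m (P.trim hm) _ f g hf hg ?_
  intro s hs _
  rw [setLIntegral_trim hm hf hs, setLIntegral_trim hm hg hs]
  exact h s hs

lemma pi_lint {Ω S T : Type*} [mΩ : MeasurableSpace Ω] [MeasurableSpace S] [MeasurableSpace T]
    (P : Measure Ω) [IsProbabilityMeasure P] (κ : Kernel Ω S) [IsMarkovKernel κ]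
    (τ : Ω → T) (hτ : Measurable τ) (η : Kernel (T × S) S) [IsMarkovKernel η]
    (φ : (T × S) × S → ℝ≥0∞) (hφ : Measurable φ) :
    ∫⁻ p, φ p ∂(((P ⊗ₘ κ).map (Prod.map τ id)) ⊗ₘ η)
      = ∫⁻ ω, ∫⁻ x, ∫⁻ y, φ ((τ ω, x), y) ∂(η (τ ω, x)) ∂(κ ω) ∂P := by
  have hpm : Measurable (Prod.map τ (id : S → S)) := by fun_prop
  have : IsProbabilityMeasure ((P ⊗ₘ κ).map (Prod.map τ id)) :=
    Measure.isProbabilityMeasure_map hpm.aemeasurable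
  have hgm : Measurable (fun a : T × S => ∫⁻ y, φ (a, y) ∂(η a)) :=
    Measurable.lintegral_kernel_prod_right' hφ
  rw [Measure.lintegral_compProd hφ, lintegral_map hgm hpm,
    Measure.lintegral_compProd (f := fun a => ∫⁻ y, φ (Prod.map τ id a, y) ∂(η (Prod.map τ id a)))
      (hgm.comp hpm)]
  rfl

lemma second_marginal {Ω S T : Type*} (m : MeasurableSpace Ω) [mΩ : MeasurableSpace Ω]
    [MeasurableSpace S] [MeasurableSpace T]
    (P : Measure Ω) [IsProbabilityMeasure P] (hm : m ≤ mΩ)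
    (κ ν : Kernel Ω S) [IsMarkovKernel κ] [IsMarkovKernel ν]
    (τ : Ω → T) (hτ : Measurable[m] τ)
    (hsets : ∀ s, MeasurableSet[m] s → ∃ C, MeasurableSet C ∧ τ ⁻¹' C = s)
    (hκm : Measurable[m] (fun ω => κ ω)) (hνm : Measurable[m] (fun ω => ν ω))
    (η : Kernel (T × S) S) [IsMarkovKernel η]
    (h2 : (((P ⊗ₘ κ).map (Prod.map τ id)) ⊗ₘ η).map (fun p => (p.1.1, p.2))
      = (P ⊗ₘ ν).map (Prod.map τ id)) (D : Set S) (hD : MeasurableSet D) :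
    ∀ᵐ ω ∂P, ∫⁻ x, η (τ ω, x) D ∂(κ ω) = ν ω D := by
  have hτ' : Measurable τ := hτ.mono hm le_rfl
  have hpm : Measurable (Prod.map τ (id : S → S)) := by fun_prop
  refine ae_eq_of_sub m P hm _ _ ?_ ?_ ?_
  · exact @measurable_lint Ω S T m _ _ (fun ω => κ ω) (fun ω => inferInstance) hκm τ hτ
      (fun a => η a D) (η.measurable_coe hD)
  · exact (Measure.measurable_coe hD).comp hνm
  · intro s hs
    obtain ⟨C, hC, rfl⟩ := hsets s hs
    have e := congrArg (fun μ => ∫⁻ p, (C ×ˢ D).indicator 1 p ∂μ) h2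
    have hi : Measurable ((C ×ˢ D).indicator (1 : T × S → ℝ≥0∞)) :=
      measurable_const.indicator (hC.prod hD)
    rw [lintegral_map hi (by fun_prop), lintegral_map hi hpm,
      pi_lint P κ τ hτ' η (fun p => (C ×ˢ D).indicator 1 (p.1.1, p.2)) (hi.comp (by fun_prop)),
      Measure.lintegral_compProd (f := fun a => (C ×ˢ D).indicator 1 (Prod.map τ id a))
        (hi.comp hpm)] at e
    rw [← lintegral_indicator (hτ' hC), ← lintegral_indicator (hτ' hC)]
    have hin : ∀ (t : T) (y : S), (C ×ˢ D).indicator (1 : T × S → ℝ≥0∞) (t, y)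
        = C.indicator 1 t * D.indicator 1 y := by
      intro t y
      by_cases h1 : t ∈ C <;> by_cases h2 : y ∈ D <;> simp [h1, h2]
    have hDm : Measurable (D.indicator (1 : S → ℝ≥0∞)) := measurable_const.indicator hD
    simp only [hin, Prod.map_apply, id, lintegral_const_mul _ hDm, lintegral_indicator_one hD] at e
    convert e using 2 with ω ω
    · ext ω
      by_cases h : τ ω ∈ C <;> simp [h]
    · ext ω
      by_cases h : τ ω ∈ C <;> simp [h]

lemma lipDist_le_ae {Ω S T : Type*} [TopologicalSpace S] [SecondCountableTopology S]
    (m : MeasurableSpace Ω) [mΩ : MeasurableSpace Ω]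
    [MeasurableSpace S] [BorelSpace S] [MeasurableSpace T]
    (P : Measure Ω) [IsProbabilityMeasure P] (hm : m ≤ mΩ)
    (c : S → S → ℝ) (hc0 : ∀ x y, 0 ≤ c x y) (hstar : StarCond c)
    (κ ν : Kernel Ω S) [IsMarkovKernel κ] [IsMarkovKernel ν]
    (τ : Ω → T) (hτ : Measurable[m] τ)
    (hsets : ∀ s, MeasurableSet[m] s → ∃ C, MeasurableSet C ∧ τ ⁻¹' C = s)
    (hκm : Measurable[m] (fun ω => κ ω)) (hνm : Measurable[m] (fun ω => ν ω))
    (η : Kernel (T × S) S) [IsMarkovKernel η]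
    (h2 : (((P ⊗ₘ κ).map (Prod.map τ id)) ⊗ₘ η).map (fun p => (p.1.1, p.2))
      = (P ⊗ₘ ν).map (Prod.map τ id)) :
    ∀ᵐ ω ∂P, lipDist c (κ ω) (ν ω)
      ≤ ∫⁻ x, ∫⁻ y, ENNReal.ofReal (c x y) ∂(η (τ ω, x)) ∂(κ ω) := by
  obtain ⟨B, hB, hpi, hgen⟩ := exists_pi_seq S
  have hall : ∀ᵐ ω ∂P, ∀ n, ∫⁻ x, η (τ ω, x) (B n) ∂(κ ω) = ν ω (B n) :=
    ae_all_iff.2 fun n =>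
      second_marginal m P hm κ ν τ hτ hsets hκm hνm η h2 (B n) (hB n)
  filter_upwards [hall] with ω hω
  have hpx : Measurable (fun x : S => (τ ω, x)) := by fun_prop
  let θ : Kernel S S := η.comap (fun x => (τ ω, x)) hpx
  have hθ : ∀ x, θ x = η (τ ω, x) := fun x => rfl
  have e1 : ((κ ω) ⊗ₘ θ).map Prod.fst = κ ω := Measure.fst_compProd _ _
  have e2 : ((κ ω) ⊗ₘ θ).map Prod.snd = ν ω := by
    have : IsProbabilityMeasure (((κ ω) ⊗ₘ θ).map Prod.snd) :=
      Measure.isProbabilityMeasure_map measurable_snd.aemeasurable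
    refine ext_of_generate_finite (range B) hgen hpi ?_ (by simp)
    rintro _ ⟨n, rfl⟩
    rw [← hω n, Measure.map_apply measurable_snd (hB n),
      Measure.compProd_apply (measurable_snd (hB n))]
    rfl
  have := lipDist_le c ((κ ω) ⊗ₘ θ)
  rw [e1, e2, Measure.lintegral_compProd (cost_measurable c hc0 hstar)] at this
  exact this

lemma general_coupling_core
    {S : Type*} [TopologicalSpace S] [PolishSpace S] [MeasurableSpace S] [BorelSpace S]
    {T : Type*} [MeasurableSpace T] [StandardBorelSpace T]
    {Ω : Type*} (m M m' : MeasurableSpace Ω) [mΩ : MeasurableSpace Ω]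
    (P : Measure Ω) [IsProbabilityMeasure P]
    (c : S → S → ℝ) (hc0 : ∀ x y, 0 ≤ c x y) (hstar : StarCond c)
    (X : Ω → S) (hX : Measurable X)
    (x₀ : S) (hXint : ∫⁻ x, ENNReal.ofReal (c x x₀) ∂(P.map X) < ⊤)
    (U : Ω → ℝ) (hUmeas : Measurable U)
    (hUunif : P.map U = volume.restrict (Set.Icc (0:ℝ) 1))
    (hmM : m ≤ M) (hMm' : M ≤ m') (hm'Ω : m' ≤ mΩ) (hXm' : Measurable[m'] X)
    (hUindep : Indep (MeasurableSpace.comap U inferInstance) m' P)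
    (κ ν : Kernel Ω S) [IsMarkovKernel κ] [IsMarkovKernel ν]
    (hκ : ∀ A : Set Ω, MeasurableSet[M] A → ∀ B : Set S, MeasurableSet B →
      P (A ∩ X ⁻¹' B) = ∫⁻ ω in A, κ ω B ∂P)
    (hνint : ∫⁻ ω, ∫⁻ x, ENNReal.ofReal (c x x₀) ∂(ν ω) ∂P < ⊤)
    (τ : Ω → T) (hτ : Measurable[m] τ)
    (hsets : ∀ s, MeasurableSet[m] s → ∃ C, MeasurableSet C ∧ τ ⁻¹' C = s)
    (hκm : Measurable[m] (fun ω => κ ω)) (hνm : Measurable[m] (fun ω => ν ω)) :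
    ∃ G : T × S → unitInterval → S, Measurable (Function.uncurry G) ∧
      (∀ A : Set Ω, MeasurableSet[M] A → ∀ B : Set S, MeasurableSet B →
        P (A ∩ (fun ω => G (τ ω, X ω) (projIcc (0:ℝ) 1 zero_le_one (U ω))) ⁻¹' B)
          = ∫⁻ ω in A, ν ω B ∂P) ∧
      ∀ᵐ ω ∂P, (P[fun ω' => c (X ω')
          (G (τ ω', X ω') (projIcc (0:ℝ) 1 zero_le_one (U ω'))) | M]) ω
        = (lipDist c (κ ω) (ν ω)).toReal := by
  have hM : M ≤ mΩ := hMm'.trans hm'Ω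
  have hm : m ≤ mΩ := hmM.trans hM
  have hτM : Measurable[M] τ := Measurable.mono (ma := m) hτ hmM le_rfl
  have hτ' : Measurable τ := Measurable.mono (ma := m) hτ hm le_rfl
  have hcm := cost_measurable c hc0 hstar
  have hc0m : Measurable (fun x => ENNReal.ofReal (c x x₀)) :=
    hcm.comp (measurable_id.prodMk measurable_const)
  have hκint : ∫⁻ ω, ∫⁻ x, ENNReal.ofReal (c x x₀) ∂(κ ω) ∂P < ⊤ := by
    have := rcd_lint M P hM X hX κ hκ τ hτM univ MeasurableSet.univ
      (fun p => ENNReal.ofReal (c p.2 x₀)) (hc0m.comp measurable_snd)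
    simp only [Measure.restrict_univ] at this
    rw [← this]
    rwa [lintegral_map hc0m hX] at hXint
  have hfin : ∫⁻ ω, lipDist c (κ ω) (ν ω) ∂P ≠ ⊤ := by
    have hle : ∀ ω, lipDist c (κ ω) (ν ω) ≤ ∫⁻ x, ENNReal.ofReal (c x x₀) ∂(κ ω)
        + ∫⁻ x, ENNReal.ofReal (c x x₀) ∂(ν ω) := by
      intro ω
      have h := lipDist_le c ((κ ω).prod (ν ω))
      have f1 : ((κ ω).prod (ν ω)).map Prod.fst = κ ω := by simp
      have f2 : ((κ ω).prod (ν ω)).map Prod.snd = ν ω := by simp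
      rw [f1, f2] at h
      have g1 : ∫⁻ p, ENNReal.ofReal (c p.1 x₀) ∂((κ ω).prod (ν ω))
          = ∫⁻ x, ENNReal.ofReal (c x x₀) ∂(κ ω) := by
        conv_rhs => rw [← f1]
        rw [lintegral_map hc0m measurable_fst]
      have g2 : ∫⁻ p, ENNReal.ofReal (c p.2 x₀) ∂((κ ω).prod (ν ω))
          = ∫⁻ x, ENNReal.ofReal (c x x₀) ∂(ν ω) := by
        conv_rhs => rw [← f2]
        rw [lintegral_map hc0m measurable_snd]
      refine h.trans ?_
      rw [← g1, ← g2, ← lintegral_add_left (f := fun p : S × S => ENNReal.ofReal (c p.1 x₀))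
        (hc0m.comp measurable_fst)]
      refine lintegral_mono fun p => ?_
      rw [← ENNReal.ofReal_add (hc0 _ _) (hc0 _ _)]
      refine ENNReal.ofReal_le_ofReal ?_
      have := cost_tri hc0 hstar p.1 x₀ p.2
      rwa [cost_symm hstar x₀ p.2] at this
    have hmeas : Measurable (fun ω => ∫⁻ x, ENNReal.ofReal (c x x₀) ∂(κ ω)) :=
      hc0m.lintegral_kernel
    refine ((lintegral_mono hle).trans_lt ?_).ne
    rw [lintegral_add_left hmeas]
    exact ENNReal.add_lt_top.2 ⟨hκint, hνint⟩
  obtain ⟨π, hπ, h1, h2, h3⟩ := joint_coupling P c hc0 hstar τ hτ' κ ν hfin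
  have : Nonempty S := ⟨x₀⟩
  set η := π.condKernel with hη
  have hdis : ((P ⊗ₘ κ).map (Prod.map τ id)) ⊗ₘ η = π := by
    rw [← h1]
    exact π.disintegrate π.condKernel
  rw [← hdis] at h2 h3
  obtain ⟨G, hG, hGη⟩ := Kernel.exists_measurable_map_eq_unitInterval η
  have D4 := dis_formula M m' P hM X hX κ hκ τ hτM U hUmeas hUunif hm'Ω hMm' hXm' hUindep η G hG hGη
  have hUt : Measurable (fun ω => projIcc (0:ℝ) 1 zero_le_one (U ω)) :=
    continuous_projIcc.measurable.comp hUmeas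
  have hY : Measurable (fun ω => G (τ ω, X ω) (projIcc (0:ℝ) 1 zero_le_one (U ω))) :=
    hG.comp (g := Function.uncurry G)
      (f := fun ω => ((τ ω, X ω), projIcc (0:ℝ) 1 zero_le_one (U ω)))
      ((hτ'.prodMk hX).prodMk hUt)
  refine ⟨G, hG, ?_, ?_⟩
  · intro A hA B hB
    have hi : Measurable (fun p : (T × S) × S => B.indicator (1 : S → ℝ≥0∞) p.2) :=
      (measurable_const.indicator hB).comp measurable_snd
    have h := D4 A hA _ hi
    simp only [lintegral_indicator_one hB] at h
    have h5 : ∫⁻ ω in A, ∫⁻ x, η (τ ω, x) B ∂(κ ω) ∂P = ∫⁻ ω in A, ν ω B ∂P :=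
      lintegral_congr_ae (ae_restrict_of_ae
        (second_marginal m P hm κ ν τ hτ hsets hκm hνm η h2 B hB))
    rw [← h5, ← h]
    have h6 : ∀ ω, B.indicator (1 : S → ℝ≥0∞)
        (G (τ ω, X ω) (projIcc (0:ℝ) 1 zero_le_one (U ω)))
        = ((fun ω => G (τ ω, X ω) (projIcc (0:ℝ) 1 zero_le_one (U ω))) ⁻¹' B).indicator 1 ω :=
      fun ω => rfl
    simp only [h6]
    rw [lintegral_indicator_one (hY hB), Measure.restrict_apply (hY hB), inter_comm]
  · set Y := fun ω => G (τ ω, X ω) (projIcc (0:ℝ) 1 zero_le_one (U ω)) with hYdef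
    have hφ : Measurable (fun p : (T × S) × S => ENNReal.ofReal (c p.1.2 p.2)) :=
      hcm.comp (f := fun p : (T × S) × S => (p.1.2, p.2)) (by fun_prop)
    set C : Ω → ℝ≥0∞ := fun ω => ∫⁻ x, ∫⁻ y, ENNReal.ofReal (c x y) ∂(η (τ ω, x)) ∂(κ ω) with hC
    have hDC : ∀ A, MeasurableSet[M] A →
        ∫⁻ ω in A, ENNReal.ofReal (c (X ω) (Y ω)) ∂P = ∫⁻ ω in A, C ω ∂P :=
      fun A hA => D4 A hA _ hφ
    have hCm : Measurable[M] C := by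
      refine Measurable.mono (ma := m) ?_ hmM le_rfl
      exact @measurable_lint Ω S T m _ _ (fun ω => κ ω) (fun ω => inferInstance) hκm τ hτ
        (fun a => ∫⁻ y, ENNReal.ofReal (c a.2 y) ∂(η a))
        (Measurable.lintegral_kernel_prod_right' hφ)
    have hCm' : Measurable C := Measurable.mono (ma := M) hCm hM le_rfl
    have hle := lipDist_le_ae m P hm c hc0 hstar κ ν τ hτ hsets hκm hνm η h2
    have hCle : ∫⁻ ω, C ω ∂P ≤ ∫⁻ ω, lipDist c (κ ω) (ν ω) ∂P := by
      rw [pi_lint P κ τ hτ' η _ hφ] at h3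
      exact h3
    have heq := ae_eq_of_ae_le_of_lintegral_le hle hfin hCm'.aemeasurable hCle
    have hCfin : ∫⁻ ω, C ω ∂P ≠ ⊤ := (hCle.trans_lt hfin.lt_top).ne
    have hcXY : Measurable (fun ω => ENNReal.ofReal (c (X ω) (Y ω))) :=
      hcm.comp (hX.prodMk hY)
    have hcr : (fun ω => c (X ω) (Y ω)) = fun ω => (ENNReal.ofReal (c (X ω) (Y ω))).toReal := by
      ext ω; rw [ENNReal.toReal_ofReal (hc0 _ _)]
    have hcfin : ∫⁻ ω, ENNReal.ofReal (c (X ω) (Y ω)) ∂P ≠ ⊤ := by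
      have := hDC univ MeasurableSet.univ
      simp only [Measure.restrict_univ] at this
      rwa [this]
    have hCint : Integrable (fun ω => (C ω).toReal) P :=
      integrable_toReal_of_lintegral_ne_top hCm'.aemeasurable hCfin
    have hce : (fun ω => (C ω).toReal) =ᵐ[P] P[fun ω => c (X ω) (Y ω) | M] := by
      refine ae_eq_condExp_of_forall_setIntegral_eq hM ?_ ?_ ?_ ?_
      · rw [hcr]
        exact integrable_toReal_of_lintegral_ne_top hcXY.aemeasurable hcfin
      · exact fun s _ _ => hCint.integrableOn
      · intro s hs _
        rw [hcr, integral_toReal hCm'.aemeasurable, integral_toReal hcXY.aemeasurable, hDC s hs]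
        · exact Filter.Eventually.of_forall fun ω => ENNReal.ofReal_lt_top
        · exact ae_restrict_of_ae (ae_lt_top hCm' hCfin)
      · exact (Measurable.stronglyMeasurable (mα := M)
          (Measurable.ennreal_toReal hCm)).aestronglyMeasurable
    filter_upwards [hce, heq] with ω a1 a2
    rw [← a1, a2]

lemma general_coupling_aux
    {S : Type*} [TopologicalSpace S] [PolishSpace S] [MeasurableSpace S] [BorelSpace S]
    {Ω : Type*} (M : MeasurableSpace Ω) [mΩ : MeasurableSpace Ω]
    (P : Measure Ω) [IsProbabilityMeasure P]
    (c : S → S → ℝ) (hc0 : ∀ x y, 0 ≤ c x y) (hstar : StarCond c)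
    (X : Ω → S) (hX : Measurable X)
    (x₀ : S) (hXint : ∫⁻ x, ENNReal.ofReal (c x x₀) ∂(P.map X) < ⊤)
    (U : Ω → ℝ) (hUmeas : Measurable U)
    (hUunif : P.map U = volume.restrict (Set.Icc (0:ℝ) 1))
    (hM : M ≤ mΩ)
    (hUindep : Indep (MeasurableSpace.comap U inferInstance)
      (MeasurableSpace.comap X inferInstance ⊔ M) P)
    (κX : Ω → Measure S) (hκprob : ∀ ω, IsProbabilityMeasure (κX ω))
    (hκmeas : ∀ B : Set S, MeasurableSet B → Measurable[M] (fun ω => κX ω B))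
    (hκ : ∀ A : Set Ω, MeasurableSet[M] A → ∀ B : Set S, MeasurableSet B →
      P (A ∩ X ⁻¹' B) = ∫⁻ ω in A, κX ω B ∂P)
    (Q : Ω → Measure S) (hQprob : ∀ ω, IsProbabilityMeasure (Q ω))
    (hQmeas : ∀ B : Set S, MeasurableSet B → Measurable[M] (fun ω => Q ω B))
    (hQint : ∫⁻ ω, ∫⁻ x, ENNReal.ofReal (c x x₀) ∂(Q ω) ∂P < ⊤) :
    ∃ Y : Ω → S,
      Measurable[MeasurableSpace.comap U inferInstance ⊔
        MeasurableSpace.comap X inferInstance ⊔ M] Y ∧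
      (∀ A : Set Ω, MeasurableSet[M] A → ∀ B : Set S, MeasurableSet B →
        P (A ∩ Y ⁻¹' B) = ∫⁻ ω in A, Q ω B ∂P) ∧
      ∀ᵐ ω ∂P, (P[fun ω' => c (X ω') (Y ω') | M]) ω = (lipDist c (κX ω) (Q ω)).toReal := by
  obtain ⟨B, hB, hpi, hgen⟩ := exists_pi_seq S
  let τ : Ω → (ℕ → ℝ≥0∞) × (ℕ → ℝ≥0∞) := fun ω => (fun n => κX ω (B n), fun n => Q ω (B n))
  have hτM : Measurable[M] τ := by
    refine Measurable.prodMk ?_ ?_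
    · exact @measurable_pi_lambda Ω ℕ (fun _ => ℝ≥0∞) M _ _ fun n => hκmeas _ (hB n)
    · exact @measurable_pi_lambda Ω ℕ (fun _ => ℝ≥0∞) M _ _ fun n => hQmeas _ (hB n)
  have hκτ : Measurable[MeasurableSpace.comap τ inferInstance] κX := by
    refine Measurable.measure_of_isPiSystem_of_isProbabilityMeasure hgen hpi ?_
    rintro _ ⟨n, rfl⟩
    exact ((measurable_pi_apply n).comp measurable_fst).comp (comap_measurable τ)
  have hQτ : Measurable[MeasurableSpace.comap τ inferInstance] Q := by
    refine Measurable.measure_of_isPiSystem_of_isProbabilityMeasure hgen hpi ?_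
    rintro _ ⟨n, rfl⟩
    exact ((measurable_pi_apply n).comp measurable_snd).comp (comap_measurable τ)
  have hτle : MeasurableSpace.comap τ inferInstance ≤ M := hτM.comap_le
  let κ : Kernel Ω S := ⟨κX, hκτ.mono (hτle.trans hM) le_rfl⟩
  let ν : Kernel Ω S := ⟨Q, hQτ.mono (hτle.trans hM) le_rfl⟩
  have : IsMarkovKernel κ := ⟨hκprob⟩
  have : IsMarkovKernel ν := ⟨hQprob⟩
  obtain ⟨G, hG, h1, h2⟩ := general_coupling_core (MeasurableSpace.comap τ inferInstance) M
    (MeasurableSpace.comap X inferInstance ⊔ M) P c hc0 hstar X hX x₀ hXint U hUmeas hUunif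
    hτle le_sup_right (sup_le hX.comap_le hM) ((comap_measurable X).mono le_sup_left le_rfl)
    hUindep κ ν hκ hQint τ (comap_measurable τ) (fun s hs => hs) hκτ hQτ
  refine ⟨_, ?_, h1, h2⟩
  refine hG.comp (g := Function.uncurry G)
      (f := fun ω => ((τ ω, X ω), projIcc (0:ℝ) 1 zero_le_one (U ω))) ?_
  refine Measurable.prodMk (Measurable.prodMk ?_ ?_) ?_
  · exact Measurable.mono (ma := M) hτM le_sup_right le_rfl
  · exact (comap_measurable X).mono (le_sup_right.trans le_sup_left) le_rfl
  · exact continuous_projIcc.measurable.comp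
      ((comap_measurable U).mono (le_sup_left.trans le_sup_left) le_rfl)


/-- **General coupling theorem**: if `Ω` is rich enough (there is a uniform random
variable `U` independent of `σ(X) ∨ ℳ`), and `ω ↦ Q_ω` is an `ℳ`-measurable family of
probability measures with the cost integrability, then there is a
`σ(U) ∨ σ(X) ∨ ℳ`-measurable random variable `Y` such that `Q` is a regular conditional
distribution of `Y` given `ℳ` and, `P`-a.s.,
`E[c(X,Y) | ℳ] = sup_{f ∈ Lip_c} |∫ f dP_{X|ℳ} - ∫ f dQ_·|`. -/
theorem general_coupling
    {S : Type*} [TopologicalSpace S] [PolishSpace S] [MeasurableSpace S] [BorelSpace S]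
    {Ω : Type*} [mΩ : MeasurableSpace Ω] (P : Measure Ω) [IsProbabilityMeasure P]
    (c : S → S → ℝ) (hc0 : ∀ x y, 0 ≤ c x y) (hstar : StarCond c)
    (X : Ω → S) (hX : Measurable X)
    (x₀ : S) (hXint : ∫⁻ x, ENNReal.ofReal (c x x₀) ∂(P.map X) < ⊤)
    (U : Ω → ℝ) (hUmeas : Measurable U)
    (hUunif : P.map U = volume.restrict (Set.Icc (0:ℝ) 1))
    (M : MeasurableSpace Ω) (hM : M ≤ mΩ)
    (hUindep : Indep (MeasurableSpace.comap U inferInstance)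
      (MeasurableSpace.comap X inferInstance ⊔ M) P)
    (κX : Ω → Measure S) (hκX : IsRCD P M X κX)
    (Q : Ω → Measure S) (hQprob : ∀ ω, IsProbabilityMeasure (Q ω))
    (hQmeas : ∀ B : Set S, MeasurableSet B → Measurable[M] (fun ω => Q ω B))
    (hQint : ∫⁻ ω, ∫⁻ x, ENNReal.ofReal (c x x₀) ∂(Q ω) ∂P < ⊤) :
    ∃ Y : Ω → S,
      Measurable[MeasurableSpace.comap U inferInstance ⊔
        MeasurableSpace.comap X inferInstance ⊔ M] Y ∧
      IsRCD P M Y Q ∧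
      ∀ᵐ ω ∂P, (P[fun ω' => c (X ω') (Y ω') | M]) ω =
        (⨆ u ∈ LipC c,
          ENNReal.ofReal |∫ x, u x ∂(κX ω) - ∫ x, u x ∂(Q ω)|).toReal := by
  obtain ⟨hκprob, hκmeas, hκ⟩ := hκX
  obtain ⟨Y, h1, h2, h3⟩ := @general_coupling_aux S _ _ _ _ Ω M mΩ P _ c hc0 hstar X hX x₀ hXint U hUmeas hUunif hM
    hUindep κX hκprob hκmeas hκ Q hQprob hQmeas hQint
  exact ⟨Y, h1, ⟨hQprob, hQmeas, h2⟩, h3⟩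

end
end

section
/- Let S be a Polish space, c : S × S → [0,∞) satisfy condition (★), (Ω, 𝒜, P) a probability space, ℳ a sub-σ-algebra of 𝒜, and X an S-valued random variable with ∫ c(x, x₀) dP_X(x) < ∞ for some x₀ ∈ S. Assume there exists a random variable U uniformly distributed on [0,1] and independent of σ(X) ∨ ℳ. Then there exists a σ(U) ∨ σ(X) ∨ ℳ-measurable random variable X* : Ω → S, independent of ℳ and with the same law as X, such that E[c(X, X*)] = τ_c(ℳ, X). -/
open MeasureTheory ProbabilityTheory ENNReal Set

noncomputable section

/-- The law `P_X` of a random variable. -/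
def law {Ω S : Type*} {mΩ : MeasurableSpace Ω} [MeasurableSpace S]
    (P : @Measure Ω mΩ) (X : Ω → S) : Measure S :=
  letI := mΩ
  P.map X

/-- The dependence coefficient
`τ_c(ℳ, X) = E[sup_{f ∈ Lip_c} |∫ f dP_{X|ℳ} - ∫ f dP_X|]`, expressed through a given
regular conditional distribution `κ` of `X` given `ℳ`. -/
def tauC {Ω S : Type*} {mΩ : MeasurableSpace Ω} [TopologicalSpace S] [MeasurableSpace S]
    (c : S → S → ℝ) (P : @Measure Ω mΩ) (κ : Ω → Measure S) (X : Ω → S) : ℝ≥0∞ :=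
  letI := mΩ
  ∫⁻ ω, ⨆ u ∈ LipC c, ENNReal.ofReal |∫ x, u x ∂(κ ω) - ∫ x, u x ∂(law P X)| ∂P


namespace Recon

lemma finite_KR {ι : Type*} [Fintype ι] [Nonempty ι] (d : ι → ι → ℝ) (hd0 : ∀ i, d i i = 0)
    (htri : ∀ i j k, d i k ≤ d i j + d j k) (μ ν : ι → ℝ) (hμ0 : ∀ i, 0 ≤ μ i)
    (hν0 : ∀ i, 0 ≤ ν i) (hμ1 : ∑ i, μ i = 1) (hν1 : ∑ i, ν i = 1) (V : ℝ)
    (hV : ∀ u : ι → ℝ, (∀ i j, u i - u j ≤ d i j) → ∑ i, u i * μ i - ∑ i, u i * ν i ≤ V) :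
    ∃ γ : ι × ι → ℝ, (∀ p, 0 ≤ γ p) ∧ (∀ i, ∑ j, γ (i, j) = μ i) ∧
      (∀ j, ∑ i, γ (i, j) = ν j) ∧ ∑ p, γ p * d p.1 p.2 ≤ V := by
  classical
  let L : (ι × ι → ℝ) →ₗ[ℝ] ((ι → ℝ) × (ι → ℝ) × ℝ) :=
    { toFun := fun γ => (fun i => ∑ j, γ (i, j), fun j => ∑ i, γ (i, j), ∑ p, γ p * d p.1 p.2)
      map_add' := by
        intro x y
        simp only [Pi.add_apply, Finset.sum_add_distrib, add_mul]
        rfl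
      map_smul' := by
        intro a x
        simp only [Pi.smul_apply, smul_eq_mul, RingHom.id_apply, mul_assoc, ← Finset.mul_sum]
        rfl }
  have hLc : Continuous L := L.continuous_of_finiteDimensional
  let A := L '' stdSimplex ℝ (ι × ι)
  let B : Set ((ι → ℝ) × (ι → ℝ) × ℝ) := {μ} ×ˢ ({ν} ×ˢ Iic V)
  by_contra hcon
  have hdisj : Disjoint A B := by
    rw [Set.disjoint_left]
    rintro _ ⟨γ, hγ, rfl⟩ ⟨h1, h2, h3⟩
    exact hcon ⟨γ, hγ.1, fun i => congrFun h1 i, fun j => congrFun h2 j, h3⟩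
  obtain ⟨f, u, v, hfA, huv, hfB⟩ := geometric_hahn_banach_compact_closed
    ((convex_stdSimplex ℝ (ι × ι)).linear_image L) ((isCompact_stdSimplex ℝ (ι × ι)).image hLc)
    ((convex_singleton μ).prod ((convex_singleton ν).prod (convex_Iic V)))
    (isClosed_singleton.prod (isClosed_singleton.prod isClosed_Iic)) hdisj
  set φ : ι → ℝ := fun i => f (Pi.single i 1, 0, 0) with hφ
  set ψ : ι → ℝ := fun i => f (0, Pi.single i 1, 0) with hψ
  set t : ℝ := f (0, 0, 1) with ht
  have hf : ∀ p q r, f (p, q, r) = ∑ i, p i * φ i + ∑ j, q j * ψ j + r * t := by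
    intro p q r
    have e : (p, q, r) = ∑ i, p i • ((Pi.single i 1, 0, 0) : (ι → ℝ) × (ι → ℝ) × ℝ)
        + ∑ i, q i • ((0, Pi.single i 1, 0) : (ι → ℝ) × (ι → ℝ) × ℝ)
        + r • ((0, 0, 1) : (ι → ℝ) × (ι → ℝ) × ℝ) := by
      refine Prod.ext ?_ (Prod.ext ?_ ?_)
      · ext i; simp [Prod.fst_sum, Finset.sum_apply, Pi.single_apply]
      · ext i; simp [Prod.fst_sum, Prod.snd_sum, Finset.sum_apply, Pi.single_apply]
      · simp [Prod.snd_sum]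
    rw [e]
    simp only [map_add, map_sum, map_smul, smul_eq_mul]
    rfl
  have ht0 : t ≤ 0 := by
    by_contra hpos
    push Not at hpos
    have hK := hfB (μ, ν, V) ⟨rfl, rfl, le_refl V⟩
    have := hfB (μ, ν, V - (f (μ, ν, V) - v) / t) ⟨rfl, rfl, by
      simp only [mem_Iic, sub_le_self_iff]
      exact div_nonneg (by linarith) hpos.le⟩
    rw [hf] at this hK
    rw [hf] at this
    have e : (V - (∑ i, μ i * φ i + ∑ j, ν j * ψ j + V * t - v) / t) * t
      = V * t - (∑ i, μ i * φ i + ∑ j, ν j * ψ j + V * t - v) := by field_simp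
    rw [e] at this
    linarith
  have hij : ∀ i j, φ i + ψ j + d i j * t < u := by
    intro i j
    have := hfA (L (Pi.single (i, j) 1)) ⟨_, single_mem_stdSimplex ℝ (i, j), rfl⟩
    have e : L (Pi.single (i, j) 1) = (Pi.single i 1, Pi.single j 1, d i j) := by
      refine Prod.ext ?_ (Prod.ext ?_ ?_)
      · ext k; simp [L, Pi.single_apply, Prod.ext_iff, ite_and]
      · ext k; simp [L, Pi.single_apply, Prod.ext_iff, ite_and]
      · simp [L, Pi.single_apply]
    rw [e, hf] at this
    simpa [Pi.single_apply] using this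
  let w : ι → ℝ := fun i => Finset.univ.inf' Finset.univ_nonempty (fun j => -t * d i j - ψ j)
  have hw1 : ∀ i, φ i - u ≤ w i := by
    intro i
    refine Finset.le_inf' _ _ fun j _ => ?_
    have := hij i j
    linarith [mul_comm t (d i j)]
  have hw2 : ∀ i j, w i ≤ -t * d i j - ψ j := fun i j => Finset.inf'_le _ (Finset.mem_univ j)
  have hw3 : ∀ i k, w i - w k ≤ -t * d i k := by
    intro i k
    obtain ⟨j, -, hj⟩ := Finset.exists_mem_eq_inf' Finset.univ_nonempty (fun j => -t * d k j - ψ j)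
    have h1 := hw2 i j
    have h2 : w k = -t * d k j - ψ j := hj
    have h3 := mul_le_mul_of_nonneg_left (htri i k j) (neg_nonneg.2 ht0)
    rw [h2]; linarith
  have hscale : ∑ i, w i * μ i - ∑ i, w i * ν i ≤ -t * V := by
    rcases ht0.eq_or_lt with h | h
    · have hconst : ∀ i k, w i = w k := fun i k => le_antisymm
        (by have := hw3 i k; rw [h] at this; linarith) (by have := hw3 k i; rw [h] at this; linarith)
      obtain ⟨k⟩ := ‹Nonempty ι›
      simp_rw [fun i => hconst i k, ← Finset.mul_sum, hμ1, hν1, h]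
      simp
    · have hpos : 0 < -t := by linarith
      have := hV (fun i => w i / -t) (fun i j => by
        rw [← sub_div, div_le_iff₀ hpos]; linarith [hw3 i j, mul_comm t (d i j)])
      simp only [div_mul_eq_mul_div, ← Finset.sum_div] at this
      rw [← sub_div, div_le_iff₀ hpos] at this
      linarith
  have hB := hfB (μ, ν, V) ⟨rfl, rfl, le_refl V⟩
  rw [hf] at hB
  have e1 : ∑ i, μ i * φ i - u ≤ ∑ i, w i * μ i := by
    calc ∑ i, μ i * φ i - u = ∑ i, (φ i - u) * μ i := by
          simp_rw [sub_mul, Finset.sum_sub_distrib, ← Finset.mul_sum, hμ1, mul_one]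
          simp_rw [mul_comm]
      _ ≤ _ := Finset.sum_le_sum fun i _ => mul_le_mul_of_nonneg_right (hw1 i) (hμ0 i)
  have e2 : ∑ i, w i * ν i ≤ - ∑ i, ν i * ψ i := by
    rw [← Finset.sum_neg_distrib]
    refine Finset.sum_le_sum fun i _ => ?_
    have := hw2 i i
    rw [hd0] at this
    have := mul_le_mul_of_nonneg_right this (hν0 i)
    linarith [mul_comm (ψ i) (ν i)]
  linarith


lemma glue {S : Type*} [MeasurableSpace S] {ι : Type*} [Fintype ι]
    [MeasurableSpace ι] [MeasurableSingletonClass ι] (q : S → ι) (hq : Measurable q)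
    (μ ν : Measure S) [IsProbabilityMeasure μ] [IsProbabilityMeasure ν]
    (γ : ι × ι → ℝ) (h0 : ∀ p, 0 ≤ γ p) (h1 : ∀ i, ∑ j, γ (i, j) = μ.real (q ⁻¹' {i}))
    (h2 : ∀ j, ∑ i, γ (i, j) = ν.real (q ⁻¹' {j})) :
    ∃ π : Measure (S × S), IsProbabilityMeasure π ∧ π.map Prod.fst = μ ∧ π.map Prod.snd = ν ∧
      ∀ (g : S × S → ℝ≥0∞) (K : ι × ι → ℝ≥0∞), (∀ p, g p ≤ K (q p.1, q p.2)) →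
        ∫⁻ p, g p ∂π ≤ ∑ p, ENNReal.ofReal (γ p) * K p := by
  classical
  let π : Measure (S × S) := ∑ p : ι × ι, ENNReal.ofReal (γ p) •
    ((μ[|q ⁻¹' {p.1}]).prod (ν[|q ⁻¹' {p.2}]))
  have hz1 : ∀ i j, μ (q ⁻¹' {i}) = 0 → γ (i, j) = 0 := by
    intro i j h
    have := h1 i
    rw [measureReal_def, h, ENNReal.toReal_zero, Finset.sum_eq_zero_iff_of_nonneg
      (fun j _ => h0 (i, j))] at this
    exact this j (Finset.mem_univ j)
  have hz2 : ∀ i j, ν (q ⁻¹' {j}) = 0 → γ (i, j) = 0 := by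
    intro i j h
    have := h2 j
    rw [measureReal_def, h, ENNReal.toReal_zero, Finset.sum_eq_zero_iff_of_nonneg
      (fun i _ => h0 (i, j))] at this
    exact this i (Finset.mem_univ i)
  have hfst : π.map Prod.fst = μ := by
    ext A hA
    rw [Measure.map_apply measurable_fst hA]
    have e : (Prod.fst ⁻¹' A : Set (S × S)) = A ×ˢ univ := by ext; simp
    simp only [π, e, Measure.finsetSum_apply, Measure.smul_apply, Measure.prod_prod, smul_eq_mul]
    have : ∀ p : ι × ι, ENNReal.ofReal (γ p) * ((μ[|q ⁻¹' {p.1}]) A * (ν[|q ⁻¹' {p.2}]) univ)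
        = ENNReal.ofReal (γ p) * (μ[|q ⁻¹' {p.1}]) A := by
      rintro ⟨i, j⟩
      by_cases h : ν (q ⁻¹' {j}) = 0
      · simp [hz2 i j h]
      · have := cond_isProbabilityMeasure h
        simp
    simp_rw [this, Fintype.sum_prod_type, ← Finset.sum_mul]
    have hs : ∀ i, ∑ j, ENNReal.ofReal (γ (i, j)) = μ (q ⁻¹' {i}) := fun i => by
      rw [← ENNReal.ofReal_sum_of_nonneg (fun j _ => h0 (i, j)), h1, ofReal_measureReal]
    simp_rw [hs]
    conv_rhs => rw [← sum_meas_smul_cond_fiber hq μ]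
    simp [Measure.finsetSum_apply]
  have hsnd : π.map Prod.snd = ν := by
    ext A hA
    rw [Measure.map_apply measurable_snd hA]
    have e : (Prod.snd ⁻¹' A : Set (S × S)) = univ ×ˢ A := by ext; simp
    simp only [π, e, Measure.finsetSum_apply, Measure.smul_apply, Measure.prod_prod, smul_eq_mul]
    have : ∀ p : ι × ι, ENNReal.ofReal (γ p) * ((μ[|q ⁻¹' {p.1}]) univ * (ν[|q ⁻¹' {p.2}]) A)
        = ENNReal.ofReal (γ p) * (ν[|q ⁻¹' {p.2}]) A := by
      rintro ⟨i, j⟩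
      by_cases h : μ (q ⁻¹' {i}) = 0
      · simp [hz1 i j h]
      · have := cond_isProbabilityMeasure h
        simp
    simp_rw [this, Fintype.sum_prod_type_right, ← Finset.sum_mul]
    have hs : ∀ j, ∑ i, ENNReal.ofReal (γ (i, j)) = ν (q ⁻¹' {j}) := fun j => by
      rw [← ENNReal.ofReal_sum_of_nonneg (fun i _ => h0 (i, j)), h2, ofReal_measureReal]
    simp_rw [hs]
    conv_rhs => rw [← sum_meas_smul_cond_fiber hq ν]
    simp [Measure.finsetSum_apply]
  refine ⟨π, ?_, hfst, hsnd, ?_⟩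
  · constructor
    have : (π.map Prod.fst) univ = 1 := by rw [hfst]; simp
    rwa [Measure.map_apply measurable_fst MeasurableSet.univ, preimage_univ] at this
  · intro g K hg
    simp only [π]
    rw [lintegral_finsetSum_measure]
    refine Finset.sum_le_sum fun p _ => ?_
    rw [lintegral_smul_measure, smul_eq_mul]
    gcongr
    calc ∫⁻ z, g z ∂((μ[|q ⁻¹' {p.1}]).prod (ν[|q ⁻¹' {p.2}]))
        ≤ ∫⁻ z, K p ∂((μ[|q ⁻¹' {p.1}]).prod (ν[|q ⁻¹' {p.2}])) := by
          refine lintegral_mono_ae ?_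
          have a1 := Measure.quasiMeasurePreserving_fst (μ := μ[|q ⁻¹' {p.1}])
            (ν := ν[|q ⁻¹' {p.2}]) |>.ae (ae_cond_mem (hq (measurableSet_singleton p.1)))
          have a2 := Measure.quasiMeasurePreserving_snd (μ := μ[|q ⁻¹' {p.1}])
            (ν := ν[|q ⁻¹' {p.2}]) |>.ae (ae_cond_mem (hq (measurableSet_singleton p.2)))
          filter_upwards [a1, a2] with z b1 b2
          have := hg z
          rw [show q z.1 = p.1 from b1, show q z.2 = p.2 from b2] at this
          exact this
      _ ≤ K p := by
          rw [lintegral_const, ← univ_prod_univ, Measure.prod_prod]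
          calc K p * _ ≤ K p * (1 * 1) := by gcongr <;> exact prob_le_one
            _ = K p := by simp

lemma exists_coupling {S : Type*} [TopologicalSpace S] [PolishSpace S] [MeasurableSpace S]
    [BorelSpace S] [Nonempty S] (c d : S → S → ℝ)
    (hdc : Continuous (fun p : S × S => d p.1 p.2))
    (hd0 : ∀ x, d x x = 0) (hsymm : ∀ x y, d x y = d y x)
    (htri : ∀ x y z, d x z ≤ d x y + d y z) (hbd : ∃ K, ∀ x y, d x y ≤ K)
    (hle : ∀ x y, d x y ≤ c x y)
    {ι : Type*} [Fintype ι] [MeasurableSpace ι] [MeasurableSingletonClass ι]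
    (q : S → ι) (hq : Measurable q) (ε : ℝ) (hε : 0 ≤ ε)
    (hqd : ∀ x y, q x = q y → d x y ≤ ε)
    (μ ν : Measure S) [IsProbabilityMeasure μ] [IsProbabilityMeasure ν] :
    ∃ π : Measure (S × S), IsProbabilityMeasure π ∧ π.map Prod.fst = μ ∧ π.map Prod.snd = ν ∧
      ∫⁻ p, ENNReal.ofReal (d p.1 p.2) ∂π ≤ lipDist c μ ν + ENNReal.ofReal (4 * ε) := by
  classical
  by_cases hfin : lipDist c μ ν = ⊤
  · exact ⟨μ.prod ν, inferInstance, by simp, by simp, by simp [hfin]⟩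
  obtain ⟨K, hK⟩ := hbd
  have hdnn : ∀ x y, 0 ≤ d x y := fun x y => by
    have := htri x y x; rw [hd0, hsymm y x] at this; linarith
  have : Nonempty ι := ⟨q (Classical.arbitrary S)⟩
  let r : ι → S := fun i => if h : ∃ x, q x = i then h.choose else Classical.arbitrary S
  have hr : ∀ x, q (r (q x)) = q x := by
    intro x
    have h : ∃ y, q y = q x := ⟨x, rfl⟩
    simp only [r, dif_pos h]
    exact h.choose_spec
  have hintg : ∀ (m : Measure S) [IsProbabilityMeasure m] (u : ι → ℝ),
      ∑ i, u i * m.real (q ⁻¹' {i}) = ∫ x, u (q x) ∂m := by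
    intro m _ u
    rw [← integral_map (μ := m) hq.aemeasurable (f := u) (by
      exact (measurable_of_finite u).aestronglyMeasurable)]
    have : IsProbabilityMeasure (m.map q) := Measure.isProbabilityMeasure_map hq.aemeasurable
    rw [integral_fintype (Integrable.of_finite)]
    refine Finset.sum_congr rfl fun i _ => ?_
    rw [map_measureReal_apply hq (measurableSet_singleton i), smul_eq_mul, mul_comm]
  have hsum : ∀ (m : Measure S) [IsProbabilityMeasure m], ∑ i, m.real (q ⁻¹' {i}) = 1 := by
    intro m _
    have := hintg m (fun _ => 1)
    simpa using this
  set V := (lipDist c μ ν).toReal + 2 * ε with hVdef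
  have hV : ∀ u : ι → ℝ, (∀ i j, u i - u j ≤ d (r i) (r j)) →
      ∑ i, u i * μ.real (q ⁻¹' {i}) - ∑ i, u i * ν.real (q ⁻¹' {i}) ≤ V := by
    intro u hu
    let w : S → ℝ := fun x => Finset.univ.inf' Finset.univ_nonempty (fun i => u i + d x (r i))
    have hw_le : ∀ x i, w x ≤ u i + d x (r i) := fun x i => Finset.inf'_le _ (Finset.mem_univ i)
    have hw1 : ∀ x y, w x - w y ≤ d x y := by
      intro x y
      obtain ⟨j, -, hj⟩ := Finset.exists_mem_eq_inf' Finset.univ_nonempty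
        (fun i => u i + d y (r i))
      have h2 : w y = u j + d y (r j) := hj
      have := hw_le x j
      have := htri x y (r j)
      linarith
    have hwabs : ∀ x y, |w x - w y| ≤ d x y := fun x y =>
      abs_sub_le_iff.2 ⟨hw1 x y, by rw [hsymm]; exact hw1 y x⟩
    have hwr : ∀ i, w (r i) = u i := by
      intro i
      refine le_antisymm (by have := hw_le (r i) i; rwa [hd0, add_zero] at this) ?_
      refine Finset.le_inf' _ _ fun j _ => ?_
      linarith [hu i j]
    have hwcont : Continuous w := by
      refine Continuous.finset_inf'_apply _ fun i _ => ?_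
      exact continuous_const.add (hdc.comp (continuous_id.prodMk continuous_const))
    have hwb : ∃ M, ∀ x, |w x| ≤ M := by
      obtain ⟨i⟩ := ‹Nonempty ι›
      refine ⟨K + |w (r i)|, fun x => ?_⟩
      have h1 := hwabs x (r i)
      have h2 := hK x (r i)
      have h3 := abs_sub_abs_le_abs_sub (w x) (w (r i))
      linarith
    have hwL : w ∈ LipC c := ⟨hwcont, hwb, fun x y => (hwabs x y).trans (hle x y)⟩
    have hwint : ∀ (m : Measure S) [IsProbabilityMeasure m], Integrable w m := by
      intro m _
      obtain ⟨M, hM⟩ := hwb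
      exact Integrable.of_bound hwcont.aestronglyMeasurable M (Filter.Eventually.of_forall hM)
    have huint : ∀ (m : Measure S) [IsProbabilityMeasure m], Integrable (fun x => u (q x)) m := by
      intro m _
      refine Integrable.of_bound ((measurable_of_finite u).comp hq).aestronglyMeasurable
        (∑ i, |u i|) (Filter.Eventually.of_forall fun x => ?_)
      exact Finset.single_le_sum (f := fun i => |u i|) (fun i _ => abs_nonneg _)
        (Finset.mem_univ (q x))
    have hclose : ∀ x, |u (q x) - w x| ≤ ε := by
      intro x
      rw [← hwr (q x)]
      exact (hwabs _ _).trans (hqd _ _ (hr x))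
    have hl : |∫ x, w x ∂μ - ∫ x, w x ∂ν| ≤ (lipDist c μ ν).toReal := by
      rw [← ENNReal.ofReal_le_iff_le_toReal hfin]
      exact le_iSup₂ (f := fun u (_ : u ∈ LipC c) =>
        ENNReal.ofReal |∫ x, u x ∂μ - ∫ x, u x ∂ν|) w hwL
    have hμ' : ∫ x, u (q x) ∂μ ≤ ∫ x, w x ∂μ + ε := by
      have : ∫ x, (w x + ε) ∂μ = ∫ x, w x ∂μ + ε := by
        rw [integral_add (hwint μ) (integrable_const _)]; simp
      rw [← this]
      exact integral_mono (huint μ) ((hwint μ).add (integrable_const _)) fun x => by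
        have := (abs_le.1 (hclose x)).2
        simp only
        linarith
    have hν' : ∫ x, w x ∂ν ≤ ∫ x, u (q x) ∂ν + ε := by
      have : ∫ x, (u (q x) + ε) ∂ν = ∫ x, u (q x) ∂ν + ε := by
        rw [integral_add (huint ν) (integrable_const _)]; simp
      rw [← this]
      exact integral_mono (hwint ν) ((huint ν).add (integrable_const _)) fun x => by
        have := (abs_le.1 (hclose x)).1
        simp only
        linarith
    rw [hintg, hintg]
    have := (abs_le.1 hl).2
    linarith
  obtain ⟨γ, g0, g1, g2, g3⟩ := finite_KR (fun i j => d (r i) (r j)) (fun i => hd0 _)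
    (fun i j k => htri _ _ _) (fun i => μ.real (q ⁻¹' {i})) (fun i => ν.real (q ⁻¹' {i}))
    (fun i => measureReal_nonneg) (fun i => measureReal_nonneg) (hsum μ) (hsum ν) V hV
  obtain ⟨π, hπ, hπ1, hπ2, hπ3⟩ := glue q hq μ ν γ g0 g1 g2
  refine ⟨π, hπ, hπ1, hπ2, ?_⟩
  refine (hπ3 (fun p => ENNReal.ofReal (d p.1 p.2))
    (fun p => ENNReal.ofReal (d (r p.1) (r p.2) + 2 * ε)) ?_).trans ?_
  · rintro ⟨x, y⟩
    refine ENNReal.ofReal_le_ofReal ?_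
    have h1 := htri x (r (q x)) y
    have h2 := htri (r (q x)) (r (q y)) y
    have h3 := hqd _ _ (hr x)
    have h4 := hqd _ _ (hr y)
    rw [hsymm] at h3
    simp only
    linarith
  · have hγ1 : ∑ p, γ p = 1 := by
      rw [Fintype.sum_prod_type]
      simp_rw [g1]
      exact hsum μ
    calc ∑ p, ENNReal.ofReal (γ p) * ENNReal.ofReal (d (r p.1) (r p.2) + 2 * ε)
        = ENNReal.ofReal (∑ p, γ p * (d (r p.1) (r p.2) + 2 * ε)) := by
          rw [ENNReal.ofReal_sum_of_nonneg]
          · simp_rw [ENNReal.ofReal_mul (g0 _)]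
          · intro p _
            exact mul_nonneg (g0 p) (add_nonneg (hdnn _ _) (by linarith))
      _ ≤ ENNReal.ofReal ((lipDist c μ ν).toReal + 4 * ε) := by
          refine ENNReal.ofReal_le_ofReal ?_
          simp_rw [mul_add, Finset.sum_add_distrib, ← Finset.sum_mul, hγ1]
          linarith
      _ = _ := by
          rw [ENNReal.ofReal_add ENNReal.toReal_nonneg (by linarith), ENNReal.ofReal_toReal hfin]


lemma exists_seq {S : Type*} [TopologicalSpace S] [PolishSpace S] [Nonempty S]
    (c : S → S → ℝ) (hstar : StarCond c) :
    ∃ v : ℕ → S → ℝ, (∀ n, v n ∈ LipC c) ∧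
      ∀ x y, IsLUB (range fun n => |v n x - v n y|) (c x y) := by
  let Φ : (S → ℝ) → (S × S → ℝ) := fun u p => |u p.1 - u p.2|
  have hlub : IsLUB (Φ '' LipC c) (fun p : S × S => c p.1 p.2) := by
    constructor
    · rintro _ ⟨u, hu, rfl⟩ p
      exact hu.2.2 p.1 p.2
    · intro g hg p
      show c p.1 p.2 ≤ g p
      rw [hstar p.1 p.2]
      by_cases h : (LipC c).Nonempty
      · refine csSup_le ?_ ?_
        · obtain ⟨u, hu⟩ := h
          exact ⟨_, u, hu, rfl⟩
        · rintro _ ⟨u, hu, rfl⟩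
          exact hg ⟨u, hu, rfl⟩ p
      · exfalso
        have h0 : ∀ x y, c x y = 0 := by
          intro x y
          rw [hstar x y]
          have : {r : ℝ | ∃ u ∈ LipC c, r = |u x - u y|} = ∅ := by
            ext r
            simp only [mem_ofPred_eq, mem_empty_iff_false, iff_false]
            rintro ⟨u, hu, -⟩
            exact h ⟨u, hu⟩
          rw [this, Real.sSup_empty]
        exact h ⟨fun _ => 0, continuous_const, ⟨0, by simp⟩, fun x y => by simp [h0]⟩
  obtain ⟨F, hF, hFc, hFlub⟩ := exists_countable_lowerSemicontinuous_isLUB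
    (by
      rintro _ ⟨u, hu, rfl⟩
      have := hu.1
      exact Continuous.lowerSemicontinuous (by simp only [Φ]; fun_prop)) hlub
  have hne : F.Nonempty := by
    by_contra h
    rw [not_nonempty_iff_eq_empty] at h
    subst h
    have := hFlub.2 (show (fun p : S × S => c p.1 p.2 - 1) ∈ upperBounds ∅ by simp)
    have := this (Classical.arbitrary S, Classical.arbitrary S)
    simp only at this
    linarith
  obtain ⟨f, rfl⟩ := hFc.exists_eq_range hne
  have hf : ∀ n, ∃ u ∈ LipC c, Φ u = f n := fun n => hF ⟨n, rfl⟩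
  choose v hv hvf using hf
  refine ⟨v, hv, fun x y => ?_⟩
  have := (isLUB_pi.1 hFlub) (x, y)
  rw [← range_comp] at this
  have e : (fun n => |v n x - v n y|) = Function.eval (x, y) ∘ f := by
    funext n
    exact congrFun (hvf n) (x, y)
  rw [e]
  exact this

/-- The approximating pseudo-metrics. -/
def dN {S : Type*} (v : ℕ → S → ℝ) (n : ℕ) (x y : S) : ℝ :=
  (Finset.range (n + 1)).sup' Finset.nonempty_range_add_one (fun i => |v i x - v i y|)

section dN
variable {S : Type*} (v : ℕ → S → ℝ)

lemma dN_le_iff {n : ℕ} {x y : S} {r : ℝ} :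
    dN v n x y ≤ r ↔ ∀ i ≤ n, |v i x - v i y| ≤ r := by
  simp [dN, Finset.sup'_le_iff]

lemma le_dN {n i : ℕ} (hi : i ≤ n) (x y : S) : |v i x - v i y| ≤ dN v n x y :=
  (dN_le_iff v).1 le_rfl i hi

lemma dN_nonneg (n : ℕ) (x y : S) : 0 ≤ dN v n x y :=
  (abs_nonneg _).trans (le_dN v (Nat.zero_le n) x y)

lemma dN_self (n : ℕ) (x : S) : dN v n x x = 0 :=
  le_antisymm ((dN_le_iff v).2 (by simp)) (dN_nonneg v n x x)

lemma dN_symm (n : ℕ) (x y : S) : dN v n x y = dN v n y x := by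
  simp only [dN, abs_sub_comm]

lemma dN_tri (n : ℕ) (x y z : S) : dN v n x z ≤ dN v n x y + dN v n y z := by
  rw [dN_le_iff]
  intro i hi
  exact (abs_sub_le _ (v i y) _).trans (add_le_add (le_dN v hi _ _) (le_dN v hi _ _))

lemma dN_mono {m n : ℕ} (h : m ≤ n) (x y : S) : dN v m x y ≤ dN v n x y :=
  (dN_le_iff v).2 fun _ hi => le_dN v (hi.trans h) x y

lemma dN_cont [TopologicalSpace S] (hv : ∀ n, Continuous (v n)) (n : ℕ) :
    Continuous (fun p : S × S => dN v n p.1 p.2) := by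
  refine Continuous.finset_sup'_apply _ fun i _ => ?_
  have := hv i
  fun_prop

lemma dN_bdd (hv : ∀ n, ∃ M, ∀ x, |v n x| ≤ M) (n : ℕ) : ∃ K, ∀ x y, dN v n x y ≤ K := by
  choose M hM using hv
  refine ⟨∑ i ∈ Finset.range (n + 1), 2 * |M i|, fun x y => ?_⟩
  rw [dN_le_iff]
  intro i hi
  calc |v i x - v i y| ≤ |v i x| + |v i y| := abs_sub _ _
    _ ≤ 2 * |M i| := by linarith [hM i x, hM i y, le_abs_self (M i)]
    _ ≤ _ := Finset.single_le_sum (f := fun i => 2 * |M i|) (fun i _ => by positivity)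
        (Finset.mem_range.2 (by omega))

lemma dN_partition [MeasurableSpace S] (hm : ∀ n, Measurable (v n))
    (hv : ∀ n, ∃ M, ∀ x, |v n x| ≤ M) (n : ℕ) (ε : ℝ) (hε : 0 < ε) :
    ∃ (Q : S → (Fin (n + 1) → ℤ)), Measurable Q ∧ (range Q).Finite ∧
      ∀ x y, Q x = Q y → dN v n x y ≤ ε := by
  choose M hM using hv
  refine ⟨fun x i => ⌊v i x / ε⌋, ?_, ?_, ?_⟩
  · exact measurable_pi_lambda _ fun i => ((hm i).div_const ε).floor
  · refine (Set.Finite.pi (fun i : Fin (n + 1) =>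
      finite_Icc (⌊-M i / ε⌋) (⌊M i / ε⌋))).subset ?_
    rintro _ ⟨x, rfl⟩ i _
    have := abs_le.1 (hM i x)
    exact ⟨Int.floor_le_floor (by gcongr; exact this.1), Int.floor_le_floor (by gcongr; exact this.2)⟩
  · intro x y h
    rw [dN_le_iff]
    intro i hi
    have h1 := congrFun h ⟨i, by omega⟩
    have h2 := Int.abs_sub_lt_one_of_floor_eq_floor h1
    simp only at h2
    rw [← sub_div, abs_div, abs_of_pos hε, div_lt_one hε] at h2
    exact h2.le

end dN

lemma iSup_dN {S : Type*} (c : S → S → ℝ) (v : ℕ → S → ℝ)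
    (hlub : ∀ x y, IsLUB (range fun n => |v n x - v n y|) (c x y)) (x y : S) :
    ENNReal.ofReal (c x y) = ⨆ n, ENNReal.ofReal (dN v n x y) := by
  refine le_antisymm ?_ (iSup_le fun n => ENNReal.ofReal_le_ofReal
    ((dN_le_iff v).2 fun i _ => (hlub x y).1 ⟨i, rfl⟩))
  refine le_of_forall_lt fun a ha => ?_
  have ha' : a ≠ ⊤ := ha.ne_top
  rw [ENNReal.lt_ofReal_iff_toReal_lt ha'] at ha
  obtain ⟨_, ⟨n, rfl⟩, h, -⟩ := (hlub x y).exists_between ha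
  refine lt_of_lt_of_le ?_ (le_iSup _ n)
  rw [ENNReal.lt_ofReal_iff_toReal_lt ha']
  exact h.trans_le (le_dN v le_rfl x y)

lemma measurable_c {S : Type*} [TopologicalSpace S] [PolishSpace S] [MeasurableSpace S]
    [BorelSpace S] (c : S → S → ℝ) (v : ℕ → S → ℝ) (hv : ∀ n, Continuous (v n))
    (hlub : ∀ x y, IsLUB (range fun n => |v n x - v n y|) (c x y)) :
    Measurable (fun p : S × S => ENNReal.ofReal (c p.1 p.2)) := by
  simp_rw [iSup_dN c v hlub]
  exact Measurable.iSup fun n => (dN_cont v hv n).measurable.ennreal_ofReal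

lemma exists_coupling_dN {S : Type*} [TopologicalSpace S] [PolishSpace S] [MeasurableSpace S]
    [BorelSpace S] [Nonempty S] (c : S → S → ℝ) (v : ℕ → S → ℝ) (hv : ∀ n, v n ∈ LipC c)
    (n : ℕ) (ε : ℝ) (hε : 0 < ε)
    (μ ν : Measure S) [IsProbabilityMeasure μ] [IsProbabilityMeasure ν] :
    ∃ π : Measure (S × S), IsProbabilityMeasure π ∧ π.map Prod.fst = μ ∧ π.map Prod.snd = ν ∧
      ∫⁻ p, ENNReal.ofReal (dN v n p.1 p.2) ∂π ≤ lipDist c μ ν + ENNReal.ofReal (4 * ε) := by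
  obtain ⟨Q, hQ, hfin, hQd⟩ := dN_partition v (fun n => (hv n).1.measurable)
    (fun n => (hv n).2.1) n ε hε
  have := hfin.fintype
  exact exists_coupling c (dN v n) (dN_cont v (fun n => (hv n).1) n) (dN_self v n) (dN_symm v n)
    (dN_tri v n) (dN_bdd v (fun n => (hv n).2.1) n)
    (fun x y => (dN_le_iff v).2 fun i _ => (hv i).2.2 x y) (ι := range Q)
    (rangeFactorization Q) (hQ.subtype_mk) ε hε.le
    (fun x y h => hQd x y (by simpa [rangeFactorization] using congrArg Subtype.val h)) μ ν


lemma cyl_kernel {S : Type*} [TopologicalSpace S] [PolishSpace S] [MeasurableSpace S]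
    [BorelSpace S] [Nonempty S] (c : S → S → ℝ) (v : ℕ → S → ℝ) (hv : ∀ n, v n ∈ LipC c)
    (n : ℕ) (ε : ℝ) (hε : 0 < ε) {T : Type*} [MeasurableSpace T] (l : Measure T)
    [IsProbabilityMeasure l] (κ : Kernel T S) [IsMarkovKernel κ] (ν : Measure S)
    [IsProbabilityMeasure ν] (C : Set T) (hC : MeasurableSet C) :
    ∃ η : Kernel S S, IsMarkovKernel η ∧
      (∀ B, MeasurableSet B → ∫⁻ w in C, ∫⁻ x, η x B ∂κ w ∂l = l C * ν B) ∧
      ∫⁻ w in C, ∫⁻ x, ∫⁻ y, ENNReal.ofReal (dN v n x y) ∂η x ∂κ w ∂l ≤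
        ∫⁻ w in C, lipDist c (κ w) ν ∂l + l C * ENNReal.ofReal (4 * ε) := by
  by_cases h0 : l C = 0
  · refine ⟨Kernel.const S ν, inferInstance, fun B hB => ?_, ?_⟩
    · rw [Measure.restrict_eq_zero.2 h0]; simp [h0]
    · rw [Measure.restrict_eq_zero.2 h0]; simp
  have hfin : l C ≠ ⊤ := measure_ne_top _ _
  let μC : Measure S := ((l.restrict C) ⊗ₘ κ).snd
  have hμC : ∀ g : S → ℝ≥0∞, Measurable g →
      ∫⁻ x, g x ∂μC = ∫⁻ w in C, ∫⁻ x, g x ∂κ w ∂l := by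
    intro g hg
    rw [show μC = ((l.restrict C) ⊗ₘ κ).map Prod.snd from rfl, lintegral_map hg measurable_snd,
      Measure.lintegral_compProd (by fun_prop)]
  have huniv : μC univ = l C := by
    have := hμC (fun _ => 1) measurable_const
    simpa using this
  let μ : Measure S := (l C)⁻¹ • μC
  have hμ : IsProbabilityMeasure μ := ⟨by
    simp [μ, huniv, ENNReal.inv_mul_cancel h0 hfin]⟩
  have hμμ : ∀ g : S → ℝ≥0∞, Measurable g →
      ∫⁻ w in C, ∫⁻ x, g x ∂κ w ∂l = l C * ∫⁻ x, g x ∂μ := by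
    intro g hg
    rw [← hμC g hg, lintegral_smul_measure, smul_eq_mul, ← mul_assoc,
      ENNReal.mul_inv_cancel h0 hfin, one_mul]
  obtain ⟨π, hπ, h1, h2, h3⟩ := exists_coupling_dN c v hv n ε hε μ ν
  have hdis : π.fst ⊗ₘ π.condKernel = π := π.disintegrate π.condKernel
  have hgen : ∀ g : S × S → ℝ≥0∞, Measurable g →
      ∫⁻ w in C, ∫⁻ x, ∫⁻ y, g (x, y) ∂π.condKernel x ∂κ w ∂l = l C * ∫⁻ p, g p ∂π := by
    intro g hg
    have hm : Measurable fun x => ∫⁻ y, g (x, y) ∂π.condKernel x :=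
      hg.lintegral_kernel_prod_right'
    rw [hμμ _ hm]
    conv_rhs => rw [← hdis]
    rw [Measure.lintegral_compProd hg]
    congr 2
    exact h1.symm
  refine ⟨π.condKernel, inferInstance, fun B hB => ?_, ?_⟩
  · have := hgen (fun p => B.indicator 1 p.2)
      ((measurable_one.indicator hB).comp measurable_snd)
    simp only [lintegral_indicator_one hB] at this
    rw [this, ← h2, Measure.map_apply measurable_snd hB]
    congr 1
    rw [← lintegral_indicator_one (measurable_snd hB)]
    rfl
  · rw [hgen (fun p => ENNReal.ofReal (dN v n p.1 p.2))
      (dN_cont v (fun n => (hv n).1) n).measurable.ennreal_ofReal]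
    refine (mul_le_mul_right h3 (l C)).trans ?_
    rw [mul_add]
    gcongr
    rw [lipDist, ENNReal.mul_iSup]
    refine iSup_le fun u => ?_
    rw [ENNReal.mul_iSup]
    refine iSup_le fun hu => ?_
    obtain ⟨K, hK⟩ := hu.2.1
    have hintg : ∀ (m : Measure S) [IsFiniteMeasure m], Integrable u m := fun m _ =>
      Integrable.of_bound hu.1.measurable.aestronglyMeasurable K (Filter.Eventually.of_forall hK)
    have hsm : StronglyMeasurable u := hu.1.measurable.stronglyMeasurable
    have hsm2 : StronglyMeasurable fun w => ∫ x, u x ∂κ w :=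
      (hsm.comp_measurable measurable_snd).integral_kernel_prod_right' (κ := κ)
    have hI : ∫ x, u x ∂μC = ∫ w in C, ∫ x, u x ∂κ w ∂l := by
      rw [show μC = ((l.restrict C) ⊗ₘ κ).map Prod.snd from rfl,
        integral_map measurable_snd.aemeasurable hsm.aestronglyMeasurable,
        Measure.integral_compProd]
      exact Integrable.of_bound (hsm.comp_measurable measurable_snd).aestronglyMeasurable K
        (Filter.Eventually.of_forall fun p => hK p.2)
    have hintg2 : IntegrableOn (fun w => ∫ x, u x ∂κ w) C l := by
      refine Integrable.of_bound hsm2.aestronglyMeasurable K (Filter.Eventually.of_forall fun w => ?_)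
      refine (norm_integral_le_of_norm_le_const (Filter.Eventually.of_forall hK)).trans ?_
      simp
    have hI2 : (l C).toReal * (∫ x, u x ∂μ - ∫ x, u x ∂ν)
        = ∫ w in C, (∫ x, u x ∂κ w - ∫ x, u x ∂ν) ∂l := by
      rw [integral_sub hintg2 (integrable_const _), ← hI, integral_smul_measure, mul_sub,
        smul_eq_mul, ← mul_assoc, ← ENNReal.toReal_mul, ENNReal.mul_inv_cancel h0 hfin]
      simp [Measure.real]
    calc l C * ENNReal.ofReal |∫ x, u x ∂μ - ∫ x, u x ∂ν|
        = ENNReal.ofReal |(l C).toReal * (∫ x, u x ∂μ - ∫ x, u x ∂ν)| := by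
          rw [abs_mul, abs_of_nonneg ENNReal.toReal_nonneg,
            ENNReal.ofReal_mul ENNReal.toReal_nonneg, ENNReal.ofReal_toReal hfin]
      _ = ‖∫ w in C, (∫ x, u x ∂κ w - ∫ x, u x ∂ν) ∂l‖ₑ := by
          rw [hI2, Real.enorm_eq_ofReal_abs]
      _ ≤ ∫⁻ w in C, ‖∫ x, u x ∂κ w - ∫ x, u x ∂ν‖ₑ ∂l := enorm_integral_le_lintegral_enorm _
      _ ≤ _ := by
          refine lintegral_mono fun w => ?_
          rw [Real.enorm_eq_ofReal_abs]
          exact le_iSup₂_of_le u hu le_rfl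

lemma step_n {S : Type*} [TopologicalSpace S] [PolishSpace S] [MeasurableSpace S]
    [BorelSpace S] [Nonempty S] (c : S → S → ℝ) (v : ℕ → S → ℝ) (hv : ∀ n, v n ∈ LipC c)
    (n : ℕ) (ε : ℝ) (hε : 0 < ε) {T : Type*} [MeasurableSpace T] (l : Measure T)
    [IsProbabilityMeasure l] (κ : Kernel T S) [IsMarkovKernel κ] (ν : Measure S)
    [IsProbabilityMeasure ν] {ι : Type*} [Finite ι] [MeasurableSpace ι]
    [MeasurableSingletonClass ι] (a : T → ι) (ha : Measurable a) :
    ∃ η : Kernel (T × S) S, IsMarkovKernel η ∧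
      (∀ (A : Set ι) (B : Set S), MeasurableSet B →
        ∫⁻ w in a ⁻¹' A, ∫⁻ x, η (w, x) B ∂κ w ∂l = l (a ⁻¹' A) * ν B) ∧
      ∫⁻ w, ∫⁻ x, ∫⁻ y, ENNReal.ofReal (dN v n x y) ∂η (w, x) ∂κ w ∂l ≤
        ∫⁻ w, lipDist c (κ w) ν ∂l + ENNReal.ofReal (4 * ε) := by
  classical
  have := Fintype.ofFinite ι
  have hCm : ∀ i, MeasurableSet (a ⁻¹' {i}) := fun i => ha (measurableSet_singleton i)
  choose η hη h1 h2 using fun i => cyl_kernel c v hv n ε hε l κ ν (a ⁻¹' {i}) (hCm i)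
  let η0 : Kernel (ι × S) S := ⟨fun p => η p.1 p.2,
    measurable_from_prod_countable_right fun i => (η i).measurable⟩
  let η' : Kernel (T × S) S := η0.comap (fun p => (a p.1, p.2)) (by fun_prop)
  have hη' : ∀ w x, η' (w, x) = η (a w) x := fun w x => rfl
  have hdec : ∀ (A : Set ι) (f : T → ℝ≥0∞),
      ∫⁻ w in a ⁻¹' A, f w ∂l = ∑ i : A, ∫⁻ w in a ⁻¹' {(i : ι)}, f w ∂l := by
    intro A f
    have : a ⁻¹' A = ⋃ i : A, a ⁻¹' {(i : ι)} := by ext w; simp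
    rw [this, lintegral_iUnion (fun i => hCm _), tsum_fintype]
    intro i j hij
    refine Disjoint.preimage _ ?_
    simpa using fun h => hij (Subtype.ext h)
  have hcongr : ∀ (F : ι → T → ℝ≥0∞) (i : ι),
      ∫⁻ w in a ⁻¹' {i}, F (a w) w ∂l = ∫⁻ w in a ⁻¹' {i}, F i w ∂l := by
    intro F i
    refine setLIntegral_congr_fun (hCm i) fun w hw => ?_
    have : a w = i := hw
    simp only [this]
  refine ⟨η', ⟨fun p => (hη _).1 _⟩, fun A B hB => ?_, ?_⟩
  · rw [hdec]
    simp_rw [hη']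
    have := fun i : A => hcongr (fun i w => ∫⁻ x, η i x B ∂κ w) i
    simp_rw [this, h1 _ B hB, ← Finset.sum_mul]
    congr 1
    have := hdec A 1
    simpa using this.symm
  · have e1 := hdec univ fun w => ∫⁻ x, ∫⁻ y, ENNReal.ofReal (dN v n x y) ∂η' (w, x) ∂κ w
    have e2 := hdec univ fun w => lipDist c (κ w) ν
    have e3 := hdec univ 1
    simp only [preimage_univ, setLIntegral_univ, Pi.one_apply, lintegral_const, measure_univ,
      one_mul, MeasurableSet.univ, Measure.restrict_apply, univ_inter] at e1 e2 e3
    rw [e1, e2, ← one_mul (ENNReal.ofReal (4 * ε)), e3, Finset.sum_mul, ← Finset.sum_add_distrib]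
    refine Finset.sum_le_sum fun i _ => ?_
    simp_rw [hη']
    rw [hcongr (fun i w => ∫⁻ x, ∫⁻ y, ENNReal.ofReal (dN v n x y) ∂η i x ∂κ w)]
    exact h2 i


lemma T_level {S : Type*} [TopologicalSpace S] [PolishSpace S] [MeasurableSpace S]
    [BorelSpace S] [Nonempty S] (c : S → S → ℝ) (v : ℕ → S → ℝ) (hv : ∀ n, v n ∈ LipC c)
    (hlub : ∀ x y, IsLUB (range fun n => |v n x - v n y|) (c x y))
    (l : Measure (ℕ → Bool)) [IsProbabilityMeasure l]
    (κ : Kernel (ℕ → Bool) S) [IsMarkovKernel κ] (ν : Measure S)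
    [IsProbabilityMeasure ν] :
    ∃ η : Kernel ((ℕ → Bool) × S) S, IsMarkovKernel η ∧
      (∀ᵐ w ∂l, (κ ⊗ₖ η).snd w = ν) ∧
      ∫⁻ w, ∫⁻ x, ∫⁻ y, ENNReal.ofReal (c x y) ∂η (w, x) ∂κ w ∂l ≤
        ∫⁻ w, lipDist c (κ w) ν ∂l := by
  have : PolishSpace (ℕ → Bool) :=
    @instPolishSpaceOfSeparableSpaceOfIsCompletelyMetrizableSpace _ _ inferInstance
      TopologicalSpace.IsCompletelyMetrizableSpace.pi_countable
  have : ∀ s : Finset ℕ, PolishSpace (s → Bool) := fun s =>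
    @instPolishSpaceOfSeparableSpaceOfIsCompletelyMetrizableSpace _ _ inferInstance
      TopologicalSpace.IsCompletelyMetrizableSpace.pi_countable
  have hpos : ∀ n : ℕ, 0 < 1 / ((n : ℝ) + 1) := fun n => by positivity
  choose η hη h1 h2 using fun n : ℕ => step_n c v hv n (1 / ((n : ℝ) + 1)) (hpos n) l κ ν
    ((Finset.range n).restrict (π := fun _ : ℕ => Bool)) (by fun_prop)
  let ρ : Measure ((ℕ → Bool) × S) := l ⊗ₘ κ
  let Q : ℕ → Measure (((ℕ → Bool) × S) × S) := fun n => ρ ⊗ₘ η n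
  have hQint : ∀ n (g : ((ℕ → Bool) × S) × S → ℝ≥0∞), Measurable g →
      ∫⁻ p, g p ∂Q n = ∫⁻ w, ∫⁻ x, ∫⁻ y, g ((w, x), y) ∂η n (w, x) ∂κ w ∂l := by
    intro n g hg
    rw [Measure.lintegral_compProd hg, Measure.lintegral_compProd]
    exact hg.lintegral_kernel_prod_right'
  have hQrect : ∀ n (A : Set (ℕ → Bool)) (B : Set S), MeasurableSet A → MeasurableSet B →
      Q n {p | p.1.1 ∈ A ∧ p.2 ∈ B} = ∫⁻ w in A, ∫⁻ x, η n (w, x) B ∂κ w ∂l := by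
    intro n A B hA hB
    have hm : MeasurableSet {p : ((ℕ → Bool) × S) × S | p.1.1 ∈ A ∧ p.2 ∈ B} :=
      (measurable_fst.comp measurable_fst hA).inter (measurable_snd hB)
    rw [← lintegral_indicator_one hm, hQint n _ (measurable_one.indicator hm),
      ← lintegral_indicator hA]
    refine lintegral_congr fun w => ?_
    by_cases hw : w ∈ A
    · rw [indicator_of_mem hw]
      refine lintegral_congr fun x => ?_
      rw [← lintegral_indicator_one hB]
      refine lintegral_congr fun y => ?_
      by_cases hy : y ∈ B <;> simp [indicator, hw, hy]
    · rw [indicator_of_notMem hw]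
      simp [indicator, hw]
  have hQs : ∀ n (s : Finset ℕ), s ⊆ Finset.range n →
      (Q n).map (fun p => (s.restrict (π := fun _ : ℕ => Bool) p.1.1, p.2)) =
        (l.map (s.restrict (π := fun _ : ℕ => Bool))).prod ν := by
    intro n s hs
    have hsm : Measurable (s.restrict (π := fun _ : ℕ => Bool)) := by fun_prop
    have := Measure.isProbabilityMeasure_map (μ := l) hsm.aemeasurable
    symm
    refine Measure.prod_eq fun A B hA hB => ?_
    rw [Measure.map_apply (by fun_prop) (hA.prod hB), Measure.map_apply hsm hA]
    have e1 := hQrect n (s.restrict (π := fun _ : ℕ => Bool) ⁻¹' A) B (hsm hA) hB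
    have e2 := h1 n (Finset.restrict₂ (π := fun _ : ℕ => Bool) hs ⁻¹' A) B hB
    rw [← preimage_comp, Finset.restrict₂_comp_restrict] at e2
    rw [← e2, ← e1]
    rfl
  have hQprob : ∀ n, IsProbabilityMeasure (Q n) := fun n => inferInstance
  have hQfst : ∀ n, (Q n).fst = ρ := fun n => Measure.fst_compProd _ _
  have hQsnd : ∀ n, (Q n).snd = ν := by
    intro n
    ext B hB
    have e1 := hQrect n univ B .univ hB
    have e2 := h1 n univ B hB
    rw [preimage_univ] at e2
    rw [e2] at e1
    rw [Measure.snd_apply hB]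
    simp only [mem_univ, true_and, measure_univ, one_mul] at e1
    exact e1
  let q : ℕ → ProbabilityMeasure (((ℕ → Bool) × S) × S) := fun n => ⟨Q n, hQprob n⟩
  have htight : IsTightMeasureSet {x | ∃ μ ∈ range q, (μ : Measure (((ℕ → Bool) × S) × S)) = x} := by
    refine IsTightMeasureSet.prodMk ?_ ?_
    · refine (isTightMeasureSet_singleton (μ := ρ)).subset ?_
      rintro _ ⟨_, ⟨_, ⟨n, rfl⟩, rfl⟩, rfl⟩
      exact hQfst n
    · refine (isTightMeasureSet_singleton (μ := ν)).subset ?_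
      rintro _ ⟨_, ⟨_, ⟨n, rfl⟩, rfl⟩, rfl⟩
      exact hQsnd n
  have hcomp := isCompact_closure_of_isTightMeasureSet htight
  obtain ⟨q', -, hq'⟩ := hcomp.ultrafilter_le_nhds ((Filter.hyperfilter ℕ).map q) (by
    rw [Filter.le_principal_iff]
    exact Filter.mem_of_superset (Filter.range_mem_map) subset_closure)
  have hlim : Filter.Tendsto q (Filter.hyperfilter ℕ) (nhds q') := hq'
  have hev : ∀ k : ℕ, ∀ᶠ n in (Filter.hyperfilter ℕ : Filter ℕ), k ≤ n := fun k =>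
    Nat.hyperfilter_le_atTop (Filter.eventually_ge_atTop k)
  have hmap : ∀ {Y : Type _} [TopologicalSpace Y] [PolishSpace Y] [MeasurableSpace Y]
      [BorelSpace Y] (g : ((ℕ → Bool) × S) × S → Y) (hg : Continuous g) (hgm : Measurable g)
      (m : Measure Y)
      (k : ℕ) (h : ∀ n, k ≤ n → (Q n).map g = m), (q' : Measure _).map g = m := by
    intro Y _ _ _ _ g hg hgm m k h
    have e := ProbabilityMeasure.tendsto_map_of_tendsto_of_continuous q q' hlim hg
    have hm : IsProbabilityMeasure m := by
      rw [← h k le_rfl]; exact Measure.isProbabilityMeasure_map hgm.aemeasurable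
    have e' : Filter.Tendsto (fun n => (q n).map hg.measurable.aemeasurable)
        (Filter.hyperfilter ℕ : Filter ℕ) (nhds (⟨m, hm⟩ : ProbabilityMeasure Y)) := by
      refine tendsto_const_nhds.congr' ?_
      filter_upwards [hev k] with n hn
      exact Subtype.ext (h n hn).symm
    have := tendsto_nhds_unique e e'
    exact congrArg Subtype.val this
  let Q' : Measure (((ℕ → Bool) × S) × S) := q'
  have hQ'fst : Q'.fst = ρ := hmap Prod.fst continuous_fst measurable_fst ρ 0 fun n _ => hQfst n
  have hQ's : ∀ s : Finset ℕ,
      Q'.map (fun p => (s.restrict (π := fun _ : ℕ => Bool) p.1.1, p.2)) =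
        (l.map (s.restrict (π := fun _ : ℕ => Bool))).prod ν := by
    intro s
    refine hmap _ ?_ (by fun_prop) _ (s.sup id + 1) fun n hn => hQs n s ?_
    · exact ((Finset.continuous_restrict s).comp (continuous_fst.comp continuous_fst)).prodMk
        continuous_snd
    · intro i hi
      have : i ≤ s.sup id := Finset.le_sup (f := id) hi
      simp; omega
  have hQ'prod : Q'.map (fun p => (p.1.1, p.2)) = l.prod ν := by
    symm
    refine Measure.prod_eq_generateFrom (C := measurableCylinders fun _ : ℕ => Bool)
      (D := {B | MeasurableSet B}) generateFrom_measurableCylinders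
      MeasurableSpace.generateFrom_measurableSet isPiSystem_measurableCylinders
      MeasurableSpace.isPiSystem_measurableSet
      ⟨fun _ => univ, fun _ => univ_mem_measurableCylinders _, fun _ => measure_lt_top _ _,
        iUnion_const _⟩ ν.toFiniteSpanningSetsIn ?_
    intro A hA B hB
    obtain ⟨s, A', hA', rfl⟩ := (mem_measurableCylinders _).1 hA
    have hsm : Measurable (s.restrict (π := fun _ : ℕ => Bool)) := by fun_prop
    have := Measure.isProbabilityMeasure_map (μ := l) hsm.aemeasurable
    have e := congrArg (fun m => m (A' ×ˢ B)) (hQ's s)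
    beta_reduce at e
    rw [Measure.prod_prod, Measure.map_apply hsm hA',
      Measure.map_apply (by fun_prop) (hA'.prod hB)] at e
    have hcyl : MeasurableSet (cylinder s A') := hsm hA'
    rw [Measure.map_apply (by fun_prop) (hcyl.prod hB)]
    exact e
  have hbound : ∀ m, ∫⁻ p, ENNReal.ofReal (dN v m p.1.2 p.2) ∂Q' ≤ ∫⁻ w, lipDist c (κ w) ν ∂l := by
    intro m
    have hcont : Continuous fun p : ((ℕ → Bool) × S) × S => dN v m p.1.2 p.2 :=
      (dN_cont v (fun n => (hv n).1) m).comp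
        (((continuous_snd.comp continuous_fst)).prodMk continuous_snd)
    obtain ⟨K, hK⟩ := dN_bdd v (fun n => (hv n).2.1) m
    let f : BoundedContinuousFunction (((ℕ → Bool) × S) × S) NNReal :=
      BoundedContinuousFunction.mkOfBound
        ⟨fun p => Real.toNNReal (dN v m p.1.2 p.2), continuous_real_toNNReal.comp hcont⟩ K (by
          intro p p'
          simp only [ContinuousMap.coe_mk, NNReal.dist_eq, Real.coe_toNNReal _ (dN_nonneg v m _ _)]
          have a1 := hK p.1.2 p.2
          have a2 := hK p'.1.2 p'.2
          have a3 := dN_nonneg v m p.1.2 p.2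
          have a4 := dN_nonneg v m p'.1.2 p'.2
          rw [abs_le]; constructor <;> linarith)
    have e1 := ProbabilityMeasure.tendsto_iff_forall_lintegral_tendsto.1 hlim f
    have e2 : Filter.Tendsto (fun n : ℕ => ∫⁻ w, lipDist c (κ w) ν ∂l +
        ENNReal.ofReal (4 * (1 / ((n : ℝ) + 1)))) (Filter.hyperfilter ℕ : Filter ℕ)
        (nhds (∫⁻ w, lipDist c (κ w) ν ∂l)) := by
      have e3 : Filter.Tendsto (fun n : ℕ => ENNReal.ofReal (4 * (1 / ((n : ℝ) + 1))))
          Filter.atTop (nhds 0) := by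
        have := (tendsto_one_div_add_atTop_nhds_zero_nat (𝕜 := ℝ)).const_mul 4
        simpa using ENNReal.tendsto_ofReal this
      have := (tendsto_const_nhds (x := ∫⁻ w, lipDist c (κ w) ν ∂l)).add e3
      rw [add_zero] at this
      exact this.mono_left Nat.hyperfilter_le_atTop
    refine le_of_tendsto_of_tendsto e1 e2 ?_
    filter_upwards [hev m] with n hn
    refine le_trans ?_ (h2 n)
    have : ∫⁻ w, ∫⁻ x, ∫⁻ y, ENNReal.ofReal (dN v n x y) ∂η n (w, x) ∂κ w ∂l =
        ∫⁻ p, ENNReal.ofReal (dN v n p.1.2 p.2) ∂Q n := by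
      rw [hQint n (fun p => ENNReal.ofReal (dN v n p.1.2 p.2))]
      exact ((dN_cont v (fun n => (hv n).1) n).comp
        (((continuous_snd.comp continuous_fst)).prodMk continuous_snd)).measurable.ennreal_ofReal
    rw [this]
    exact lintegral_mono fun p => ENNReal.ofReal_le_ofReal (dN_mono v hn _ _)
  have hbound' : ∫⁻ p, ENNReal.ofReal (c p.1.2 p.2) ∂Q' ≤ ∫⁻ w, lipDist c (κ w) ν ∂l := by
    simp_rw [iSup_dN c v hlub]
    rw [lintegral_iSup]
    · exact iSup_le hbound
    · intro m
      exact ((dN_cont v (fun n => (hv n).1) m).comp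
        (((continuous_snd.comp continuous_fst)).prodMk continuous_snd)).measurable.ennreal_ofReal
    · intro m n hmn p
      exact ENNReal.ofReal_le_ofReal (dN_mono v hmn _ _)
  have hdis : ρ ⊗ₘ Q'.condKernel = Q' := by
    rw [← hQ'fst]; exact Q'.disintegrate Q'.condKernel
  have hQ'int : ∀ (g : ((ℕ → Bool) × S) × S → ℝ≥0∞), Measurable g →
      ∫⁻ p, g p ∂Q' = ∫⁻ w, ∫⁻ x, ∫⁻ y, g ((w, x), y) ∂Q'.condKernel (w, x) ∂κ w ∂l := by
    intro g hg
    conv_lhs => rw [← hdis]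
    rw [Measure.lintegral_compProd hg, Measure.lintegral_compProd]
    exact hg.lintegral_kernel_prod_right'
  refine ⟨Q'.condKernel, inferInstance, ?_, ?_⟩
  · have : (κ ⊗ₖ Q'.condKernel).snd =ᵐ[l] Kernel.const _ ν := by
      refine Kernel.ae_eq_of_compProd_eq ?_
      rw [Measure.compProd_const, ← hQ'prod]
      refine Measure.ext_of_lintegral _ fun g hg => ?_
      rw [Measure.lintegral_compProd hg, lintegral_map hg (by fun_prop),
        hQ'int (fun p => g (p.1.1, p.2)) (by fun_prop)]
      refine lintegral_congr fun w => ?_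
      rw [Kernel.lintegral_snd _ _ (by fun_prop), Kernel.lintegral_compProd _ _ _ (by fun_prop)]
    filter_upwards [this] with w hw
    rw [hw]; simp
  · refine le_of_eq_of_le ?_ hbound'
    rw [hQ'int (fun p => ENNReal.ofReal (c p.1.2 p.2))]
    have := measurable_c c v (fun n => (hv n).1) hlub
    exact this.comp (by fun_prop : Measurable fun p : ((ℕ → Bool) × S) × S => (p.1.2, p.2))


lemma factor1 {S : Type*} [TopologicalSpace S] [PolishSpace S] [MeasurableSpace S]
    [BorelSpace S] [Nonempty S] {E T : Type*} [mE : MeasurableSpace E] [mT : MeasurableSpace T]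
    (m : Measure E) [IsProbabilityMeasure m] (κ : Kernel E S) [IsMarkovKernel κ]
    (W : E → T) (hW : mE = MeasurableSpace.comap W mT) :
    ∃ κ' : Kernel T S, IsMarkovKernel κ' ∧ ∀ᵐ e ∂m, κ e = κ' (W e) := by
  have hWm : Measurable W := by rw [hW]; exact comap_measurable W
  let ρ : Measure (T × S) := (m ⊗ₘ κ).map (Prod.map W id)
  have hm : Measurable (Prod.map W id : E × S → T × S) := hWm.prodMap measurable_id
  have : IsProbabilityMeasure ρ := Measure.isProbabilityMeasure_map hm.aemeasurable
  have hfst : ρ.fst = m.map W := by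
    rw [show ρ.fst = ((m ⊗ₘ κ).map (Prod.map W id)).map Prod.fst from rfl,
      Measure.map_map measurable_fst hm]
    rw [show (Prod.fst ∘ Prod.map W id : E × S → T) = W ∘ Prod.fst from rfl,
      ← Measure.map_map hWm measurable_fst]
    congr 1
    exact Measure.fst_compProd _ _
  have hdis : ρ.fst ⊗ₘ ρ.condKernel = ρ := ρ.disintegrate ρ.condKernel
  refine ⟨ρ.condKernel, inferInstance, ?_⟩
  have : κ =ᵐ[m] ρ.condKernel.comap W hWm := by
    refine Kernel.ae_eq_of_compProd_eq ?_
    refine Measure.ext_prod fun {A B} hA hB => ?_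
    rw [hW] at hA
    obtain ⟨A', hA', rfl⟩ := hA
    have e1 : (m ⊗ₘ κ) ((W ⁻¹' A') ×ˢ B) = ρ (A' ×ˢ B) := by
      rw [Measure.map_apply hm (hA'.prod hB)]; rfl
    have e2 : ρ (A' ×ˢ B) = (m.map W ⊗ₘ ρ.condKernel) (A' ×ˢ B) := by rw [← hfst, hdis]
    rw [e1, e2, Measure.compProd_apply_prod hA' hB,
      Measure.compProd_apply_prod (hWm hA') hB,
      setLIntegral_map hA' (Kernel.measurable_coe _ hB) hWm]
    rfl
  exact this

lemma factor2 {S : Type*} [TopologicalSpace S] [PolishSpace S] [MeasurableSpace S]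
    [BorelSpace S] [Nonempty S] {E T : Type*} [mE : MeasurableSpace E] [mT : MeasurableSpace T]
    (m : Measure E) [IsProbabilityMeasure m] (κ : Kernel E S) [IsMarkovKernel κ]
    (W : E → T) (hW : Measurable W) (hκ : Measurable[MeasurableSpace.comap W mT] κ) :
    ∃ κ' : Kernel T S, IsMarkovKernel κ' ∧ ∀ᵐ e ∂m, κ e = κ' (W e) := by
  have hle : MeasurableSpace.comap W mT ≤ mE := hW.comap_le
  let κN : @Kernel E S (MeasurableSpace.comap W mT) _ :=
    @Kernel.mk E S (MeasurableSpace.comap W mT) _ κ hκ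
  have h1 : @IsMarkovKernel E S (MeasurableSpace.comap W mT) _ κN :=
    @IsMarkovKernel.mk E S (MeasurableSpace.comap W mT) _ κN
      (fun e => inferInstanceAs (IsProbabilityMeasure (κ e)))
  have h2 : @IsProbabilityMeasure E (MeasurableSpace.comap W mT) (m.trim hle) :=
    ⟨by rw [trim_measurableSet_eq hle .univ]; exact measure_univ⟩
  obtain ⟨κ', hκ', h⟩ := @factor1 S _ _ _ _ _ E T (MeasurableSpace.comap W mT) mT (m.trim hle) h2
    κN h1 W rfl
  exact ⟨κ', hκ', ae_of_ae_trim hle h⟩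

lemma exists_W {S : Type*} [TopologicalSpace S] [PolishSpace S] [MeasurableSpace S]
    [BorelSpace S] {E : Type*} [mE : MeasurableSpace E] (κ : Kernel E S) [IsMarkovKernel κ] :
    ∃ W : E → (ℕ → Bool), Measurable W ∧
      Measurable[MeasurableSpace.comap W inferInstance] (κ : E → Measure S) := by
  classical
  obtain ⟨φ, hφ⟩ := exists_surjective_nat (ℚ × ℚ)
  let g : S → ℝ := embeddingReal S
  have hg : MeasurableEmbedding g := measurableEmbedding_embeddingReal S
  have hsets : ∀ q : ℚ, MeasurableSet (g ⁻¹' Iic (q : ℝ)) := fun q => hg.measurable measurableSet_Iic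
  let W : E → (ℕ → Bool) := fun e n =>
    decide (((φ n).2 : ℝ) < (κ e (g ⁻¹' Iic ((φ n).1 : ℝ))).toReal)
  refine ⟨W, ?_, ?_⟩
  · refine measurable_pi_lambda _ fun n => measurable_to_bool ?_
    have : (fun e => W e n) ⁻¹' {true} =
        {e | ((φ n).2 : ℝ) < (κ e (g ⁻¹' Iic ((φ n).1 : ℝ))).toReal} := by
      ext e; simp [W]
    rw [this]
    exact measurableSet_lt measurable_const (κ.measurable_coe (hsets _)).ennreal_toReal
  · have hpi : IsPiSystem {s | ∃ t ∈ ⋃ a : ℚ, {Iic (a : ℝ)}, g ⁻¹' t = s} :=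
      Real.isPiSystem_Iic_rat.comap g
    refine @Measurable.measure_of_isPiSystem_of_isProbabilityMeasure E S
      (MeasurableSpace.comap W inferInstance) _ κ _ _ ?_ hpi ?_
    · rw [← hg.comap_eq, BorelSpace.measurable_eq (α := ℝ), Real.borel_eq_generateFrom_Iic_rat,
        MeasurableSpace.comap_generateFrom]
      rfl
    · rintro s ⟨t, ht, rfl⟩
      simp only [mem_iUnion, mem_singleton_iff] at ht
      obtain ⟨q, rfl⟩ := ht
      have h1 : Measurable[MeasurableSpace.comap W inferInstance]
          fun e => (κ e (g ⁻¹' Iic (q : ℝ))).toReal := by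
        rw [BorelSpace.measurable_eq (α := ℝ), Real.borel_eq_generateFrom_Ioi_rat]
        refine @measurable_generateFrom _ _ (MeasurableSpace.comap W inferInstance) _ _ ?_
        intro u hu
        simp only [mem_iUnion, mem_singleton_iff] at hu
        obtain ⟨r, rfl⟩ := hu
        obtain ⟨n, hn⟩ := hφ (q, r)
        refine ⟨(fun w : ℕ → Bool => w n) ⁻¹' {true},
          measurable_pi_apply n (measurableSet_singleton true), ?_⟩
        ext e
        simp [W, hn]
      have h2 := @Measurable.ennreal_ofReal _ (MeasurableSpace.comap W inferInstance) _ h1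
      have h3 : (fun e => ENNReal.ofReal (κ e (g ⁻¹' Iic (q : ℝ))).toReal) =
          fun e => κ e (g ⁻¹' Iic (q : ℝ)) := by
        ext e; exact ENNReal.ofReal_toReal (measure_ne_top _ _)
      rw [h3] at h2
      exact h2

lemma E_level {S : Type*} [TopologicalSpace S] [PolishSpace S] [MeasurableSpace S]
    [BorelSpace S] [Nonempty S] (c : S → S → ℝ) (v : ℕ → S → ℝ) (hv : ∀ n, v n ∈ LipC c)
    (hlub : ∀ x y, IsLUB (range fun n => |v n x - v n y|) (c x y))
    {E : Type*} [MeasurableSpace E] (m : Measure E) [IsProbabilityMeasure m]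
    (κ : Kernel E S) [IsMarkovKernel κ] (ν : Measure S) [IsProbabilityMeasure ν] :
    ∃ η : Kernel (E × S) S, IsMarkovKernel η ∧
      (∀ᵐ w ∂m, (κ ⊗ₖ η).snd w = ν) ∧
      ∫⁻ w, ∫⁻ x, ∫⁻ y, ENNReal.ofReal (c x y) ∂η (w, x) ∂κ w ∂m ≤
        ∫⁻ w, lipDist c (κ w) ν ∂m := by
  obtain ⟨W, hW, hκW⟩ := exists_W κ
  obtain ⟨κ', hκ', hκκ'⟩ := factor2 m κ W hW hκW
  have := Measure.isProbabilityMeasure_map (μ := m) hW.aemeasurable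
  obtain ⟨η, hη, h1, h2⟩ := T_level c v hv hlub (m.map W) κ' ν
  have hm : Measurable (Prod.map W id : E × S → (ℕ → Bool) × S) := hW.prodMap measurable_id
  refine ⟨η.comap (Prod.map W id) hm, inferInstance, ?_, ?_⟩
  · filter_upwards [ae_of_ae_map hW.aemeasurable h1, hκκ'] with e h3 h4
    rw [← h3]
    ext B hB
    rw [Kernel.snd_apply' _ _ hB, Kernel.snd_apply' _ _ hB,
      Kernel.compProd_apply (measurable_snd hB), Kernel.compProd_apply (measurable_snd hB), h4]
    rfl
  · have hcm := measurable_c c v (fun n => (hv n).1) hlub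
    have hF : Measurable fun w => ∫⁻ x, ∫⁻ y, ENNReal.ofReal (c x y) ∂η (w, x) ∂κ' w := by
      have h1 : Measurable fun p : (ℕ → Bool) × S =>
          ∫⁻ y, (fun q : ((ℕ → Bool) × S) × S => ENNReal.ofReal (c q.1.2 q.2)) (p, y) ∂η p :=
        Measurable.lintegral_kernel_prod_right' (κ := η)
          (hcm.comp (by fun_prop : Measurable fun q : ((ℕ → Bool) × S) × S => (q.1.2, q.2)))
      exact Measurable.lintegral_kernel_prod_right' (κ := κ') h1
    calc _ = ∫⁻ e, (fun w => ∫⁻ x, ∫⁻ y, ENNReal.ofReal (c x y) ∂η (w, x) ∂κ' w) (W e) ∂m := by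
          refine lintegral_congr_ae ?_
          filter_upwards [hκκ'] with e he
          rw [he]; rfl
      _ = ∫⁻ w, ∫⁻ x, ∫⁻ y, ENNReal.ofReal (c x y) ∂η (w, x) ∂κ' w ∂(m.map W) :=
          (lintegral_map hF hW).symm
      _ ≤ _ := h2
      _ ≤ ∫⁻ e, lipDist c (κ' (W e)) ν ∂m := lintegral_map_le _ _
      _ = _ := by
          refine lintegral_congr_ae ?_
          filter_upwards [hκκ'] with e he
          rw [he]


lemma lipDist_le_cost {S : Type*} [TopologicalSpace S] [PolishSpace S] [MeasurableSpace S]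
    [BorelSpace S] (c : S → S → ℝ) (π : Measure (S × S)) [IsProbabilityMeasure π] :
    lipDist c π.fst π.snd ≤ ∫⁻ p, ENNReal.ofReal (c p.1 p.2) ∂π := by
  refine iSup₂_le fun u hu => ?_
  obtain ⟨K, hK⟩ := hu.2.1
  have hsm : StronglyMeasurable u := hu.1.measurable.stronglyMeasurable
  have e1 : ∫ x, u x ∂π.fst = ∫ p, u p.1 ∂π :=
    integral_map measurable_fst.aemeasurable hsm.aestronglyMeasurable
  have e2 : ∫ x, u x ∂π.snd = ∫ p, u p.2 ∂π :=
    integral_map measurable_snd.aemeasurable hsm.aestronglyMeasurable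
  have i1 : Integrable (fun p : S × S => u p.1) π :=
    Integrable.of_bound (hsm.comp_measurable measurable_fst).aestronglyMeasurable K
      (Filter.Eventually.of_forall fun p => hK p.1)
  have i2 : Integrable (fun p : S × S => u p.2) π :=
    Integrable.of_bound (hsm.comp_measurable measurable_snd).aestronglyMeasurable K
      (Filter.Eventually.of_forall fun p => hK p.2)
  rw [e1, e2, ← integral_sub i1 i2, ← Real.enorm_eq_ofReal_abs]
  refine (enorm_integral_le_lintegral_enorm _).trans (lintegral_mono fun p => ?_)
  rw [Real.enorm_eq_ofReal_abs]
  exact ENNReal.ofReal_le_ofReal (hu.2.2 _ _)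

lemma final_gen {S : Type*} [TopologicalSpace S] [PolishSpace S] [MeasurableSpace S]
    [BorelSpace S] [Nonempty S] (c : S → S → ℝ) (hstar : StarCond c)
    {Ω E : Type*} [MeasurableSpace Ω] [MeasurableSpace E] (P : Measure Ω)
    [IsProbabilityMeasure P] (Y : Ω → E) (hY : Measurable Y) (X : Ω → S) (hX : Measurable X)
    (U : Ω → ℝ) (hU : Measurable U) (hUunif : P.map U = volume.restrict (Set.Icc (0:ℝ) 1))
    (κ : Kernel E S) [IsMarkovKernel κ]
    (hκ : P.map (fun ω => (Y ω, X ω)) = P.map Y ⊗ₘ κ)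
    (hind : IndepFun (fun ω => (Y ω, X ω)) U P) :
    ∃ F : (E × S) × ℝ → S, Measurable F ∧
      IndepFun Y (fun ω => F ((Y ω, X ω), U ω)) P ∧
      P.map (fun ω => F ((Y ω, X ω), U ω)) = P.map X ∧
      ∫⁻ ω, ENNReal.ofReal (c (X ω) (F ((Y ω, X ω), U ω))) ∂P =
        ∫⁻ ω, lipDist c (κ (Y ω)) (P.map X) ∂P := by
  obtain ⟨v, hv, hlub⟩ := exists_seq c hstar
  have hcm := measurable_c c v (fun n => (hv n).1) hlub
  have hmP := Measure.isProbabilityMeasure_map (μ := P) hY.aemeasurable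
  have hνP := Measure.isProbabilityMeasure_map (μ := P) hX.aemeasurable
  obtain ⟨η, hη, h1, h2⟩ := E_level c v hv hlub (P.map Y) κ (P.map X)
  obtain ⟨f, hf, hfη⟩ := Kernel.exists_measurable_map_eq_unitInterval η
  let F : (E × S) × ℝ → S := fun p => f p.1 (projIcc (0:ℝ) 1 zero_le_one p.2)
  have hproj : Measurable (projIcc (0:ℝ) 1 zero_le_one) := continuous_projIcc.measurable
  have hF : Measurable F :=
    hf.comp (measurable_fst.prodMk (hproj.comp measurable_snd))
  have hZ : Measurable fun ω => (Y ω, X ω) := hY.prodMk hX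
  have hXs : Measurable fun ω => F ((Y ω, X ω), U ω) := hF.comp (hZ.prodMk hU)
  have hV : (P.map U).map (projIcc (0:ℝ) 1 zero_le_one) = volume := by
    have : volume.restrict (Icc (0:ℝ) 1) = (volume : Measure unitInterval).map Subtype.val :=
      (map_comap_subtype_coe measurableSet_Icc volume).symm
    rw [hUunif, this, Measure.map_map hproj measurable_subtype_coe]
    have : projIcc (0:ℝ) 1 zero_le_one ∘ Subtype.val = (id : unitInterval → unitInterval) := by
      ext t; simp
    rw [this, Measure.map_id]
  have hlaw0 := (indepFun_iff_map_prod_eq_prod_map_map hZ.aemeasurable hU.aemeasurable).1 hind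
  have hUP := Measure.isProbabilityMeasure_map (μ := P) hU.aemeasurable
  have hlaw : ∀ g : (E × S) × S → ℝ≥0∞, Measurable g →
      ∫⁻ ω, g ((Y ω, X ω), F ((Y ω, X ω), U ω)) ∂P =
        ∫⁻ w, ∫⁻ x, ∫⁻ y, g ((w, x), y) ∂η (w, x) ∂κ w ∂(P.map Y) := by
    intro g hg
    have hgF : Measurable fun p : (E × S) × ℝ => g (p.1, F p) :=
      hg.comp (measurable_fst.prodMk hF)
    have e1 : ∫⁻ ω, g ((Y ω, X ω), F ((Y ω, X ω), U ω)) ∂P =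
        ∫⁻ p, g (p.1, F p) ∂(P.map fun ω => ((Y ω, X ω), U ω)) := by
      rw [lintegral_map hgF (hZ.prodMk hU)]
    rw [e1, hlaw0, lintegral_prod _ hgF.aemeasurable, hκ]
    have e2 : ∀ z : E × S, ∫⁻ t, g (z, F (z, t)) ∂(P.map U) = ∫⁻ y, g (z, y) ∂η z := by
      intro z
      have hfz : Measurable (f z) := hf.comp (measurable_const.prodMk measurable_id)
      have hgz : Measurable fun y => g (z, y) := hg.comp (measurable_const.prodMk measurable_id)
      rw [← hfη z, lintegral_map hgz hfz, ← hV,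
        lintegral_map (f := fun a => g (z, f z a)) (hgz.comp hfz) hproj]
    simp only [e2]
    rw [Measure.lintegral_compProd]
    exact hg.lintegral_kernel_prod_right'
  have hYX : P.map (fun ω => (Y ω, F ((Y ω, X ω), U ω))) = (P.map Y).prod (P.map X) := by
    refine Measure.ext_of_lintegral _ fun g hg => ?_
    rw [lintegral_map hg (hY.prodMk hXs), lintegral_prod _ hg.aemeasurable,
      hlaw (fun p => g (p.1.1, p.2)) (by fun_prop)]
    refine lintegral_congr_ae ?_
    filter_upwards [h1] with w hw
    rw [← hw, Kernel.lintegral_snd _ _ (by fun_prop), Kernel.lintegral_compProd _ _ _ (by fun_prop)]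
  have hXslaw : P.map (fun ω => F ((Y ω, X ω), U ω)) = P.map X := by
    have := congrArg Measure.snd hYX
    rw [Measure.snd_prod] at this
    rw [← this, Measure.snd_map_prodMk hY]
  have hcost : ∫⁻ ω, ENNReal.ofReal (c (X ω) (F ((Y ω, X ω), U ω))) ∂P =
      ∫⁻ w, ∫⁻ x, ∫⁻ y, ENNReal.ofReal (c x y) ∂η (w, x) ∂κ w ∂(P.map Y) :=
    hlaw (fun p => ENNReal.ofReal (c p.1.2 p.2))
      (hcm.comp (by fun_prop : Measurable fun q : (E × S) × S => (q.1.2, q.2)))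
  refine ⟨F, hF, ?_, hXslaw, ?_⟩
  · rw [indepFun_iff_map_prod_eq_prod_map_map hY.aemeasurable hXs.aemeasurable, hYX, hXslaw]
  · refine le_antisymm ?_ ?_
    · rw [hcost]
      exact h2.trans (lintegral_map_le _ _)
    · have hG : Measurable fun w => ∫⁻ x, ∫⁻ y, ENNReal.ofReal (c x y) ∂η (w, x) ∂κ w := by
        have h1 : Measurable fun p : E × S =>
            ∫⁻ y, (fun q : (E × S) × S => ENNReal.ofReal (c q.1.2 q.2)) (p, y) ∂η p :=
          Measurable.lintegral_kernel_prod_right' (κ := η)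
            (hcm.comp (by fun_prop : Measurable fun q : (E × S) × S => (q.1.2, q.2)))
        exact Measurable.lintegral_kernel_prod_right' (κ := κ) h1
      rw [hcost, lintegral_map hG hY]
      refine lintegral_mono_ae ?_
      filter_upwards [ae_of_ae_map hY.aemeasurable h1] with ω hω
      have e := lipDist_le_cost c ((κ ⊗ₖ η) (Y ω))
      rw [Kernel.lintegral_compProd _ _ _ hcm] at e
      refine le_trans (le_of_eq ?_) e
      congr 1
      · conv_lhs => rw [← Kernel.fst_compProd κ η, Kernel.fst_apply]
        rfl
      · rw [← hω, Kernel.snd_apply]; rfl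


lemma final_gen2 {S : Type*} [TopologicalSpace S] [PolishSpace S] [MeasurableSpace S]
    [BorelSpace S] [Nonempty S] (c : S → S → ℝ) (hstar : StarCond c)
    {Ω E : Type*} [mΩ : MeasurableSpace Ω] [mE : MeasurableSpace E] (P : Measure Ω)
    [IsProbabilityMeasure P] (Y : Ω → E) (hY : Measurable Y) (X : Ω → S) (hX : Measurable X)
    (U : Ω → ℝ) (hU : Measurable U) (hUunif : P.map U = volume.restrict (Set.Icc (0:ℝ) 1))
    (κ : E → Measure S) (hκ1 : ∀ e, IsProbabilityMeasure (κ e))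
    (hκ2 : ∀ B : Set S, MeasurableSet B → Measurable (fun e => κ e B))
    (hκ3 : ∀ A : Set E, MeasurableSet A → ∀ B : Set S, MeasurableSet B →
      P (Y ⁻¹' A ∩ X ⁻¹' B) = ∫⁻ ω in Y ⁻¹' A, κ (Y ω) B ∂P)
    (hind : Indep (MeasurableSpace.comap U inferInstance)
      (MeasurableSpace.comap X inferInstance ⊔ MeasurableSpace.comap Y mE) P) :
    ∃ Xstar : Ω → S,
      Measurable[MeasurableSpace.comap U inferInstance ⊔
        MeasurableSpace.comap X inferInstance ⊔ MeasurableSpace.comap Y mE] Xstar ∧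
      Indep (MeasurableSpace.comap Xstar inferInstance) (MeasurableSpace.comap Y mE) P ∧
      P.map Xstar = P.map X ∧
      ∫⁻ ω, ENNReal.ofReal (c (X ω) (Xstar ω)) ∂P =
        ∫⁻ ω, lipDist c (κ (Y ω)) (P.map X) ∂P := by
  let k : Kernel E S := ⟨κ, Measure.measurable_of_measurable_coe _ hκ2⟩
  have hk : IsMarkovKernel k := ⟨hκ1⟩
  have hmP := Measure.isProbabilityMeasure_map (μ := P) hY.aemeasurable
  have hlaw : P.map (fun ω => (Y ω, X ω)) = P.map Y ⊗ₘ k := by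
    have := Measure.isProbabilityMeasure_map (μ := P) (hY.prodMk hX).aemeasurable
    refine Measure.ext_prod fun {A B} hA hB => ?_
    rw [Measure.map_apply (hY.prodMk hX) (hA.prod hB), Measure.compProd_apply_prod hA hB,
      setLIntegral_map hA (Kernel.measurable_coe _ hB) hY]
    exact hκ3 A hA B hB
  have hI : IndepFun (fun ω => (Y ω, X ω)) U P := by
    have h := hind.symm
    rw [sup_comm, ← MeasurableSpace.comap_prodMk] at h
    exact (IndepFun_iff_Indep _ _ _).2 h
  obtain ⟨F, hF, h1, h2, h3⟩ := final_gen c hstar P Y hY X hX U hU hUunif k hlaw hI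
  refine ⟨fun ω => F ((Y ω, X ω), U ω), ?_, ?_, h2, h3⟩
  · have mU : Measurable[MeasurableSpace.comap U inferInstance ⊔
        MeasurableSpace.comap X inferInstance ⊔ MeasurableSpace.comap Y mE] U :=
      Measurable.of_comap_le (le_sup_left.trans le_sup_left)
    have mX : Measurable[MeasurableSpace.comap U inferInstance ⊔
        MeasurableSpace.comap X inferInstance ⊔ MeasurableSpace.comap Y mE] X :=
      Measurable.of_comap_le (le_sup_right.trans le_sup_left)
    have mY : Measurable[MeasurableSpace.comap U inferInstance ⊔
        MeasurableSpace.comap X inferInstance ⊔ MeasurableSpace.comap Y mE] Y :=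
      Measurable.of_comap_le le_sup_right
    exact hF.comp ((mY.prodMk mX).prodMk mU)
  · exact ((IndepFun_iff_Indep _ _ _).1 h1).symm


end Recon

/-- **Reconstruction (coupling) property**: if `Ω` is rich enough, there exists a
`σ(U) ∨ σ(X) ∨ ℳ`-measurable random variable `X*`, independent of `ℳ` and with the same
law as `X`, such that `E[c(X, X*)] = τ_c(ℳ, X)`. -/
theorem reconstruction_property
    {S : Type*} [TopologicalSpace S] [PolishSpace S] [MeasurableSpace S] [BorelSpace S]
    {Ω : Type*} [mΩ : MeasurableSpace Ω] (P : Measure Ω) [IsProbabilityMeasure P]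
    (c : S → S → ℝ) (hc0 : ∀ x y, 0 ≤ c x y) (hstar : StarCond c)
    (X : Ω → S) (hX : Measurable X)
    (x₀ : S) (hXint : ∫⁻ x, ENNReal.ofReal (c x x₀) ∂(P.map X) < ⊤)
    (U : Ω → ℝ) (hUmeas : Measurable U)
    (hUunif : P.map U = volume.restrict (Set.Icc (0:ℝ) 1))
    (M : MeasurableSpace Ω) (hM : M ≤ mΩ)
    (hUindep : Indep (MeasurableSpace.comap U inferInstance)
      (MeasurableSpace.comap X inferInstance ⊔ M) P)
    (κX : Ω → Measure S) (hκX : IsRCD P M X κX) :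
    ∃ Xstar : Ω → S,
      Measurable[MeasurableSpace.comap U inferInstance ⊔
        MeasurableSpace.comap X inferInstance ⊔ M] Xstar ∧
      Indep (MeasurableSpace.comap Xstar inferInstance) M P ∧
      law P Xstar = law P X ∧
      ∫⁻ ω, ENNReal.ofReal (c (X ω) (Xstar ω)) ∂P = tauC c P κX X := by
  have hne : Nonempty S := ⟨x₀⟩
  have hid : MeasurableSpace.comap (id : Ω → Ω) M = M := MeasurableSpace.comap_id
  have key := @Recon.final_gen2 S _ _ _ _ hne c hstar Ω Ω mΩ M P _ id (measurable_id'' hM)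
    X hX U hUmeas hUunif κX hκX.1 hκX.2.1 hκX.2.2 (by rw [hid]; exact hUindep)
  rw [hid] at key
  exact key

end
end

section
/- Let S be a Polish space and c : S × S → [0,∞] a Borel measurable cost function. Then the equality KR_c(μ,ν) = ℓ_c(μ,ν) holds for all pairs of Borel probability measures (μ, ν) on S if and only if c satisfies condition (★), i.e. c(x,y) = sup_{u ∈ Lip_c} |u(x) − u(y)| for all x, y ∈ S. -/
open MeasureTheory ProbabilityTheory ENNReal Set

noncomputable section

/-- `Lip_c` for an `[0,∞]`-valued cost: bounded continuous functions `u : S → ℝ` with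
`|u x - u y| ≤ c x y`. -/
def LipCE {S : Type*} [TopologicalSpace S] (c : S → S → ℝ≥0∞) : Set (S → ℝ) :=
  {u | Continuous u ∧ (∃ M, ∀ x, |u x| ≤ M) ∧
    ∀ x y, ENNReal.ofReal |u x - u y| ≤ c x y}

open scoped CompactlySupported

/-- Increasing sequence of pseudo-metrics generated by a sequence of functions. -/
def krD {X : Type*} (w : ℕ → X → ℝ) : ℕ → X → X → ℝ
  | 0 => fun _ _ => 0
  | n + 1 => fun x y => max (krD w n x y) |w n x - w n y|

section krD

variable {X : Type*} (w : ℕ → X → ℝ)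

lemma krD_nonneg (n : ℕ) (x y : X) : 0 ≤ krD w n x y := by
  induction n with
  | zero => simp [krD]
  | succ n ih => exact le_max_of_le_left ih

lemma krD_self (n : ℕ) (x : X) : krD w n x x = 0 := by
  induction n with
  | zero => simp [krD]
  | succ n ih => simp [krD, ih]

lemma krD_symm (n : ℕ) (x y : X) : krD w n x y = krD w n y x := by
  induction n with
  | zero => simp [krD]
  | succ n ih => simp only [krD]; rw [ih, abs_sub_comm]

lemma krD_tri (n : ℕ) (x y z : X) : krD w n x z ≤ krD w n x y + krD w n y z := by
  induction n with
  | zero => simp [krD]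
  | succ n ih =>
    simp only [krD]
    refine max_le (ih.trans (add_le_add (le_max_left _ _) (le_max_left _ _))) ?_
    exact (abs_sub_le _ _ _).trans (add_le_add (le_max_right _ _) (le_max_right _ _))

lemma krD_mono (x y : X) : Monotone (fun n => krD w n x y) :=
  monotone_nat_of_le_succ fun _ => le_max_left _ _

lemma krD_ge (n : ℕ) (x y : X) : |w n x - w n y| ≤ krD w (n + 1) x y := le_max_right _ _

lemma krD_le (n : ℕ) (x y : X) (C : ℝ≥0∞) (h : ∀ i, ENNReal.ofReal |w i x - w i y| ≤ C) :
    ENNReal.ofReal (krD w n x y) ≤ C := by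
  induction n with
  | zero => simp [krD]
  | succ n ih =>
    simp only [krD]
    rw [ENNReal.ofReal_max]
    exact max_le ih (h n)

lemma krD_comp {Y : Type*} (j : Y → X) (n : ℕ) (x y : Y) :
    krD w n (j x) (j y) = krD (fun i => w i ∘ j) n x y := by
  induction n with
  | zero => simp [krD]
  | succ n ih => simp [krD, ih]

lemma krD_cont [TopologicalSpace X] (hw : ∀ i, Continuous (w i)) (n : ℕ) :
    Continuous (fun p : X × X => krD w n p.1 p.2) := by
  induction n with
  | zero => simpa [krD] using continuous_const
  | succ n ih =>
    simp only [krD]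
    have := hw n
    exact ih.max (by fun_prop)

end krD

/-- Weak duality on the compact space. -/
lemma kr_lower {K : Type*} [TopologicalSpace K] [CompactSpace K]
    [MeasurableSpace K] [BorelSpace K] (w : ℕ → K → ℝ) (hw : ∀ i, Continuous (w i))
    (μ ν : Measure K) [IsProbabilityMeasure μ] [IsProbabilityMeasure ν] (L : ℝ)
    (hL : ∀ n (φ : C(K, ℝ)), (∀ x y, |φ x - φ y| ≤ krD w n x y) →
      ∫ x, φ x ∂μ - ∫ x, φ x ∂ν ≤ L)
    (f g : C(K, ℝ)) (n : ℕ) (t : ℝ) (ht : 0 ≤ t)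
    (h : ∀ x y, 0 ≤ f x + g y + t * krD w n x y) :
    0 ≤ ∫ x, f x ∂μ + ∫ x, g x ∂ν + L * t := by
  have hne : Nonempty K := μ.nonempty_of_neZero
  have hinteg : ∀ (ρ : Measure K) [IsProbabilityMeasure ρ] (ψ : C(K, ℝ)), Integrable ψ ρ := by
    intro ρ _ ψ
    exact (BoundedContinuousFunction.mkOfCompact ψ).integrable ρ
  have hbdd : ∀ x, BddBelow (range fun y => g y + t * krD w n x y) := by
    intro x
    refine ⟨-f x, ?_⟩
    rintro _ ⟨y, rfl⟩
    have := h x y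
    dsimp only
    linarith
  set φ : K → ℝ := fun x => ⨅ y, (g y + t * krD w n x y) with hφ
  have hlip1 : ∀ x x', φ x - φ x' ≤ t * krD w n x x' := by
    intro x x'
    have : φ x - t * krD w n x x' ≤ φ x' := by
      refine le_ciInf fun y => ?_
      have h1 : φ x ≤ g y + t * krD w n x y := ciInf_le (hbdd x) y
      have h2 := mul_le_mul_of_nonneg_left (krD_tri w n x x' y) ht
      linarith
    linarith
  have hlip : ∀ x x', |φ x - φ x'| ≤ t * krD w n x x' := by
    intro x x'
    rw [abs_le]
    have h1 := hlip1 x x'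
    have h2 := hlip1 x' x
    rw [krD_symm w n x' x] at h2
    constructor <;> linarith
  have hcont : Continuous φ := by
    rw [continuous_iff_continuousAt]
    intro x
    rw [ContinuousAt, tendsto_iff_dist_tendsto_zero]
    have hc : Continuous fun x' => t * krD w n x' x :=
      continuous_const.mul ((krD_cont w hw n).comp (continuous_id.prodMk continuous_const))
    have hc' := hc.tendsto x
    rw [krD_self, mul_zero] at hc'
    exact squeeze_zero (fun _ => dist_nonneg) (fun x' => by rw [Real.dist_eq]; exact hlip x' x) hc'
  have hfφ : ∀ x, -f x ≤ φ x := by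
    intro x
    refine le_ciInf fun y => ?_
    have := h x y
    linarith
  have hφg : ∀ x, φ x ≤ g x := by
    intro x
    have := ciInf_le (hbdd x) x
    simpa [krD_self] using this
  have hi1 : -∫ x, f x ∂μ ≤ ∫ x, φ x ∂μ := by
    rw [← integral_neg]
    exact integral_mono (hinteg μ f).neg (hinteg μ ⟨φ, hcont⟩) hfφ
  have hi2 : ∫ x, φ x ∂ν ≤ ∫ x, g x ∂ν :=
    integral_mono (hinteg ν ⟨φ, hcont⟩) (hinteg ν g) hφg
  have key : ∫ x, φ x ∂μ - ∫ x, φ x ∂ν ≤ L * t := by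
    rcases ht.eq_or_lt with rfl | ht
    · obtain ⟨x0⟩ := hne
      have : ∀ x, φ x = φ x0 := by
        intro x
        have := hlip x x0
        rw [zero_mul] at this
        exact sub_eq_zero.1 (abs_eq_zero.1 (le_antisymm this (abs_nonneg _)))
      simp_rw [this]
      simp
    · have := hL n ⟨fun x => t⁻¹ * φ x, continuous_const.mul hcont⟩ (by
        intro x y
        have := hlip x y
        simp only [ContinuousMap.coe_mk]
        rw [← mul_sub, abs_mul, abs_of_pos (inv_pos.2 ht), inv_mul_le_iff₀ ht]
        exact this)
      simp only [ContinuousMap.coe_mk, integral_const_mul] at this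
      rw [← mul_sub, inv_mul_le_iff₀ ht] at this
      linarith
  linarith

/-- Primal attainment on compact metrizable spaces. -/
lemma kr_compact {K : Type*} [TopologicalSpace K] [CompactSpace K] [T2Space K]
    [SecondCountableTopology K] [HasOuterApproxClosed K]
    [MeasurableSpace K] [BorelSpace K] (w : ℕ → K → ℝ) (hw : ∀ i, Continuous (w i))
    (μ ν : Measure K) [IsProbabilityMeasure μ] [IsProbabilityMeasure ν] (L : ℝ)
    (hL : ∀ n (φ : C(K, ℝ)), (∀ x y, |φ x - φ y| ≤ krD w n x y) →
      ∫ x, φ x ∂μ - ∫ x, φ x ∂ν ≤ L) :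
    ∃ π : Measure (K × K), π.map Prod.fst = μ ∧ π.map Prod.snd = ν ∧
      ∫⁻ p, ⨆ n, ENNReal.ofReal (krD w n p.1 p.2) ∂π ≤ ENNReal.ofReal L := by
  have hinteg : ∀ (ρ : Measure K) [IsProbabilityMeasure ρ] (ψ : C(K, ℝ)), Integrable ψ ρ := by
    intro ρ _ ψ
    exact (BoundedContinuousFunction.mkOfCompact ψ).integrable ρ
  let mk : C(K × K, ℝ) → C_c(K × K, ℝ) := CompactlySupportedContinuousMap.continuousMapEquiv
  have hmk : ∀ (f : C(K × K, ℝ)) z, mk f z = f z := fun _ _ => rfl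
  let A : C_c(K × K, ℝ) → Set ℝ := fun h => {r | ∃ (f g : C(K, ℝ)) (n : ℕ) (t : ℝ), 0 ≤ t ∧
    (∀ x y, h (x, y) ≤ f x + g y + t * krD w n x y) ∧
      r = ∫ x, f x ∂μ + ∫ x, g x ∂ν + L * t}
  have hAb : ∀ h : C_c(K × K, ℝ), ∃ B : ℝ, (∀ z, |h z| ≤ B) := by
    intro h
    refine ⟨‖(BoundedContinuousFunction.mkOfCompact h.toContinuousMap)‖, fun z => ?_⟩
    exact (BoundedContinuousFunction.mkOfCompact h.toContinuousMap).norm_coe_le_norm z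
  have hAne : ∀ h, (A h).Nonempty := by
    intro h
    obtain ⟨B, hB⟩ := hAb h
    refine ⟨_, ContinuousMap.const K B, 0, 0, 0, le_rfl, fun x y => ?_, rfl⟩
    simpa using (le_abs_self _).trans (hB (x, y))
  have hAbdd : ∀ h, BddBelow (A h) := by
    intro h
    obtain ⟨B, hB⟩ := hAb h
    refine ⟨-B, ?_⟩
    rintro _ ⟨f, g, n, t, ht, hle, rfl⟩
    have := kr_lower w hw μ ν L hL (f + ContinuousMap.const K B) g n t ht (by
      intro x y
      have h1 := hle x y
      have h2 := (abs_le.1 (hB (x, y))).1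
      simp only [ContinuousMap.add_apply, ContinuousMap.const_apply]
      linarith)
    simp only [ContinuousMap.add_apply, ContinuousMap.const_apply] at this
    rw [integral_add (hinteg μ f) (integrable_const _)] at this
    simp at this
    linarith
  let N : C_c(K × K, ℝ) → ℝ := fun h => sInf (A h)
  have hN_le : ∀ h r, r ∈ A h → N h ≤ r := fun h r hr => csInf_le (hAbdd h) hr
  have hN_hom1 : ∀ c : ℝ, 0 < c → ∀ h, N (c • h) ≤ c * N h := by
    intro c hc h
    rw [← inv_mul_le_iff₀ hc]
    refine le_csInf (hAne h) ?_
    rintro _ ⟨f, g, n, t, ht, hle, rfl⟩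
    rw [inv_mul_le_iff₀ hc]
    refine hN_le _ _ ⟨c • f, c • g, n, c * t, by positivity, fun x y => ?_, ?_⟩
    · have := mul_le_mul_of_nonneg_left (hle x y) hc.le
      simp only [CompactlySupportedContinuousMap.smul_apply, ContinuousMap.smul_apply, smul_eq_mul]
      linarith
    · simp only [ContinuousMap.smul_apply, smul_eq_mul, integral_const_mul]
      ring
  have hN_hom : ∀ c : ℝ, 0 < c → ∀ h, N (c • h) = c * N h := by
    intro c hc h
    refine le_antisymm (hN_hom1 c hc h) ?_
    have := hN_hom1 c⁻¹ (inv_pos.2 hc) (c • h)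
    rw [smul_smul, inv_mul_cancel₀ hc.ne', one_smul] at this
    rwa [le_inv_mul_iff₀ hc] at this
  have hN_add : ∀ h k, N (h + k) ≤ N h + N k := by
    intro h k
    rw [← sub_le_iff_le_add]
    refine le_csInf (hAne h) ?_
    rintro _ ⟨f, g, n, t, ht, hle, rfl⟩
    rw [sub_le_comm]
    refine le_csInf (hAne k) ?_
    rintro _ ⟨f', g', n', t', ht', hle', rfl⟩
    rw [sub_le_iff_le_add]
    refine hN_le _ _ ⟨f + f', g + g', max n n', t + t', by positivity, fun x y => ?_, ?_⟩
    · have h1 := hle x y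
      have h2 := hle' x y
      have h3 := mul_le_mul_of_nonneg_left (krD_mono w x y (le_max_left n n')) ht
      have h4 := mul_le_mul_of_nonneg_left (krD_mono w x y (le_max_right n n')) ht'
      simp only [CompactlySupportedContinuousMap.add_apply, ContinuousMap.add_apply]
      dsimp only at h3 h4
      linarith
    · simp only [ContinuousMap.add_apply]
      rw [integral_add (hinteg μ f) (hinteg μ f'), integral_add (hinteg ν g) (hinteg ν g')]
      ring
  obtain ⟨Λ, -, hΛ⟩ := exists_extension_of_le_sublinear (E := C_c(K × K, ℝ)) ⊥ N hN_hom hN_add (by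
    rintro ⟨x, hx⟩
    have hx0 : x = 0 := (Submodule.mem_bot ℝ).1 hx
    subst hx0
    have h0 : N 0 = 0 := by
      have := hN_hom 2 (by norm_num) 0
      rw [smul_zero] at this
      linarith
    rw [h0]
    exact le_of_eq (map_zero _))
  have hΛA : ∀ h r, r ∈ A h → Λ h ≤ r := fun h r hr => (hΛ h).trans (hN_le h r hr)
  have hpos : ∀ h, 0 ≤ h → 0 ≤ Λ h := by
    intro h hh
    have := hΛA (-h) 0 ⟨0, 0, 0, 0, le_rfl, fun x y => by
      have : 0 ≤ h (x, y) := hh (x, y)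
      simpa using this, by simp⟩
    rw [map_neg] at this
    linarith
  have hfst_le : ∀ f : C(K, ℝ), Λ (mk (f.comp ⟨Prod.fst, continuous_fst⟩)) ≤ ∫ x, f x ∂μ := by
    intro f
    exact hΛA _ _ ⟨f, 0, 0, 0, le_rfl, fun x y => by simp [hmk], by simp⟩
  have hsnd_le : ∀ f : C(K, ℝ), Λ (mk (f.comp ⟨Prod.snd, continuous_snd⟩)) ≤ ∫ x, f x ∂ν := by
    intro f
    exact hΛA _ _ ⟨0, f, 0, 0, le_rfl, fun x y => by simp [hmk], by simp⟩
  have hfst : ∀ f : C(K, ℝ), Λ (mk (f.comp ⟨Prod.fst, continuous_fst⟩)) = ∫ x, f x ∂μ := by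
    intro f
    refine le_antisymm (hfst_le f) ?_
    have h1 := hfst_le (-f)
    have h2 : mk ((-f).comp ⟨Prod.fst, continuous_fst⟩) =
      - mk (f.comp ⟨Prod.fst, continuous_fst⟩) := by ext; rfl
    rw [h2, map_neg] at h1
    simp only [ContinuousMap.neg_apply, integral_neg] at h1
    linarith
  have hsnd : ∀ f : C(K, ℝ), Λ (mk (f.comp ⟨Prod.snd, continuous_snd⟩)) = ∫ x, f x ∂ν := by
    intro f
    refine le_antisymm (hsnd_le f) ?_
    have h1 := hsnd_le (-f)
    have h2 : mk ((-f).comp ⟨Prod.snd, continuous_snd⟩) =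
      - mk (f.comp ⟨Prod.snd, continuous_snd⟩) := by ext; rfl
    rw [h2, map_neg] at h1
    simp only [ContinuousMap.neg_apply, integral_neg] at h1
    linarith
  let P : C_c(K × K, ℝ) →ₚ[ℝ] ℝ := PositiveLinearMap.mk₀ Λ hpos
  set π := RealRMK.rieszMeasure P with hπ
  have hrep : ∀ f : C(K × K, ℝ), ∫ z, f z ∂π = Λ (mk f) :=
    fun f => RealRMK.integral_rieszMeasure P (mk f)
  have hfin : IsFiniteMeasure π := inferInstance
  refine ⟨π, ?_, ?_, ?_⟩
  · refine ext_of_forall_integral_eq_of_IsFiniteMeasure fun f => ?_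
    rw [integral_map measurable_fst.aemeasurable f.continuous.aestronglyMeasurable]
    exact (hrep (f.toContinuousMap.comp ⟨Prod.fst, continuous_fst⟩)).trans (hfst f.toContinuousMap)
  · refine ext_of_forall_integral_eq_of_IsFiniteMeasure fun f => ?_
    rw [integral_map measurable_snd.aemeasurable f.continuous.aestronglyMeasurable]
    exact (hrep (f.toContinuousMap.comp ⟨Prod.snd, continuous_snd⟩)).trans (hsnd f.toContinuousMap)
  · rw [lintegral_iSup (fun n => (krD_cont w hw n).measurable.ennreal_ofReal)
      (fun n m hnm p => ENNReal.ofReal_le_ofReal (krD_mono w p.1 p.2 hnm))]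
    refine iSup_le fun n => ?_
    rw [← ofReal_integral_eq_lintegral_ofReal (f := fun p : K × K => krD w n p.1 p.2)
      ((BoundedContinuousFunction.mkOfCompact ⟨_, krD_cont w hw n⟩).integrable π)
      (ae_of_all _ fun p => krD_nonneg w n p.1 p.2)]
    refine ENNReal.ofReal_le_ofReal ?_
    rw [show ∫ p : K × K, krD w n p.1 p.2 ∂π = _ from hrep ⟨_, krD_cont w hw n⟩]
    exact hΛA _ _ ⟨0, 0, n, 1, zero_le_one, fun x y => by simp [hmk], by simp⟩

lemma kr_countable {S : Type*} [TopologicalSpace S] [SecondCountableTopology S]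
    (c : S → S → ℝ≥0∞) (h : ∀ x y, c x y = ⨆ u ∈ LipCE c, ENNReal.ofReal |u x - u y|) :
    ∃ u : ℕ → S → ℝ, (∀ n, u n ∈ LipCE c) ∧
      ∀ x y, c x y = ⨆ n, ENNReal.ofReal |u n x - u n y| := by
  have hopen : ∀ q : ℚ, ∀ u ∈ LipCE c, IsOpen {p : S × S | ENNReal.ofReal (q : ℝ) <
      ENNReal.ofReal |u p.1 - u p.2|} := by
    intro q u hu
    have := hu.1
    exact isOpen_lt continuous_const (ENNReal.continuous_ofReal.comp (by fun_prop))
  choose T hTsub hTc hT using fun q : ℚ =>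
    TopologicalSpace.isOpen_biUnion_countable (LipCE c) _ (hopen q)
  have h0 : (0 : S → ℝ) ∈ LipCE c :=
    ⟨continuous_const, ⟨0, by simp⟩, by simp⟩
  have hcount : (insert 0 (⋃ q, T q)).Countable := (countable_iUnion hTc).insert _
  obtain ⟨u, hu⟩ := hcount.exists_eq_range (insert_nonempty _ _)
  have hmem : ∀ n, u n ∈ LipCE c := by
    intro n
    have : u n ∈ insert 0 (⋃ q, T q) := hu ▸ mem_range_self n
    rcases this with h1 | h1
    · rw [h1]; exact h0
    · obtain ⟨q, hq⟩ := mem_iUnion.1 h1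
      exact hTsub q hq
  refine ⟨u, hmem, fun x y => le_antisymm ?_ (iSup_le fun n => (hmem n).2.2 x y)⟩
  rw [h x y]
  refine iSup₂_le fun v hv => ?_
  refine le_of_forall_lt fun a ha => ?_
  obtain ⟨q, hq0, haq, hqv⟩ := ENNReal.lt_iff_exists_rat_btwn.1 ha
  have hp : (x, y) ∈ ⋃ u ∈ LipCE c, {p : S × S | ENNReal.ofReal (q : ℝ) <
      ENNReal.ofReal |u p.1 - u p.2|} := mem_iUnion₂.2 ⟨v, hv, hqv⟩
  rw [← hT q] at hp
  obtain ⟨v', hv', hlt⟩ := mem_iUnion₂.1 hp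
  have : v' ∈ range u := hu ▸ Or.inr (mem_iUnion.2 ⟨q, hv'⟩)
  obtain ⟨n, rfl⟩ := this
  exact haq.trans (lt_of_lt_of_le hlt (le_iSup (fun n => ENNReal.ofReal |u n x - u n y|) n))

lemma kr_embed {S : Type*} [TopologicalSpace S] [PolishSpace S] [MeasurableSpace S] [BorelSpace S]
    (u : ℕ → S → ℝ) (hu : ∀ n, Continuous (u n)) (M : ℕ → ℝ) (hM : ∀ n x, |u n x| ≤ M n)
    (μ ν : Measure S) [IsProbabilityMeasure μ] [IsProbabilityMeasure ν] (L : ℝ)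
    (hL : ∀ n (φ : S → ℝ), Continuous φ → (∃ B, ∀ x, |φ x| ≤ B) →
      (∀ x y, |φ x - φ y| ≤ krD u n x y) → ∫ x, φ x ∂μ - ∫ x, φ x ∂ν ≤ L) :
    ∃ π ∈ Couplings μ ν,
      ∫⁻ p, ⨆ n, ENNReal.ofReal (krD u n p.1 p.2) ∂π ≤ ENNReal.ofReal L := by
  obtain ⟨F, hF⟩ : ∃ F : S → ℕ → unitInterval, Topology.IsEmbedding F := by
    let _ := TopologicalSpace.upgradeIsCompletelyMetrizable S
    exact Metric.PiNatEmbed.exists_embedding_to_hilbert_cube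
  let K := ((n : ℕ) → Icc (-M n) (M n)) × (ℕ → unitInterval)
  let j : S → K := fun x => (fun n => ⟨u n x, abs_le.1 (hM n x)⟩, F x)
  have hjc1 : Continuous fun x : S => (fun n => (⟨u n x, abs_le.1 (hM n x)⟩ : Icc (-M n) (M n))) :=
    continuous_pi fun n => (hu n).subtype_mk _
  have hjc : Continuous j := hjc1.prodMk hF.continuous
  have hji : Function.Injective j := fun x y hxy => hF.injective (congrArg Prod.snd hxy)
  have hj : MeasurableEmbedding j := hjc.measurableEmbedding hji
  have hJ : MeasurableEmbedding (Prod.map j j) := hj.prodMap hj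
  let w : ℕ → K → ℝ := fun n z => (z.1 n : ℝ)
  have hw : ∀ n, Continuous (w n) := fun n =>
    continuous_subtype_val.comp ((continuous_apply n).comp continuous_fst)
  have hkr : ∀ n x y, krD w n (j x) (j y) = krD u n x y := fun n x y => krD_comp w j n x y
  have := Measure.isProbabilityMeasure_map (μ := μ) hj.measurable.aemeasurable
  have := Measure.isProbabilityMeasure_map (μ := ν) hj.measurable.aemeasurable
  obtain ⟨π', h1, h2, h3⟩ := kr_compact w hw (μ.map j) (ν.map j) L (by
    intro n φ hφ
    rw [hj.integral_map, hj.integral_map]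
    refine hL n (fun x => φ (j x)) (φ.continuous.comp hjc) ?_ ?_
    · exact ⟨‖φ‖, fun x => φ.norm_coe_le_norm _⟩
    · intro x y
      rw [← hkr]
      exact hφ _ _)
  have hprob : IsProbabilityMeasure π' := by
    constructor
    have : (π'.map Prod.fst) univ = 1 := by rw [h1]; exact measure_univ
    rwa [Measure.map_apply measurable_fst MeasurableSet.univ] at this
  have hae1 : ∀ᵐ p ∂π', p.1 ∈ range j := by
    have : ∀ᵐ z ∂(π'.map Prod.fst), z ∈ range j := by
      rw [h1]
      exact (ae_map_iff hj.measurable.aemeasurable hj.measurableSet_range).2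
        (ae_of_all _ fun x => mem_range_self x)
    exact ae_of_ae_map measurable_fst.aemeasurable this
  have hae2 : ∀ᵐ p ∂π', p.2 ∈ range j := by
    have : ∀ᵐ z ∂(π'.map Prod.snd), z ∈ range j := by
      rw [h2]
      exact (ae_map_iff hj.measurable.aemeasurable hj.measurableSet_range).2
        (ae_of_all _ fun x => mem_range_self x)
    exact ae_of_ae_map measurable_snd.aemeasurable this
  have hmap : (π'.comap (Prod.map j j)).map (Prod.map j j) = π' := by
    rw [hJ.map_comap]
    refine Measure.restrict_eq_self_of_ae_mem ?_
    filter_upwards [hae1, hae2] with p hp1 hp2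
    rw [range_prodMap]
    exact ⟨hp1, hp2⟩
  have hinj : ∀ ρ ρ' : Measure S, ρ.map j = ρ'.map j → ρ = ρ' := by
    intro ρ ρ' h
    rw [← hj.comap_map ρ, h, hj.comap_map]
  refine ⟨π'.comap (Prod.map j j), ⟨?_, ?_, ?_⟩, ?_⟩
  · constructor
    have : (π'.comap (Prod.map j j)).map (Prod.map j j) univ = 1 := by rw [hmap]; exact measure_univ
    rwa [Measure.map_apply hJ.measurable MeasurableSet.univ] at this
  · apply hinj
    rw [Measure.map_map hj.measurable measurable_fst, ← h1]
    conv_rhs => rw [← hmap]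
    rw [Measure.map_map measurable_fst hJ.measurable]
    rfl
  · apply hinj
    rw [Measure.map_map hj.measurable measurable_snd, ← h2]
    conv_rhs => rw [← hmap]
    rw [Measure.map_map measurable_snd hJ.measurable]
    rfl
  · rw [← hmap, hJ.lintegral_map] at h3
    simpa only [Prod.map_fst, Prod.map_snd, hkr] using h3

lemma kr_weak {S : Type*} [TopologicalSpace S] [MeasurableSpace S] [BorelSpace S]
    (c : S → S → ℝ≥0∞) (μ ν : Measure S) [IsProbabilityMeasure μ] [IsProbabilityMeasure ν]
    (u : S → ℝ) (hu : u ∈ LipCE c) (π : Measure (S × S)) (hπ : π ∈ Couplings μ ν) :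
    ENNReal.ofReal |∫ x, u x ∂μ - ∫ x, u x ∂ν| ≤ ∫⁻ p, c p.1 p.2 ∂π := by
  obtain ⟨hp, h1, h2⟩ := hπ
  obtain ⟨hc, ⟨M, hM⟩, hle⟩ := hu
  have hm := hc.measurable
  have i1 : Integrable (fun p : S × S => u p.1) π :=
    Integrable.of_bound (hm.comp measurable_fst).aestronglyMeasurable M
      (ae_of_all _ fun p => hM p.1)
  have i2 : Integrable (fun p : S × S => u p.2) π :=
    Integrable.of_bound (hm.comp measurable_snd).aestronglyMeasurable M
      (ae_of_all _ fun p => hM p.2)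
  rw [← h1, ← h2, integral_map measurable_fst.aemeasurable hm.aestronglyMeasurable,
    integral_map measurable_snd.aemeasurable hm.aestronglyMeasurable, ← integral_sub i1 i2,
    ← Real.norm_eq_abs, ofReal_norm]
  refine (enorm_integral_le_lintegral_enorm _).trans (lintegral_mono fun p => ?_)
  rw [← ofReal_norm, Real.norm_eq_abs]
  exact hle _ _

lemma kr_dirac {S : Type*} [MeasurableSpace S] [MeasurableSingletonClass S]
    (c : S → S → ℝ≥0∞) (x y : S) :
    (⨅ π ∈ Couplings (Measure.dirac x) (Measure.dirac y), ∫⁻ p, c p.1 p.2 ∂π) = c x y := by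
  refine le_antisymm ?_ ?_
  · refine (iInf₂_le (Measure.dirac (x, y)) ⟨inferInstance, ?_, ?_⟩).trans ?_
    · rw [lintegral_dirac]
    · rw [Measure.map_dirac' measurable_fst]
    · rw [Measure.map_dirac' measurable_snd]
  · refine le_iInf₂ fun π hπ => ?_
    obtain ⟨hp, h1, h2⟩ := hπ
    have a1 : ∀ᵐ p ∂π, p.1 = x := by
      have : ∀ᵐ z ∂(π.map Prod.fst), z = x := by
        rw [h1, ae_dirac_eq]; rfl
      exact ae_of_ae_map measurable_fst.aemeasurable this
    have a2 : ∀ᵐ p ∂π, p.2 = y := by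
      have : ∀ᵐ z ∂(π.map Prod.snd), z = y := by
        rw [h2, ae_dirac_eq]; rfl
      exact ae_of_ae_map measurable_snd.aemeasurable this
    have : ∫⁻ p, c p.1 p.2 ∂π = ∫⁻ p, c x y ∂π := by
      refine lintegral_congr_ae ?_
      filter_upwards [a1, a2] with p hp1 hp2
      rw [hp1, hp2]
    rw [this]
    simp

/-- **Kantorovich–Rubinštein duality theorem**: for a Borel measurable cost
`c : S × S → [0,∞]`, the equality `KR_c(μ,ν) = ℓ_c(μ,ν)` holds for all pairs of Borel
probability measures if and only if `c` satisfies condition (★):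
`c x y = sup_{u ∈ Lip_c} |u x - u y|`. -/
theorem KR_duality_iff_star
    {S : Type*} [TopologicalSpace S] [PolishSpace S] [MeasurableSpace S] [BorelSpace S]
    (c : S → S → ℝ≥0∞) (hc : Measurable (Function.uncurry c)) :
    (∀ μ ν : Measure S, IsProbabilityMeasure μ → IsProbabilityMeasure ν →
      (⨅ π ∈ Couplings μ ν, ∫⁻ p, c p.1 p.2 ∂π) =
        ⨆ u ∈ LipCE c, ENNReal.ofReal |∫ x, u x ∂μ - ∫ x, u x ∂ν|) ↔
    (∀ x y, c x y = ⨆ u ∈ LipCE c, ENNReal.ofReal |u x - u y|) := by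
  constructor
  · intro h x y
    have := h (Measure.dirac x) (Measure.dirac y) inferInstance inferInstance
    rw [kr_dirac] at this
    simpa only [integral_dirac] using this
  · intro h μ ν hμ hν
    refine le_antisymm ?_ (iSup₂_le fun u hu => le_iInf₂ fun π hπ => kr_weak c μ ν u hu π hπ)
    set ℓ := ⨆ u ∈ LipCE c, ENNReal.ofReal |∫ x, u x ∂μ - ∫ x, u x ∂ν| with hℓ
    by_cases htop : ℓ = ⊤
    · rw [htop]; exact le_top
    obtain ⟨u, hu, hcu⟩ := kr_countable c h
    choose M hM using fun n => (hu n).2.1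
    obtain ⟨π, hπ, hle⟩ := kr_embed u (fun n => (hu n).1) M hM μ ν ℓ.toReal (by
      intro n φ hφ hb hlip
      have hmem : φ ∈ LipCE c := by
        refine ⟨hφ, hb, fun x y => (ENNReal.ofReal_le_ofReal (hlip x y)).trans ?_⟩
        exact krD_le u n x y _ fun i => (hu i).2.2 x y
      have h1 : ENNReal.ofReal |∫ x, φ x ∂μ - ∫ x, φ x ∂ν| ≤ ℓ :=
        le_iSup₂ (f := fun u (_ : u ∈ LipCE c) =>
          ENNReal.ofReal |∫ x, u x ∂μ - ∫ x, u x ∂ν|) φ hmem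
      exact (le_abs_self _).trans ((ENNReal.ofReal_le_iff_le_toReal htop).1 h1))
    rw [ENNReal.ofReal_toReal htop] at hle
    refine (iInf₂_le π hπ).trans (le_trans (lintegral_mono fun p => ?_) hle)
    dsimp only
    rw [hcu p.1 p.2]
    refine iSup_le fun n => ?_
    exact (ENNReal.ofReal_le_ofReal (krD_ge u n p.1 p.2)).trans
      (le_iSup (fun n => ENNReal.ofReal (krD u n p.1 p.2)) (n + 1))

end
end

section
/- Let S be a Polish space, c : S × S → [0,∞] lower semicontinuous, and μ, ν Borel probability measures on S. Then the infimum inf_{π ∈ D(μ,ν)} ∫_{S×S} c dπ is attained: there exists a coupling π* ∈ D(μ,ν) with ∫ c dπ* = inf_{π ∈ D(μ,ν)} ∫ c dπ. -/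
open MeasureTheory ProbabilityTheory ENNReal Set

noncomputable section

theorem lsc_lintegral_trunc {X : Type*} [TopologicalSpace X] [PolishSpace X] [MeasurableSpace X]
    [BorelSpace X] (c : X → ℝ≥0∞) (hc : LowerSemicontinuous c) (n : ℕ) :
    LowerSemicontinuous (fun P : ProbabilityMeasure X => ∫⁻ x, min (c x) n ∂(P : Measure X)) := by
  have hne : ∀ x, min (c x) (n : ℝ≥0∞) ≠ ∞ := fun x =>
    ne_top_of_le_ne_top (ENNReal.natCast_ne_top n) (min_le_right _ _)
  have hmeas : Measurable fun x => (min (c x) (n : ℝ≥0∞)).toReal :=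
    (hc.measurable.min measurable_const).ennreal_toReal
  have key : ∀ P : ProbabilityMeasure X, ∫⁻ x, min (c x) n ∂(P : Measure X)
      = ∫⁻ t in Ioi (0 : ℝ), (P : Measure X) {x | t < (min (c x) (n : ℝ≥0∞)).toReal} := by
    intro P
    rw [← lintegral_eq_lintegral_meas_lt _ (Filter.Eventually.of_forall fun _ => toReal_nonneg)
      hmeas.aemeasurable]
    exact lintegral_congr fun x => (ENNReal.ofReal_toReal (hne x)).symm
  have hopen : ∀ t ∈ Ioi (0 : ℝ), IsOpen {x | t < (min (c x) (n : ℝ≥0∞)).toReal} := by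
    intro t ht
    have : {x | t < (min (c x) (n : ℝ≥0∞)).toReal}
        = {x | ENNReal.ofReal t < c x} ∩ {_x | ENNReal.ofReal t < (n : ℝ≥0∞)} := by
      ext x
      simp only [mem_ofPred_eq, mem_inter_iff]
      rw [← ENNReal.ofReal_lt_iff_lt_toReal (le_of_lt ht) (hne x), lt_min_iff]
    rw [this]
    exact (hc.isOpen_preimage _).inter isOpen_const
  rw [lowerSemicontinuous_iff_le_liminf]
  intro P
  simp only [key]
  calc _ ≤ ∫⁻ t in Ioi (0 : ℝ), Filter.liminf (fun Q : ProbabilityMeasure X =>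
        (Q : Measure X) {x | t < (min (c x) (n : ℝ≥0∞)).toReal}) (nhds P) := by
        refine setLIntegral_mono' measurableSet_Ioi fun t ht => ?_
        exact ProbabilityMeasure.le_liminf_measure_open_of_tendsto Filter.tendsto_id (hopen t ht)
    _ ≤ _ := lintegral_liminf_le fun Q => Antitone.measurable fun s t hst =>
        measure_mono fun x hx => lt_of_le_of_lt hst hx

theorem lsc_lintegral {X : Type*} [TopologicalSpace X] [PolishSpace X] [MeasurableSpace X]
    [BorelSpace X] (c : X → ℝ≥0∞) (hc : LowerSemicontinuous c) :
    LowerSemicontinuous (fun P : ProbabilityMeasure X => ∫⁻ x, c x ∂(P : Measure X)) := by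
  have key : ∀ P : ProbabilityMeasure X, ∫⁻ x, c x ∂(P : Measure X)
      = ⨆ n : ℕ, ∫⁻ x, min (c x) n ∂(P : Measure X) := by
    intro P
    rw [← lintegral_iSup (fun n => hc.measurable.min measurable_const)
      (fun m n hmn x => min_le_min le_rfl (by exact_mod_cast hmn))]
    refine lintegral_congr fun x => ?_
    rw [← inf_iSup_eq, ENNReal.iSup_natCast, inf_top_eq]
  simp only [key]
  exact lowerSemicontinuous_iSup fun n => lsc_lintegral_trunc c hc n

/-- **Existence of an optimal coupling**: for a lower semicontinuous cost
`c : S × S → [0,∞]` and Borel probability measures `μ, ν` on a Polish space `S`, the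
infimum `inf_{π ∈ D(μ,ν)} ∫ c dπ` is attained. -/
theorem exists_optimal_coupling
    {S : Type*} [TopologicalSpace S] [PolishSpace S] [MeasurableSpace S] [BorelSpace S]
    (c : S × S → ℝ≥0∞) (hc : LowerSemicontinuous c)
    (μ ν : Measure S) [IsProbabilityMeasure μ] [IsProbabilityMeasure ν] :
    ∃ π ∈ Couplings μ ν,
      ∫⁻ p, c p ∂π = ⨅ π' ∈ Couplings μ ν, ∫⁻ p, c p ∂π' := by
  let K : Set (ProbabilityMeasure (S × S)) := {P | (P : Measure (S × S)) ∈ Couplings μ ν}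
  have hK : K = {P | P.map (continuous_fst.measurable.aemeasurable) = ⟨μ, inferInstance⟩} ∩
      {P | P.map (continuous_snd.measurable.aemeasurable) = ⟨ν, inferInstance⟩} := by
    ext P
    simp only [K, Couplings, mem_ofPred_eq, mem_inter_iff]
    exact ⟨fun h => ⟨Subtype.ext h.2.1, Subtype.ext h.2.2⟩,
      fun h => ⟨inferInstance, congrArg Subtype.val h.1, congrArg Subtype.val h.2⟩⟩
  have hclosed : IsClosed K := by
    rw [hK]
    exact (isClosed_eq (ProbabilityMeasure.continuous_map continuous_fst) continuous_const).inter
      (isClosed_eq (ProbabilityMeasure.continuous_map continuous_snd) continuous_const)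
  have htight : IsTightMeasureSet {((P : ProbabilityMeasure (S × S)) : Measure (S × S)) | P ∈ K} := by
    apply IsTightMeasureSet.prodMk
    · refine (isTightMeasureSet_singleton (μ := μ)).subset ?_
      rintro _ ⟨_, ⟨P, hP, rfl⟩, rfl⟩
      exact hP.2.1
    · refine (isTightMeasureSet_singleton (μ := ν)).subset ?_
      rintro _ ⟨_, ⟨P, hP, rfl⟩, rfl⟩
      exact hP.2.2
  have hcomp : IsCompact K := by
    have := isCompact_closure_of_isTightMeasureSet htight
    rwa [hclosed.closure_eq] at this
  have hne : K.Nonempty := by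
    refine ⟨⟨μ.prod ν, inferInstance⟩, ?_, ?_, ?_⟩
    · exact (inferInstance : IsProbabilityMeasure (μ.prod ν))
    · exact Measure.fst_prod
    · exact Measure.snd_prod
  obtain ⟨P, hP, hmin⟩ := LowerSemicontinuousOn.exists_isMinOn hne hcomp
    ((lsc_lintegral c hc).lowerSemicontinuousOn K)
  refine ⟨P, hP, le_antisymm ?_ (iInf₂_le (P : Measure (S × S)) hP)⟩
  refine le_iInf₂ fun Q hQ => ?_
  have := hQ.1
  exact hmin (show (⟨Q, hQ.1⟩ : ProbabilityMeasure (S × S)) ∈ K from hQ)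

end
end
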